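/- arXiv:1902.02818 — 2 statements merged into one kernel-verified Lean document; each statement's English description precedes it below -/
import Mathlib

section
/- Let α ∈ (0,1), δ > 0, K ≥ 0, and let p : [0,1] → ℝ be Lipschitz continuous with Lipschitz constant K and satisfy p(x) ≥ δ for all x ∈ [0,1]. Then there exists a constant c̄₁ > 0, depending only on α, δ, K and sup|p|, such that for every pair (u,w) in the graph of the operator A = (d/dx)D^α one has |∫₀¹ p(x) w(x) · conj(u(x)) dx| ≤ c̄₁ N_{(1+α)/2}(u)². -/
/-!
The proof trades `w` for `u' = I^α w` and then splits the resulting weakly singular bilinear form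
symmetrically into two factors, each controlled by the `H^{(1+α)/2}` seminorm.

Put `v = p * conj u`. Since `v(1) = 0`, integration by parts gives `∫ w v = - ∫ v'(t) (∫_0^t w) dt`, and
Abel inversion (`abel_inversion`) shows that `κ ∫_0^t w = ∫_0^t (t - y)^{-α} u'(y) dy` with
`κ = B(α, 1 - α) / Γ(α)`. So the form equals, up to a constant, `∫∫_{y < t} v'(t) (t - y)^{-α} u'(y) dy dt`.

The kernel factorizes (`kernel_factor`):
`Γ(1 + α) (t - y)^{-α} = ∫_0^∞ l^α ∫_y^t e^{-l(t-z)} e^{-l(z-y)} dz dl`.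
By Fubini's theorem and `a b ≤ a² + b²` (`pairing_bound`) the form is bounded by the square functions
`∫_0^∞ l^α ‖U_l‖² dl` and `∫_0^∞ l^α ‖V_l‖² dl` in `L²(0,1)`, where `U_l(z) = ∫_0^z e^{-l(z-y)} u'(y) dy`
and `V_l` is its mirror image for `v'`.

An integration by parts writes `U_l` through the increments `u(x) - u(y)` and `u(x) - u(0)`. Integrating
in `l` then produces the Gagliardo seminorm and the Hardy functional `∫ |u(x) - u(0)|² x^{-(1+α)} dx`
(`resolvent_bound`); the latter is bounded by the former through a fractional Hardy inequality (`hardy`),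
valid because `(1 + α) / 2 > 1/2`. Reflection gives the bound for `V_l` (`main_bound_refl`), and
`gag_mul_le` bounds the seminorm of `v` by the norm of `u`.

Double integrals are handled with values in `[0, ∞]` wherever possible. Finiteness of the seminorm of `u`
(`gag_ne_top`), which holds because `u'` is square integrable, is used to return to the Bochner integrals of
the statement.
-/

open MeasureTheory Set Filter

/-- Riemann–Liouville fractional integral `I^γ f` on `(0,1)` (complex-valued),
with the convention `I⁰ f = f`. -/
noncomputable def fracInt (γ : ℝ) (f : ℝ → ℂ) (x : ℝ) : ℂ :=
  if γ = 0 then f x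
  else ((Real.Gamma γ)⁻¹ : ℝ) • ∫ p in (0:ℝ)..x, (((x - p) ^ (γ - 1) : ℝ) : ℂ) * f p

/-- `f` is square integrable (and a.e. strongly measurable) on `(0,1)`: `f ∈ L²(0,1)`. -/
def SqIntOn (f : ℝ → ℂ) : Prop :=
  MeasureTheory.AEStronglyMeasurable f (MeasureTheory.volume.restrict (Set.Ioc (0:ℝ) 1)) ∧
  MeasureTheory.IntegrableOn (fun x => ‖f x‖ ^ 2) (Set.Ioc (0:ℝ) 1)

/-- `(u, w)` lies in the graph of `A = (d/dx) D^α`:  `u` is absolutely continuous on `[0,1]`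
with `u' = I^α w` a.e., `u(1) = 0`, and `w ∈ L²(0,1)`; then `A u = w`. -/
def InGraphA (α : ℝ) (u w : ℝ → ℂ) : Prop :=
  u 1 = 0 ∧ SqIntOn w ∧
  IntervalIntegrable (fracInt α w) MeasureTheory.volume 0 1 ∧
  ∀ x ∈ Set.Icc (0:ℝ) 1, u x = u 0 + ∫ t in (0:ℝ)..x, fracInt α w t

/-- Square of the `L²(0,1)` norm. -/
noncomputable def L2normSq (f : ℝ → ℂ) : ℝ := ∫ x in (0:ℝ)..1, ‖f x‖ ^ 2

/-- Square of the Gagliardo seminorm of order `s` on `(0,1)`. -/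
noncomputable def sobSeminormSq (s : ℝ) (u : ℝ → ℂ) : ℝ :=
  ∫ x in (0:ℝ)..1, ∫ y in (0:ℝ)..1, ‖u x - u y‖ ^ 2 / |x - y| ^ (1 + 2 * s)

/-- Square of the fractional Sobolev `H^s(0,1)` norm `N_s(u)`. -/
noncomputable def sobNormSq (s : ℝ) (u : ℝ → ℂ) : ℝ :=
  L2normSq u + sobSeminormSq s u

open scoped ENNReal

/-! ### One-sided kernels and elementary integrals -/

/-- Lebesgue measure on the open unit interval. End points are null, so interval integrals over
`0..1` are integrals against `mu01`. -/
noncomputable abbrev mu01 : Measure ℝ := volume.restrict (Ioo (0:ℝ) 1)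

instance : IsFiniteMeasure mu01 := ⟨by simp [mu01]⟩

/-- The one-sided power kernel `t₊^a`, equal to `0` for `t ≤ 0`; in particular `pk 0` is the
indicator of `(0, ∞)`. -/
noncomputable def pk (a t : ℝ) : ℝ := if 0 < t then t ^ a else 0

/-- The one-sided exponential kernel `1_{t > 0} e^{-l t}`; convolution with it is the resolvent
`(d/dx + l)⁻¹` with zero initial value. -/
noncomputable def ek (l t : ℝ) : ℝ := if 0 < t then Real.exp (-(l * t)) else 0

lemma pk_nonneg (a t : ℝ) : 0 ≤ pk a t := by
  unfold pk; split_ifs with h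
  · exact Real.rpow_nonneg h.le _
  · exact le_rfl

lemma ek_nonneg (l t : ℝ) : 0 ≤ ek l t := by
  unfold ek; split_ifs with h
  · positivity
  · exact le_rfl

@[fun_prop]
lemma measurable_pk (a : ℝ) : Measurable (pk a) :=
  Measurable.ite measurableSet_Ioi (by fun_prop) (by fun_prop)

@[fun_prop]
lemma measurable_ek2 : Measurable (fun q : ℝ × ℝ => ek q.1 q.2) :=
  Measurable.ite (measurableSet_lt measurable_const measurable_snd) (by fun_prop) (by fun_prop)

@[fun_prop]
lemma Measurable.ek_comp {X : Type*} [MeasurableSpace X] {f g : X → ℝ} (hf : Measurable f)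
    (hg : Measurable g) : Measurable (fun x => ek (f x) (g x)) :=
  measurable_ek2.comp (hf.prodMk hg)

lemma lintegral_rpow_Ioo {a : ℝ} (ha : -1 < a) :
    ∫⁻ t in Ioo (0:ℝ) 1, ENNReal.ofReal (t ^ a) = ENNReal.ofReal (1 / (a + 1)) := by
  have h := integral_rpow (a := 0) (b := 1) (r := a) (Or.inl ha)
  have hi : IntegrableOn (fun t : ℝ => t ^ a) (Ioo 0 1) :=
    ((intervalIntegrable_iff_integrableOn_Ioo_of_le zero_le_one).1
      (intervalIntegral.intervalIntegrable_rpow' ha))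
  rw [← ofReal_integral_eq_lintegral_ofReal hi]
  · rw [intervalIntegral.integral_of_le zero_le_one, integral_Ioc_eq_integral_Ioo] at h
    rw [h, Real.one_rpow, Real.zero_rpow (by linarith), sub_zero]
  · filter_upwards [ae_restrict_mem measurableSet_Ioo] with t ht
    exact Real.rpow_nonneg ht.1.le _

lemma lintegral_pk_left {a : ℝ} (ha : -1 < a) {y : ℝ} (hy : y ∈ Ioo (0:ℝ) 1) :
    ∫⁻ x, ENNReal.ofReal (pk a (x - y)) ∂mu01 ≤ ENNReal.ofReal (1 / (a + 1)) := by
  rw [← lintegral_rpow_Ioo ha, ← lintegral_indicator (f := fun t : ℝ => ENNReal.ofReal (t ^ a))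
    (measurableSet_Ioo (a := (0:ℝ)) (b := 1)),
    ← lintegral_sub_right_eq_self
      ((Ioo (0:ℝ) 1).indicator fun t : ℝ => ENNReal.ofReal (t ^ a)) y]
  refine (setLIntegral_mono' (measurableSet_Ioo (a := (0:ℝ)) (b := 1)) fun x hx => ?_).trans (setLIntegral_le_lintegral _ _)
  by_cases h : 0 < x - y
  · rw [indicator_of_mem (show x - y ∈ Ioo (0:ℝ) 1 from ⟨h, by linarith [hx.2, hy.1]⟩)]
    simp [pk, h]
  · simp [pk, h]

lemma lintegral_pk_right {a : ℝ} (ha : -1 < a) {x : ℝ} (hx : x ∈ Ioo (0:ℝ) 1) :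
    ∫⁻ y, ENNReal.ofReal (pk a (x - y)) ∂mu01 ≤ ENNReal.ofReal (1 / (a + 1)) := by
  rw [← lintegral_rpow_Ioo ha, ← lintegral_indicator (f := fun t : ℝ => ENNReal.ofReal (t ^ a))
    (measurableSet_Ioo (a := (0:ℝ)) (b := 1)),
    ← lintegral_sub_left_eq_self
      ((Ioo (0:ℝ) 1).indicator fun t : ℝ => ENNReal.ofReal (t ^ a)) x]
  refine (setLIntegral_mono' (measurableSet_Ioo (a := (0:ℝ)) (b := 1)) fun y hy => ?_).trans (setLIntegral_le_lintegral _ _)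
  by_cases h : 0 < x - y
  · rw [indicator_of_mem (show x - y ∈ Ioo (0:ℝ) 1 from ⟨h, by linarith [hx.2, hy.1]⟩)]
    simp [pk, h]
  · simp [pk, h]

/-- Cauchy–Schwarz inequality for a weight `k`: split `k * F = k^{1/2} * (k^{1/2} * F)`. -/
lemma sq_lintegral_mul_le {X : Type*} [MeasurableSpace X] (μ : Measure X) {k F : X → ℝ≥0∞}
    (hk : AEMeasurable k μ) (hF : AEMeasurable F μ) :
    (∫⁻ x, k x * F x ∂μ) ^ 2 ≤ (∫⁻ x, k x ∂μ) * ∫⁻ x, k x * F x ^ 2 ∂μ := by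
  have h := ENNReal.lintegral_mul_le_Lp_mul_Lq μ Real.HolderConjugate.two_two
    (hk.pow_const (1/2 : ℝ)) ((hk.pow_const (1/2:ℝ)).mul hF)
  have e1 : ∀ c : ℝ≥0∞, c ^ (1/2:ℝ) * c ^ (1/2:ℝ) = c := fun c => by
    rw [← ENNReal.rpow_add_of_nonneg _ _ (by norm_num) (by norm_num)]; norm_num
  have e2 : ∀ c : ℝ≥0∞, (c ^ (1/2:ℝ)) ^ (2:ℝ) = c := fun c => by
    rw [← ENNReal.rpow_mul]; norm_num
  have e3 : ∀ x, k x ^ (1/2:ℝ) * (k x ^ (1/2:ℝ) * F x) = k x * F x := fun x => by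
    rw [← mul_assoc, e1]
  simp only [Pi.mul_apply, e3, ENNReal.mul_rpow_of_nonneg _ _ (zero_le_two), e2] at h
  have h2 := pow_le_pow_left' h 2
  rw [mul_pow] at h2
  simp only [sq ((_ : ℝ≥0∞) ^ (1/2:ℝ)), e1] at h2
  simpa using h2

lemma lintegral_rpow_mul_exp {a r : ℝ} (ha : 0 < a) (hr : 0 < r) :
    ∫⁻ t in Ioi (0:ℝ), ENNReal.ofReal (t ^ (a - 1) * Real.exp (-(r * t))) =
      ENNReal.ofReal (Real.Gamma a * r ^ (-a)) := by
  have h := Real.integral_rpow_mul_exp_neg_mul_Ioi ha hr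
  have hpos : (0:ℝ) < (1 / r) ^ a * Real.Gamma a :=
    mul_pos (by positivity) (Real.Gamma_pos_of_pos ha)
  rw [← ofReal_integral_eq_lintegral_ofReal, h, one_div, Real.inv_rpow hr.le, Real.rpow_neg hr.le,
    mul_comm]
  · by_contra hc
    rw [integral_undef hc] at h
    linarith
  · filter_upwards [ae_restrict_mem measurableSet_Ioi] with t ht
    have : (0:ℝ) < t := ht
    positivity

/-- The Beta integral `∫_s^x (x - y)^{-α} (y - s)^{α - 1} dy = B(α, 1 - α)`, which does not depend on
`s` and `x`. -/
lemma lintegral_beta {α : ℝ} (hα : α ∈ Ioo (0:ℝ) 1) {s x : ℝ} (hsx : s < x) :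
    ∫⁻ y, ENNReal.ofReal (pk (-α) (x - y) * pk (α - 1) (y - s)) =
      ENNReal.ofReal (ProbabilityTheory.beta α (1 - α)) := by
  have hL : 0 < x - s := by linarith
  have hb := ProbabilityTheory.beta_pos hα.1 (sub_pos.2 hα.2)
  have h1 := ProbabilityTheory.lintegral_betaPDF_eq_one hα.1 (sub_pos.2 hα.2)
  rw [← lintegral_add_right_eq_self _ s]
  have hm : Measurable (fun y : ℝ => ENNReal.ofReal (pk (-α) (x - (y + s)) * pk (α - 1) (y + s - s))) := by
    fun_prop
  rw [← Real.smul_map_volume_mul_left hL.ne', lintegral_smul_measure,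
    lintegral_map hm (by fun_prop), smul_eq_mul, abs_of_pos hL, ← lintegral_const_mul' _ _ (by simp)]
  rw [← mul_one (ENNReal.ofReal (ProbabilityTheory.beta α (1 - α))), ← h1, ← lintegral_const_mul' _ _ (by simp)]
  refine lintegral_congr fun y => ?_
  rw [ProbabilityTheory.betaPDF, ← ENNReal.ofReal_mul hL.le, ← ENNReal.ofReal_mul hb.le]
  congr 1
  unfold ProbabilityTheory.betaPDFReal pk
  have e1 : x - ((x - s) * y + s) = (x - s) * (1 - y) := by ring
  have e2 : (x - s) * y + s - s = (x - s) * y := by ring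
  rw [e1, e2]
  simp only [mul_pos_iff_of_pos_left hL, sub_pos]
  by_cases hy0 : 0 < y <;> by_cases hy1 : y < 1
  · have : (0:ℝ) < 1 - y := by linarith
    simp only [hy0, hy1, if_true, and_self]
    rw [Real.mul_rpow hL.le hy0.le, Real.mul_rpow hL.le this.le]
    have : (x - s) * ((x - s) ^ (-α) * (x - s) ^ (α - 1)) = 1 := by
      rw [← Real.rpow_add hL, show -α + (α - 1) = -1 by ring, Real.rpow_neg_one,
        mul_inv_cancel₀ hL.ne']
    rw [show (1 - α - 1) = -α by ring]
    field_simp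
    linear_combination this
  all_goals simp [hy0, hy1]

/-! ### Integration by parts and the resolvent of a derivative -/

/-- A primitive of an integrable complex function is absolutely continuous. Real and imaginary parts
are treated separately. -/
lemma ac_integral {f : ℝ → ℂ} {a b : ℝ} (hf : IntervalIntegrable f volume a b) :
    AbsolutelyContinuousOnInterval (fun x => ∫ t in a..x, f t) a b := by
  have hre : IntervalIntegrable (fun t => (f t).re) volume a b := ⟨hf.1.re, hf.2.re⟩
  have him : IntervalIntegrable (fun t => (f t).im) volume a b := ⟨hf.1.im, hf.2.im⟩
  have h1 := hre.absolutelyContinuousOnInterval_intervalIntegral (c := a) left_mem_uIcc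
  have h2 := him.absolutelyContinuousOnInterval_intervalIntegral (c := a) left_mem_uIcc
  have hc : ∀ z : ℂ, AbsolutelyContinuousOnInterval (fun _ : ℝ => z) a b := fun z =>
    (LipschitzWith.const z).lipschitzOnWith.absolutelyContinuousOnInterval
  have h3 := (h1.fun_smul (hc 1)).add (h2.fun_smul (hc Complex.I))
  have key : ∀ x ∈ uIcc a b, (∫ t in a..x, f t) =
      (∫ t in a..x, (f t).re) • (1:ℂ) + (∫ t in a..x, (f t).im) • Complex.I := by
    intro x hx
    have hi : IntervalIntegrable f volume a x := hf.mono_set (uIcc_subset_uIcc left_mem_uIcc hx)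
    have := intervalIntegral.integral_congr (μ := volume) (a := a) (b := x)
      (f := f) (g := fun t => (f t).re • (1:ℂ) + (f t).im • Complex.I)
      (fun t _ => by simp [Complex.re_add_im])
    rw [this, intervalIntegral.integral_add, intervalIntegral.integral_smul_const,
      intervalIntegral.integral_smul_const]
    · exact ⟨hi.1.re.smul_const _, hi.2.re.smul_const _⟩
    · exact ⟨hi.1.im.smul_const _, hi.2.im.smul_const _⟩
  unfold AbsolutelyContinuousOnInterval at h3 ⊢
  refine h3.congr' ?_
  rw [EventuallyEq, eventually_inf_principal]
  filter_upwards with (n, I) hnI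
  refine Finset.sum_congr rfl fun i hi => ?_
  rw [key _ (hnI.left i hi).1, key _ (hnI.left i hi).2]
  rfl

/-- Integration by parts for two complex primitives of integrable functions. -/
lemma ibp {F G f g : ℝ → ℂ} {a b : ℝ} (hab : a ≤ b) (hf : IntervalIntegrable f volume a b)
    (hg : IntervalIntegrable g volume a b)
    (hF : ∀ x ∈ Icc a b, F x = F a + ∫ t in a..x, f t)
    (hG : ∀ x ∈ Icc a b, G x = G a + ∫ t in a..x, g t) :
    ∫ x in a..b, (f x * G x + F x * g x) = F b * G b - F a * G a := by
  have hc : ∀ z : ℂ, AbsolutelyContinuousOnInterval (fun _ : ℝ => z) a b := fun z =>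
    (LipschitzWith.const z).lipschitzOnWith.absolutelyContinuousOnInterval
  set F1 : ℝ → ℂ := fun x => F a + ∫ t in a..x, f t with hF1
  set G1 : ℝ → ℂ := fun x => G a + ∫ t in a..x, g t with hG1
  have aF : AbsolutelyContinuousOnInterval F1 a b := (hc (F a)).add (ac_integral hf)
  have aG : AbsolutelyContinuousOnInterval G1 a b := (hc (G a)).add (ac_integral hg)
  have hk : IntervalIntegrable (fun x => f x * G1 x + F1 x * g x) volume a b :=
    (hf.mul_continuousOn aG.continuousOn).add (hg.continuousOn_mul aF.continuousOn)
  have aP := (aF.fun_smul aG).sub (ac_integral hk)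
  obtain ⟨C, hC⟩ := aP.const_of_ae_hasDerivAt_zero (by
    filter_upwards [hf.ae_hasDerivAt_integral, hg.ae_hasDerivAt_integral,
      hk.ae_hasDerivAt_integral] with x h1 h2 h3 hx
    have h1' := (h1 hx a left_mem_uIcc).const_add (F a)
    have h2' := (h2 hx a left_mem_uIcc).const_add (G a)
    have h4 := (h1'.mul h2').sub (h3 hx a left_mem_uIcc)
    rwa [show f x * (G a + ∫ t in a..x, g t) + (F a + ∫ t in a..x, f t) * g x -
      (f x * G1 x + F1 x * g x) = 0 from sub_self _] at h4)
  have e1 := hC a left_mem_uIcc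
  have e2 := hC b right_mem_uIcc
  simp only [Pi.sub_apply, smul_eq_mul, intervalIntegral.integral_same, sub_zero] at e1 e2
  have e3 : ∫ x in a..b, (f x * G x + F x * g x) = ∫ x in a..b, (f x * G1 x + F1 x * g x) := by
    refine intervalIntegral.integral_congr fun x hx => ?_
    rw [uIcc_of_le hab] at hx
    simp only [hF x hx, hG x hx, hF1, hG1]
  rw [e3, hF b ⟨hab, le_rfl⟩, hG b ⟨hab, le_rfl⟩]
  have hFa : F1 a = F a := by simp [hF1]
  have hGa : G1 a = G a := by simp [hG1]
  rw [hFa, hGa] at e1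
  change F1 b * G1 b - _ = C at e2
  change _ = F1 b * G1 b - _
  rw [e1, ← e2]; ring

lemma integral_ek_left {g : ℝ → ℂ} {l x : ℝ} (hx : x ∈ Ioo (0:ℝ) 1) :
    ∫ y, (ek l (x - y) : ℂ) * g y ∂mu01 =
      ∫ y in (0:ℝ)..x, (Real.exp (-(l * (x - y))) : ℂ) * g y := by
  rw [intervalIntegral.integral_of_le hx.1.le, integral_Ioc_eq_integral_Ioo,
    ← integral_indicator measurableSet_Ioo, ← integral_indicator measurableSet_Ioo]
  congr 1
  ext y
  by_cases h1 : 0 < y <;> by_cases h2 : y < x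
  · have : y < 1 := h2.trans hx.2
    simp [indicator, ek, h1, h2, this]
  all_goals simp [indicator, ek, h1, h2]

/-- Integration by parts turns the resolvent of the derivative `g = φ'` into an average of
increments of `φ`:
`∫_0^x e^{-l(x-y)} g(y) dy = e^{-lx} (φ(x) - φ(0)) + l ∫_0^x e^{-l(x-y)} (φ(x) - φ(y)) dy`. -/
lemma resolvent_enorm_le {φ g : ℝ → ℂ} {l x : ℝ} (hl : 0 < l) (hx : x ∈ Ioo (0:ℝ) 1)
    (hg : IntervalIntegrable g volume 0 1)
    (hφ : ∀ x ∈ Icc (0:ℝ) 1, φ x = φ 0 + ∫ t in (0:ℝ)..x, g t) (hc : Continuous φ) :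
    ‖∫ y, (ek l (x - y) : ℂ) * g y ∂mu01‖ₑ ≤ ENNReal.ofReal (ek l x) * ‖φ x - φ 0‖ₑ +
      ENNReal.ofReal l * ∫⁻ y, ENNReal.ofReal (ek l (x - y)) * ‖φ x - φ y‖ₑ ∂mu01 := by
  rw [integral_ek_left hx]
  have hg' : IntervalIntegrable g volume 0 x :=
    hg.mono_set (uIcc_subset_uIcc left_mem_uIcc (by rw [uIcc_of_le zero_le_one]; exact ⟨hx.1.le, hx.2.le⟩))
  have hcE : Continuous (fun y : ℝ => (Real.exp (-(l * (x - y))) : ℂ)) := by fun_prop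
  have hd : ∀ y : ℝ, HasDerivAt (fun y : ℝ => (Real.exp (-(l * (x - y))) : ℂ))
      ((l : ℂ) * (Real.exp (-(l * (x - y))) : ℂ)) y := by
    intro y
    have : HasDerivAt (fun y : ℝ => Real.exp (-(l * (x - y)))) (Real.exp (-(l * (x - y))) * l) y := by
      refine HasDerivAt.exp ?_
      have h5 := (((hasDerivAt_id y).const_sub x).const_mul l).neg
      rwa [show -(l * -1) = l by ring] at h5
    convert this.ofReal_comp using 1
    push_cast; ring
  have hfI : ∀ z, IntervalIntegrable (fun y : ℝ => (l : ℂ) * (Real.exp (-(l * (x - y))) : ℂ)) volume 0 z :=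
    fun z => (hcE.const_mul _).intervalIntegrable _ _
  have h := ibp (F := fun y : ℝ => (Real.exp (-(l * (x - y))) : ℂ))
    (f := fun y : ℝ => (l : ℂ) * (Real.exp (-(l * (x - y))) : ℂ)) (G := fun y => φ y - φ x) (g := g)
    hx.1.le (hfI x) hg'
    (fun y hy => by
      rw [intervalIntegral.integral_eq_sub_of_hasDerivAt (fun t _ => hd t) (hfI y)]; ring)
    (fun y hy => by rw [hφ y ⟨hy.1, hy.2.trans hx.2.le⟩]; ring)
  rw [intervalIntegral.integral_add (Continuous.intervalIntegrable (by fun_prop) _ _)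
    (hg'.continuousOn_mul hcE.continuousOn)] at h
  have h2 : ∫ y in (0:ℝ)..x, (Real.exp (-(l * (x - y))) : ℂ) * g y =
      (ek l x : ℂ) * (φ x - φ 0) + (l:ℂ) * ∫ y, (ek l (x - y) : ℂ) * (φ x - φ y) ∂mu01 := by
    have e1 : ∫ y in (0:ℝ)..x, (l : ℂ) * (Real.exp (-(l * (x - y))) : ℂ) * (φ y - φ x) =
        -((l:ℂ) * ∫ y, (ek l (x - y) : ℂ) * (φ x - φ y) ∂mu01) := by
      rw [integral_ek_left hx, ← intervalIntegral.integral_const_mul, ← intervalIntegral.integral_neg]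
      congr 1; ext y; ring
    rw [e1] at h
    have e2 : ek l x = Real.exp (-(l * x)) := by simp [ek, hx.1]
    rw [e2]
    simp only [sub_self, mul_zero, sub_zero, zero_sub] at h
    linear_combination h
  rw [h2]
  refine (enorm_add_le _ _).trans ?_
  have e : ∀ r : ℝ, 0 ≤ r → ‖(r:ℂ)‖ₑ = ENNReal.ofReal r := fun r hr => by
    rw [← ofReal_norm, Complex.norm_real, Real.norm_of_nonneg hr]
  rw [enorm_mul, enorm_mul, e _ (ek_nonneg _ _), e _ hl.le]
  gcongr
  refine (enorm_integral_le_lintegral_enorm _).trans (le_of_eq ?_)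
  refine lintegral_congr fun y => ?_
  rw [enorm_mul, e _ (ek_nonneg _ _)]

/-! ### Square functions of the resolvent -/

/-- Young's inequality `(a + b)² ≤ (1 + 1/ε) a² + (1 + ε) b²`. -/
lemma sq_add_le_eps {ε : ℝ} (hε : 0 < ε) (a b : ℝ≥0∞) :
    (a + b) ^ 2 ≤ ENNReal.ofReal (1 + 1 / ε) * a ^ 2 + ENNReal.ofReal (1 + ε) * b ^ 2 := by
  have h1 : 0 < 1 + 1 / ε := by positivity
  have h2 : 0 < 1 + ε := by positivity
  by_cases ha : a = ∞
  · have h3 : ENNReal.ofReal (1 + 1 / ε) * a ^ 2 = ∞ := by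
      rw [ha, ENNReal.top_pow two_ne_zero, ENNReal.mul_top (ENNReal.ofReal_pos.2 h1).ne']
    rw [h3, top_add]; exact le_top
  by_cases hb : b = ∞
  · have h3 : ENNReal.ofReal (1 + ε) * b ^ 2 = ∞ := by
      rw [hb, ENNReal.top_pow two_ne_zero, ENNReal.mul_top (ENNReal.ofReal_pos.2 h2).ne']
    rw [h3, add_top]; exact le_top
  lift a to NNReal using ha
  lift b to NNReal using hb
  have key : ((a:ℝ) + b) ^ 2 ≤ (1 + 1 / ε) * a ^ 2 + (1 + ε) * b ^ 2 := by
    have : 0 ≤ (1 / ε) * (a - ε * b) ^ 2 := by positivity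
    have h3 : (1 / ε) * ((a:ℝ) - ε * b) ^ 2 = (1 / ε) * a ^ 2 - 2 * a * b + ε * b ^ 2 := by
      field_simp
      ring
    nlinarith
  have := ENNReal.ofReal_le_ofReal key
  rw [ENNReal.ofReal_add (by positivity) (by positivity), ENNReal.ofReal_mul h1.le,
    ENNReal.ofReal_mul h2.le, ENNReal.ofReal_pow (by positivity), ENNReal.ofReal_pow (by positivity),
    ENNReal.ofReal_pow (by positivity), ENNReal.ofReal_add (by positivity) (by positivity),
    ENNReal.ofReal_coe_nnreal, ENNReal.ofReal_coe_nnreal] at this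
  exact this

/-- The Gagliardo seminorm squared of order `(1 + α) / 2` on `(0, 1)`, with values in `[0, ∞]`.
On the diagonal the weight is `0 ^ (-(2 + α)) = 0`. -/
noncomputable def gag (α : ℝ) (φ : ℝ → ℂ) : ℝ≥0∞ :=
  ∫⁻ x, ∫⁻ y, ‖φ x - φ y‖ₑ ^ 2 * ENNReal.ofReal (|x - y| ^ (-(2 + α))) ∂mu01 ∂mu01

/-- The part `y < x` of the Gagliardo double integral `gag`. -/
noncomputable def gagL (α : ℝ) (φ : ℝ → ℂ) : ℝ≥0∞ :=
  ∫⁻ x, ∫⁻ y, ‖φ x - φ y‖ₑ ^ 2 * ENNReal.ofReal (pk (-(2 + α)) (x - y)) ∂mu01 ∂mu01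

/-- The Hardy functional `∫_0^1 |φ(x) - φ(0)|² x^{-(1 + α)} dx`. -/
noncomputable def har (α : ℝ) (φ : ℝ → ℂ) : ℝ≥0∞ :=
  ∫⁻ x, ‖φ x - φ 0‖ₑ ^ 2 * ENNReal.ofReal (pk (-(1 + α)) x) ∂mu01

lemma gagL_le_gag (α : ℝ) (φ : ℝ → ℂ) : gagL α φ ≤ gag α φ := by
  refine lintegral_mono fun x => lintegral_mono fun y => ?_
  gcongr
  unfold pk
  split_ifs with h
  · rw [abs_of_pos h]
  · positivity

lemma lintegral_pow_ek {a t : ℝ} (ha : 0 < a) :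
    ∫⁻ l in Ioi (0:ℝ), ENNReal.ofReal (l ^ (a - 1) * ek l t) =
      ENNReal.ofReal (Real.Gamma a) * ENNReal.ofReal (pk (-a) t) := by
  by_cases ht : 0 < t
  · have h := lintegral_rpow_mul_exp ha ht
    rw [← ENNReal.ofReal_mul (Real.Gamma_pos_of_pos ha).le]
    simp only [ek, pk, ht, if_true]
    rw [← h]
    simp only [mul_comm t]
  · simp [ek, pk, ht]

lemma ek_le_one {l : ℝ} (hl : 0 < l) (t : ℝ) : ek l t ≤ 1 := by
  unfold ek
  split_ifs with h
  · exact Real.exp_le_one_iff.2 (by nlinarith)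
  · exact zero_le_one

lemma lintegral_ek_le {l : ℝ} (hl : 0 < l) (x : ℝ) :
    ∫⁻ y, ENNReal.ofReal (ek l (x - y)) ∂mu01 ≤ ENNReal.ofReal (1 / l) := by
  have h := lintegral_rpow_mul_exp (a := 1) zero_lt_one hl
  simp only [sub_self, Real.rpow_zero, one_mul, Real.Gamma_one, Real.rpow_neg_one] at h
  rw [one_div, ← h]
  refine (setLIntegral_le_lintegral _ _).trans (le_of_eq ?_)
  rw [lintegral_sub_left_eq_self (fun y => ENNReal.ofReal (ek l y)) x,
    ← lintegral_indicator measurableSet_Ioi]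
  refine lintegral_congr fun y => ?_
  by_cases hy : 0 < y <;> simp [ek, indicator, hy]

/-- Squaring `resolvent_enorm_le` with Cauchy–Schwarz, and integrating the result against `l^α dl`,
produces exactly the weights of the Hardy functional and of the Gagliardo seminorm. -/
lemma resolvent_bound {α : ℝ} (hα : α ∈ Ioo (0:ℝ) 1) {φ g : ℝ → ℂ}
    (hg : IntervalIntegrable g volume 0 1)
    (hφ : ∀ x ∈ Icc (0:ℝ) 1, φ x = φ 0 + ∫ t in (0:ℝ)..x, g t) (hc : Continuous φ) :
    ∫⁻ l in Ioi (0:ℝ), ∫⁻ x, ENNReal.ofReal (l ^ α) *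
        ‖∫ y, (ek l (x - y) : ℂ) * g y ∂mu01‖ₑ ^ 2 ∂mu01 ≤
      2 * (ENNReal.ofReal (Real.Gamma (1 + α)) * har α φ +
        ENNReal.ofReal (Real.Gamma (2 + α)) * gagL α φ) := by
  have hcm := hc.measurable
  have hpt : ∀ l ∈ Ioi (0:ℝ), ∀ x ∈ Ioo (0:ℝ) 1, ENNReal.ofReal (l ^ α) *
        ‖∫ y, (ek l (x - y) : ℂ) * g y ∂mu01‖ₑ ^ 2 ≤
      2 * (ENNReal.ofReal (l ^ ((1 + α) - 1) * ek l x) * ‖φ x - φ 0‖ₑ ^ 2 +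
        ∫⁻ y, ENNReal.ofReal (l ^ ((2 + α) - 1) * ek l (x - y)) * ‖φ x - φ y‖ₑ ^ 2 ∂mu01) := by
    intro l hl x hx
    have hl : 0 < l := hl
    have hla : 0 < l ^ α := by positivity
    have h1 := pow_le_pow_left' (resolvent_enorm_le hl hx hg hφ hc) 2
    have h2 := h1.trans (sq_add_le_eps one_pos _ _)
    have h3 := sq_lintegral_mul_le mu01 (k := fun y => ENNReal.ofReal (ek l (x - y)))
      (F := fun y => ‖φ x - φ y‖ₑ) (by fun_prop) (by fun_prop)
    set J := ∫⁻ y, ENNReal.ofReal (ek l (x - y)) * ‖φ x - φ y‖ₑ ^ 2 ∂mu01 with hJ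
    have h4 : (ENNReal.ofReal l * ∫⁻ y, ENNReal.ofReal (ek l (x - y)) * ‖φ x - φ y‖ₑ ∂mu01) ^ 2 ≤
        ENNReal.ofReal l * J := by
      rw [mul_pow]
      calc _ ≤ ENNReal.ofReal l ^ 2 * (ENNReal.ofReal (1 / l) * J) := by
            gcongr
            exact h3.trans (by gcongr; exact lintegral_ek_le hl x)
        _ = ENNReal.ofReal l * J := by
            rw [← mul_assoc, ← ENNReal.ofReal_pow hl.le, ← ENNReal.ofReal_mul (by positivity)]
            congr 2; field_simp
    have h5 : (ENNReal.ofReal (ek l x) * ‖φ x - φ 0‖ₑ) ^ 2 ≤ ENNReal.ofReal (ek l x) * ‖φ x - φ 0‖ₑ ^ 2 := by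
      rw [mul_pow]
      gcongr
      rw [← ENNReal.ofReal_pow (ek_nonneg _ _)]
      refine ENNReal.ofReal_le_ofReal ?_
      have := ek_le_one hl x
      have := ek_nonneg l x
      nlinarith
    have e2 : ENNReal.ofReal (1 + 1 / (1:ℝ)) = 2 := by norm_num
    have e2' : ENNReal.ofReal (1 + (1:ℝ)) = 2 := by norm_num
    rw [e2, e2'] at h2
    have e3 : ∫⁻ y, ENNReal.ofReal (l ^ ((2 + α) - 1) * ek l (x - y)) * ‖φ x - φ y‖ₑ ^ 2 ∂mu01 =
        ENNReal.ofReal (l ^ α) * (ENNReal.ofReal l * J) := by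
      rw [hJ, ← lintegral_const_mul' _ _ (by simp), ← lintegral_const_mul' _ _ (by simp)]
      refine lintegral_congr fun y => ?_
      rw [ENNReal.ofReal_mul (by positivity), show 2 + α - 1 = α + 1 by ring,
        Real.rpow_add hl, Real.rpow_one, ENNReal.ofReal_mul hla.le]
      ring
    rw [e3, show 1 + α - 1 = α by ring, ENNReal.ofReal_mul hla.le]
    calc _ ≤ ENNReal.ofReal (l ^ α) * (2 * (ENNReal.ofReal (ek l x) * ‖φ x - φ 0‖ₑ ^ 2) +
          2 * (ENNReal.ofReal l * J)) := by
          gcongr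
          exact h2.trans (by gcongr)
      _ = _ := by ring
  have hm1 : Measurable (fun q : ℝ × ℝ =>
      ENNReal.ofReal (q.1 ^ ((1 + α) - 1) * ek q.1 q.2) * ‖φ q.2 - φ 0‖ₑ ^ 2) := by fun_prop
  have hm3 : Measurable (fun q : (ℝ × ℝ) × ℝ =>
      ENNReal.ofReal (q.1.1 ^ ((2 + α) - 1) * ek q.1.1 (q.1.2 - q.2)) * ‖φ q.1.2 - φ q.2‖ₑ ^ 2) := by
    fun_prop
  have hm2 : Measurable (fun q : ℝ × ℝ => ∫⁻ y, ENNReal.ofReal (q.1 ^ ((2 + α) - 1) * ek q.1 (q.2 - y)) *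
      ‖φ q.2 - φ y‖ₑ ^ 2 ∂mu01) := hm3.lintegral_prod_right'
  calc _ ≤ ∫⁻ l in Ioi (0:ℝ), ∫⁻ x, 2 * (ENNReal.ofReal (l ^ ((1 + α) - 1) * ek l x) * ‖φ x - φ 0‖ₑ ^ 2 +
        ∫⁻ y, ENNReal.ofReal (l ^ ((2 + α) - 1) * ek l (x - y)) * ‖φ x - φ y‖ₑ ^ 2 ∂mu01) ∂mu01 :=
        setLIntegral_mono' measurableSet_Ioi fun l hl =>
          setLIntegral_mono' measurableSet_Ioo fun x hx => hpt l hl x hx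
    _ = ∫⁻ x, (∫⁻ l in Ioi (0:ℝ), 2 * (ENNReal.ofReal (l ^ ((1 + α) - 1) * ek l x) * ‖φ x - φ 0‖ₑ ^ 2 +
        ∫⁻ y, ENNReal.ofReal (l ^ ((2 + α) - 1) * ek l (x - y)) * ‖φ x - φ y‖ₑ ^ 2 ∂mu01)) ∂mu01 :=
        lintegral_lintegral_swap ((hm1.add hm2).const_mul 2).aemeasurable
    _ = ∫⁻ x, 2 * (ENNReal.ofReal (Real.Gamma (1 + α)) * (‖φ x - φ 0‖ₑ ^ 2 * ENNReal.ofReal (pk (-(1 + α)) x)) +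
        ENNReal.ofReal (Real.Gamma (2 + α)) *
          ∫⁻ y, ‖φ x - φ y‖ₑ ^ 2 * ENNReal.ofReal (pk (-(2 + α)) (x - y)) ∂mu01) ∂mu01 := by
        refine lintegral_congr fun x => ?_
        have m1 : Measurable (fun l : ℝ => ENNReal.ofReal (l ^ ((1 + α) - 1) * ek l x) * ‖φ x - φ 0‖ₑ ^ 2) := by
          fun_prop
        rw [lintegral_const_mul' _ _ (by simp), lintegral_add_left m1, lintegral_mul_const _ (by fun_prop),
          lintegral_pow_ek (by linarith [hα.1]), lintegral_lintegral_swap (by fun_prop),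
          ← lintegral_const_mul _ (by fun_prop)]
        congr 2
        · ring
        · refine lintegral_congr fun y => ?_
          rw [lintegral_mul_const _ (by fun_prop), lintegral_pow_ek (by linarith [hα.1])]
          ring
    _ = _ := by
        unfold har gagL
        have m1 : Measurable (fun x : ℝ => ENNReal.ofReal (Real.Gamma (1 + α)) *
          (‖φ x - φ 0‖ₑ ^ 2 * ENNReal.ofReal (pk (-(1 + α)) x))) := by fun_prop
        have m2 : Measurable (fun q : ℝ × ℝ => ‖φ q.1 - φ q.2‖ₑ ^ 2 *
          ENNReal.ofReal (pk (-(2 + α)) (q.1 - q.2))) := by fun_prop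
        rw [lintegral_const_mul' _ _ (by simp), lintegral_add_left m1, lintegral_const_mul' _ _ (by simp),
          lintegral_const_mul' _ _ (by simp)]

/-! ### The fractional Hardy inequality and finiteness of seminorms -/

/-- The tail `∫_t^∞ (x - y)^a dx = (t - y)^{a + 1} / (-(a + 1))`. -/
lemma lintegral_tail {a : ℝ} (ha : a < -1) {y t : ℝ} (hyt : y < t) :
    ∫⁻ x, ENNReal.ofReal (pk 0 (x - t) * pk a (x - y)) ∂mu01 ≤
      ENNReal.ofReal (1 / (-(a + 1))) * ENNReal.ofReal (pk (a + 1) (t - y)) := by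
  have hc : 0 < t - y := by linarith
  have h := integral_Ioi_rpow_of_lt ha hc
  have hi := integrableOn_Ioi_rpow_of_lt ha hc
  have h2 := ofReal_integral_eq_lintegral_ofReal hi (by
    filter_upwards [ae_restrict_mem measurableSet_Ioi] with x hx
    exact Real.rpow_nonneg (hc.trans hx).le _)
  have e : ENNReal.ofReal (1 / (-(a + 1))) * ENNReal.ofReal (pk (a + 1) (t - y)) =
      ∫⁻ x in Ioi (t - y), ENNReal.ofReal (x ^ a) := by
    have hn : 0 ≤ 1 / (-(a + 1)) := one_div_nonneg.2 (by linarith)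
    rw [← h2, h, ← ENNReal.ofReal_mul hn]
    have : pk (a + 1) (t - y) = (t - y) ^ (a + 1) := by simp [pk, hyt]
    rw [this, one_div, inv_neg, neg_mul, neg_div, div_eq_inv_mul]
  rw [e, ← lintegral_indicator measurableSet_Ioi,
    ← lintegral_sub_right_eq_self ((Ioi (t - y)).indicator fun x : ℝ => ENNReal.ofReal (x ^ a)) y]
  refine (setLIntegral_le_lintegral _ _).trans (lintegral_mono fun x => ?_)
  by_cases hx : t < x
  · have : y < x := hyt.trans hx
    simp [pk, hx, this, indicator]
  · simp [pk, hx]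

lemma lintegral_pk_zero {x : ℝ} (hx : x ∈ Ioo (0:ℝ) 1) :
    ∫⁻ y, ENNReal.ofReal (pk 0 (x - y)) ∂mu01 = ENNReal.ofReal x := by
  have : ∀ y, ENNReal.ofReal (pk 0 (x - y)) = (Iio x).indicator (fun _ => (1:ℝ≥0∞)) y := by
    intro y
    by_cases hy : y < x <;> simp [pk, indicator, hy]
  simp only [this]
  rw [lintegral_indicator measurableSet_Iio, lintegral_one, Measure.restrict_apply_univ,
    Measure.restrict_apply measurableSet_Iio]
  have : Iio x ∩ Ioo (0:ℝ) 1 = Ioo 0 x := by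
    ext y; simp only [mem_inter_iff, mem_Iio, mem_Ioo]
    constructor
    · rintro ⟨h1, h2, h3⟩; exact ⟨h2, h1⟩
    · rintro ⟨h1, h2⟩; exact ⟨h2, h1, h2.trans hx.2⟩
  rw [this, Real.volume_Ioo, sub_zero]

lemma increment_sq_le {φ g : ℝ → ℂ} (hgm : Measurable g) (hg : IntervalIntegrable g volume 0 1)
    (hφ : ∀ x ∈ Icc (0:ℝ) 1, φ x = φ 0 + ∫ t in (0:ℝ)..x, g t) {x y : ℝ} (hy : 0 ≤ y) (hyx : y ≤ x)
    (hx : x ≤ 1) :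
    ‖φ x - φ y‖ₑ ^ 2 ≤ ENNReal.ofReal (x - y) * ∫⁻ t in Ioo y x, ‖g t‖ₑ ^ 2 := by
  have m1 : IntervalIntegrable g volume 0 x :=
    hg.mono_set (uIcc_subset_uIcc left_mem_uIcc (by rw [uIcc_of_le zero_le_one]; exact ⟨hy.trans hyx, hx⟩))
  have m2 : IntervalIntegrable g volume 0 y :=
    hg.mono_set (uIcc_subset_uIcc left_mem_uIcc (by rw [uIcc_of_le zero_le_one]; exact ⟨hy, hyx.trans hx⟩))
  have h1 : φ x - φ y = ∫ t in Ioo y x, g t := by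
    rw [hφ x ⟨hy.trans hyx, hx⟩, hφ y ⟨hy, hyx.trans hx⟩, add_sub_add_left_eq_sub,
      intervalIntegral.integral_interval_sub_left m1 m2, intervalIntegral.integral_of_le hyx,
      integral_Ioc_eq_integral_Ioo]
  have h2 := sq_lintegral_mul_le (volume.restrict (Ioo y x)) (k := fun _ => 1) (F := fun t => ‖g t‖ₑ)
    (by fun_prop) (by fun_prop)
  simp only [one_mul, lintegral_one, Measure.restrict_apply_univ, Real.volume_Ioo] at h2
  refine le_trans ?_ h2
  rw [h1]
  gcongr
  exact enorm_integral_le_lintegral_enorm _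

/-- Primitives of square-integrable functions satisfy `|φ(x) - φ(0)|² ≤ C x`, so their Hardy
functional is finite. -/
lemma har_ne_top {α : ℝ} (hα : α ∈ Ioo (0:ℝ) 1) {φ g : ℝ → ℂ} (hgm : Measurable g)
    (hg : IntervalIntegrable g volume 0 1)
    (hφ : ∀ x ∈ Icc (0:ℝ) 1, φ x = φ 0 + ∫ t in (0:ℝ)..x, g t)
    (hL : ∫⁻ t, ‖g t‖ₑ ^ 2 ∂mu01 ≠ ∞) : har α φ ≠ ∞ := by
  have h : har α φ ≤ ∫⁻ x, (∫⁻ t, ‖g t‖ₑ ^ 2 ∂mu01) * ENNReal.ofReal (x ^ (-α)) ∂mu01 := by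
    refine setLIntegral_mono' measurableSet_Ioo fun x hx => ?_
    have h1 := increment_sq_le hgm hg hφ le_rfl hx.1.le hx.2.le
    have h2 : ∫⁻ t in Ioo 0 x, ‖g t‖ₑ ^ 2 ≤ ∫⁻ t, ‖g t‖ₑ ^ 2 ∂mu01 :=
      lintegral_mono_set (Ioo_subset_Ioo le_rfl hx.2.le)
    calc _ ≤ (ENNReal.ofReal (x - 0) * ∫⁻ t, ‖g t‖ₑ ^ 2 ∂mu01) * ENNReal.ofReal (pk (-(1 + α)) x) := by
          gcongr
          exact h1.trans (by gcongr)
      _ = (∫⁻ t, ‖g t‖ₑ ^ 2 ∂mu01) * (ENNReal.ofReal x * ENNReal.ofReal (pk (-(1 + α)) x)) := by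
          rw [sub_zero]; ring
      _ = _ := by
          rw [← ENNReal.ofReal_mul hx.1.le]
          simp only [pk, hx.1, if_true]
          rw [← Real.rpow_one_add' hx.1.le (by linarith [hα.1])]
          congr 3; ring
  refine (h.trans_lt ?_).ne
  rw [lintegral_const_mul' _ _ hL, lintegral_rpow_Ioo (by linarith [hα.2])]
  exact ENNReal.mul_lt_top hL.lt_top ENNReal.ofReal_lt_top

/-- Fractional Hardy inequality. The order `(1 + α) / 2` exceeds `1/2`, so averaging
`|φ(x) - φ(0)|² ≤ (1 + 2/α) |φ(x) - φ(y)|² + (1 + α/2) |φ(y) - φ(0)|²` over `y ∈ (0, x)` returns the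
Hardy functional with the factor `(1 + α/2) / (1 + α) < 1`. Absorbing that term needs it to be finite,
which is the hypothesis `hH`. -/
lemma hardy {α : ℝ} (hα : α ∈ Ioo (0:ℝ) 1) {φ : ℝ → ℂ} (hc : Continuous φ) (hH : har α φ ≠ ∞) :
    har α φ ≤ ENNReal.ofReal ((1 + 2 / α) * (2 * (1 + α) / α)) * gagL α φ := by
  have hcm := hc.measurable
  have hα0 := hα.1
  -- The factor with which the Hardy functional reappears on the right; it is below one.
  set r : ℝ := (1 + α / 2) / (1 + α) with hr
  have hpt : ∀ x ∈ Ioo (0:ℝ) 1, ‖φ x - φ 0‖ₑ ^ 2 * ENNReal.ofReal (pk (-(1 + α)) x) ≤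
      ∫⁻ y, (ENNReal.ofReal (1 + 1 / (α / 2)) *
        (‖φ x - φ y‖ₑ ^ 2 * ENNReal.ofReal (pk (-(2 + α)) (x - y))) +
        ENNReal.ofReal (1 + α / 2) * (‖φ y - φ 0‖ₑ ^ 2 *
          ENNReal.ofReal (pk 0 (x - y) * pk (-(2 + α)) (x - 0)))) ∂mu01 := by
    intro x hx
    have e1 : ‖φ x - φ 0‖ₑ ^ 2 * ENNReal.ofReal (pk (-(1 + α)) x) =
        ∫⁻ y, ‖φ x - φ 0‖ₑ ^ 2 * (ENNReal.ofReal (pk (-(2 + α)) x) * ENNReal.ofReal (pk 0 (x - y))) ∂mu01 := by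
      rw [lintegral_const_mul' _ _ (by simp), lintegral_const_mul' _ _ (by simp), lintegral_pk_zero hx,
        ← ENNReal.ofReal_mul (pk_nonneg _ _)]
      simp only [pk, hx.1, if_true]
      rw [← Real.rpow_add_one' hx.1.le (by linarith)]
      congr 3; ring
    rw [e1]
    refine setLIntegral_mono' measurableSet_Ioo fun y hy => ?_
    by_cases hyx : y < x
    · have hxy : 0 < x - y := by linarith
      have h1 := sq_add_le_eps (show 0 < α / 2 by positivity) ‖φ x - φ y‖ₑ ‖φ y - φ 0‖ₑ
      have h2 : ‖φ x - φ 0‖ₑ ≤ ‖φ x - φ y‖ₑ + ‖φ y - φ 0‖ₑ := by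
        have := enorm_add_le (φ x - φ y) (φ y - φ 0)
        rwa [sub_add_sub_cancel] at this
      have h3 := (pow_le_pow_left' h2 2).trans h1
      have h4 : pk (-(2 + α)) x ≤ pk (-(2 + α)) (x - y) := by
        simp only [pk, hx.1, hxy, if_true]
        exact Real.rpow_le_rpow_of_nonpos hxy (by linarith [hy.1]) (by linarith)
      have e2 : pk 0 (x - y) = 1 := by simp [pk, hyx]
      rw [e2, ENNReal.ofReal_one, mul_one, one_mul, sub_zero]
      calc _ ≤ (ENNReal.ofReal (1 + 1 / (α / 2)) * ‖φ x - φ y‖ₑ ^ 2 +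
            ENNReal.ofReal (1 + α / 2) * ‖φ y - φ 0‖ₑ ^ 2) * ENNReal.ofReal (pk (-(2 + α)) x) := by
            gcongr
        _ = ENNReal.ofReal (1 + 1 / (α / 2)) * (‖φ x - φ y‖ₑ ^ 2 * ENNReal.ofReal (pk (-(2 + α)) x)) +
            ENNReal.ofReal (1 + α / 2) * (‖φ y - φ 0‖ₑ ^ 2 * ENNReal.ofReal (pk (-(2 + α)) x)) := by ring
        _ ≤ _ := by gcongr
    · have e2 : pk 0 (x - y) = 0 := by simp [pk, hyx]
      simp [e2]
  have hle : har α φ ≤ ENNReal.ofReal (1 + 1 / (α / 2)) * gagL α φ + ENNReal.ofReal r * har α φ := by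
    calc har α φ ≤ _ := setLIntegral_mono' measurableSet_Ioo hpt
      _ = ENNReal.ofReal (1 + 1 / (α / 2)) * gagL α φ + ENNReal.ofReal (1 + α / 2) *
          ∫⁻ x, ∫⁻ y, ‖φ y - φ 0‖ₑ ^ 2 *
          ENNReal.ofReal (pk 0 (x - y) * pk (-(2 + α)) (x - 0)) ∂mu01 ∂mu01 := by
          unfold gagL
          rw [← lintegral_const_mul' _ _ (by simp), ← lintegral_const_mul' _ _ (by simp),
            ← lintegral_add_left (by fun_prop)]
          refine lintegral_congr fun x => ?_
          rw [lintegral_add_left (by fun_prop), lintegral_const_mul' _ _ (by simp),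
            lintegral_const_mul' _ _ (by simp)]
      _ ≤ ENNReal.ofReal (1 + 1 / (α / 2)) * gagL α φ + ENNReal.ofReal (1 + α / 2) *
          (ENNReal.ofReal (1 / (1 + α)) * har α φ) := by
          gcongr
          rw [lintegral_lintegral_swap (by fun_prop)]
          unfold har
          rw [← lintegral_const_mul' _ _ (by simp)]
          refine setLIntegral_mono' measurableSet_Ioo fun y hy => ?_
          rw [lintegral_const_mul' _ _ (by simp)]
          have := lintegral_tail (a := -(2 + α)) (by linarith) hy.1
          rw [show -(-(2 + α) + 1) = 1 + α by ring, show -(2 + α) + 1 = -(1 + α) by ring, sub_zero] at this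
          calc _ ≤ ‖φ y - φ 0‖ₑ ^ 2 * (ENNReal.ofReal (1 / (1 + α)) * ENNReal.ofReal (pk (-(1 + α)) y)) := by
                gcongr
            _ = _ := by ring
      _ = _ := by
          rw [← mul_assoc (ENNReal.ofReal (1 + α / 2)), ← ENNReal.ofReal_mul (by positivity), hr]
          congr 3; ring
  by_cases hG : gagL α φ = ∞
  · rw [hG, ENNReal.mul_top]
    · exact le_top
    · exact (ENNReal.ofReal_pos.2 (by positivity)).ne'
  have hle2 := ENNReal.toReal_mono (by finiteness) hle
  rw [ENNReal.toReal_add (by finiteness) (by finiteness), ENNReal.toReal_mul, ENNReal.toReal_mul,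
    ENNReal.toReal_ofReal (by positivity), ENNReal.toReal_ofReal (by positivity)] at hle2
  rw [← ENNReal.toReal_le_toReal hH (by finiteness), ENNReal.toReal_mul,
    ENNReal.toReal_ofReal (by positivity)]
  -- The finite Hardy term is absorbed into the left-hand side.
  have h1r : (1 - r) * (2 * (1 + α) / α) = 1 := by rw [hr]; field_simp; ring
  have hp : 0 < 2 * (1 + α) / α := by positivity
  have h5 : (1 - r) * (har α φ).toReal ≤ (1 + 1 / (α / 2)) * (gagL α φ).toReal := by linarith
  have h6 := mul_le_mul_of_nonneg_left h5 hp.le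
  have h7 : 2 * (1 + α) / α * ((1 - r) * (har α φ).toReal) = (har α φ).toReal := by
    linear_combination (har α φ).toReal * h1r
  rw [h7] at h6
  refine h6.trans (le_of_eq ?_)
  field_simp

lemma gag_le_two_gagL {α : ℝ} (hα : 0 < α) {φ : ℝ → ℂ} (hc : Continuous φ) :
    gag α φ ≤ 2 * gagL α φ := by
  have hcm := hc.measurable
  have e : ∀ t : ℝ, |t| ^ (-(2 + α)) = pk (-(2 + α)) t + pk (-(2 + α)) (-t) := by
    intro t
    rcases lt_trichotomy t 0 with h | h | h
    · simp [pk, h, h.not_gt, abs_of_neg h]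
    · subst h; simp [pk]; rw [Real.zero_rpow (by linarith)]
    · simp [pk, h, h.not_gt, abs_of_pos h]
  have : gag α φ = gagL α φ + ∫⁻ x, ∫⁻ y, ‖φ x - φ y‖ₑ ^ 2 *
      ENNReal.ofReal (pk (-(2 + α)) (y - x)) ∂mu01 ∂mu01 := by
    unfold gag gagL
    rw [← lintegral_add_left (by fun_prop)]
    refine lintegral_congr fun x => ?_
    rw [← lintegral_add_left (by fun_prop)]
    refine lintegral_congr fun y => ?_
    rw [e, neg_sub, ENNReal.ofReal_add (pk_nonneg _ _) (pk_nonneg _ _), mul_add]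
  rw [this, lintegral_lintegral_swap (by fun_prop), two_mul]
  refine le_of_eq ?_
  congr 1
  refine lintegral_congr fun x => lintegral_congr fun y => ?_
  rw [enorm_sub_rev]

/-- Primitives of square-integrable functions have finite Gagliardo seminorm: bound each increment by
Cauchy–Schwarz and integrate the kernel in `x`, then in `y`. -/
lemma gag_ne_top {α : ℝ} (hα : α ∈ Ioo (0:ℝ) 1) {φ g : ℝ → ℂ} (hgm : Measurable g)
    (hg : IntervalIntegrable g volume 0 1)
    (hφ : ∀ x ∈ Icc (0:ℝ) 1, φ x = φ 0 + ∫ t in (0:ℝ)..x, g t) (hc : Continuous φ)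
    (hL : ∫⁻ t, ‖g t‖ₑ ^ 2 ∂mu01 ≠ ∞) : gag α φ ≠ ∞ := by
  have hα0 := hα.1
  have hα1 := hα.2
  refine ((gag_le_two_gagL hα.1 hc).trans_lt (ENNReal.mul_lt_top (by simp) ?_)).ne
  have hpt : ∀ x ∈ Ioo (0:ℝ) 1, ∀ y ∈ Ioo (0:ℝ) 1,
      ‖φ x - φ y‖ₑ ^ 2 * ENNReal.ofReal (pk (-(2 + α)) (x - y)) ≤
      ∫⁻ t, ENNReal.ofReal (pk 0 (t - y)) * (ENNReal.ofReal (pk 0 (x - t) * pk (-(1 + α)) (x - y)) *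
        ‖g t‖ₑ ^ 2) ∂mu01 := by
    intro x hx y hy
    by_cases hyx : y < x
    · have hxy : 0 < x - y := by linarith
      have h1 := increment_sq_le hgm hg hφ hy.1.le hyx.le hx.2.le
      calc _ ≤ (ENNReal.ofReal (x - y) * ∫⁻ t in Ioo y x, ‖g t‖ₑ ^ 2) *
            ENNReal.ofReal (pk (-(2 + α)) (x - y)) := by gcongr
        _ = ENNReal.ofReal (pk (-(1 + α)) (x - y)) * ∫⁻ t in Ioo y x, ‖g t‖ₑ ^ 2 := by
            rw [mul_right_comm, ← ENNReal.ofReal_mul hxy.le]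
            simp only [pk, hxy, if_true]
            rw [← Real.rpow_one_add' hxy.le (by linarith)]
            congr 3; ring
        _ ≤ _ := by
            rw [← lintegral_const_mul' _ _ (by simp), ← lintegral_indicator measurableSet_Ioo,
              ← lintegral_indicator measurableSet_Ioo]
            refine lintegral_mono fun t => ?_
            by_cases ht : t ∈ Ioo y x
            · have h0 : 0 < t := hy.1.trans ht.1
              have h1 : t < 1 := ht.2.trans hx.2
              simp [indicator, ht.1, ht.2, h0, h1, pk]
            · simp only [indicator, ht, if_false]; exact zero_le
    · simp [pk, hyx]
  calc gagL α φ ≤ ∫⁻ x, ∫⁻ y, ∫⁻ t, ENNReal.ofReal (pk 0 (t - y)) *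
        (ENNReal.ofReal (pk 0 (x - t) * pk (-(1 + α)) (x - y)) * ‖g t‖ₑ ^ 2) ∂mu01 ∂mu01 ∂mu01 :=
        setLIntegral_mono' measurableSet_Ioo fun x hx =>
          setLIntegral_mono' measurableSet_Ioo fun y hy => hpt x hx y hy
    _ = ∫⁻ t, ∫⁻ y, ∫⁻ x, ENNReal.ofReal (pk 0 (t - y)) *
        (ENNReal.ofReal (pk 0 (x - t) * pk (-(1 + α)) (x - y)) * ‖g t‖ₑ ^ 2) ∂mu01 ∂mu01 ∂mu01 := by
        have hm : Measurable (fun q : (ℝ × ℝ) × ℝ => ENNReal.ofReal (pk 0 (q.2 - q.1.2)) *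
          (ENNReal.ofReal (pk 0 (q.1.1 - q.2) * pk (-(1 + α)) (q.1.1 - q.1.2)) * ‖g q.2‖ₑ ^ 2)) := by
          fun_prop
        have hm' : Measurable (fun q : (ℝ × ℝ) × ℝ => ENNReal.ofReal (pk 0 (q.1.2 - q.1.1)) *
          (ENNReal.ofReal (pk 0 (q.2 - q.1.2) * pk (-(1 + α)) (q.2 - q.1.1)) * ‖g q.1.2‖ₑ ^ 2)) := by
          fun_prop
        rw [lintegral_lintegral_swap hm.lintegral_prod_right'.aemeasurable]
        have : ∀ y, ∫⁻ x, ∫⁻ t, ENNReal.ofReal (pk 0 (t - y)) *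
          (ENNReal.ofReal (pk 0 (x - t) * pk (-(1 + α)) (x - y)) * ‖g t‖ₑ ^ 2) ∂mu01 ∂mu01 =
          ∫⁻ t, ∫⁻ x, ENNReal.ofReal (pk 0 (t - y)) *
          (ENNReal.ofReal (pk 0 (x - t) * pk (-(1 + α)) (x - y)) * ‖g t‖ₑ ^ 2) ∂mu01 ∂mu01 :=
          fun y => lintegral_lintegral_swap (by fun_prop)
        simp only [this]
        rw [lintegral_lintegral_swap hm'.lintegral_prod_right'.aemeasurable]
    _ ≤ ∫⁻ t, ‖g t‖ₑ ^ 2 * (ENNReal.ofReal (1 / α) * ENNReal.ofReal (1 / (-α + 1))) ∂mu01 := by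
        refine setLIntegral_mono' measurableSet_Ioo fun t ht => ?_
        calc _ ≤ ∫⁻ y, ‖g t‖ₑ ^ 2 * (ENNReal.ofReal (1 / α) * ENNReal.ofReal (pk (-α) (t - y))) ∂mu01 := by
              refine lintegral_mono fun y => ?_
              by_cases hyt : y < t
              · have h1 := lintegral_tail (a := -(1 + α)) (by linarith) hyt
                rw [show -(-(1 + α) + 1) = α by ring, show -(1 + α) + 1 = -α by ring] at h1
                have e : pk 0 (t - y) = 1 := by simp [pk, hyt]
                rw [e, ENNReal.ofReal_one]
                simp only [one_mul]
                rw [lintegral_mul_const' _ _ (by simp), mul_comm]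
                gcongr
              · have e : pk 0 (t - y) = 0 := by simp [pk, hyt]
                simp [e]
          _ ≤ _ := by
              rw [lintegral_const_mul' _ _ (by simp), lintegral_const_mul' _ _ (by simp)]
              gcongr
              exact lintegral_pk_right (by linarith) ht
    _ < ∞ := by
        rw [lintegral_mul_const' _ _ (by finiteness)]
        exact ENNReal.mul_lt_top hL.lt_top (by finiteness)

/-! ### The square function bound and its reflection -/

/-- The constant of `main_bound`. -/
noncomputable def cA (α : ℝ) : ℝ :=
  2 * (Real.Gamma (1 + α) * ((1 + 2 / α) * (2 * (1 + α) / α)) + Real.Gamma (2 + α))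

lemma cA_pos {α : ℝ} (hα : α ∈ Ioo (0:ℝ) 1) : 0 < cA α := by
  have h0 := hα.1
  have := Real.Gamma_pos_of_pos (show 0 < 1 + α by linarith)
  have := Real.Gamma_pos_of_pos (show 0 < 2 + α by linarith)
  unfold cA
  positivity

lemma integrable_of_sq {g : ℝ → ℂ} (hgm : Measurable g)
    (hL : ∫⁻ t, ‖g t‖ₑ ^ 2 ∂mu01 ≠ ∞) : Integrable g mu01 := by
  have h2 : MemLp g 2 mu01 := by
    refine ⟨hgm.aestronglyMeasurable, ?_⟩
    rw [eLpNorm_lt_top_iff_lintegral_rpow_enorm_lt_top (by norm_num) (by norm_num)]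
    simpa using lt_top_iff_ne_top.2 hL
  exact h2.integrable (by norm_num)

lemma intervalIntegrable_iff_mu01 {g : ℝ → ℂ} :
    IntervalIntegrable g volume 0 1 ↔ Integrable g mu01 := by
  rw [intervalIntegrable_iff_integrableOn_Ioo_of_le zero_le_one]
  rfl

/-- The weighted square function of the resolvent is controlled by the Gagliardo seminorm alone, once
the Hardy functional has been removed by `hardy`. -/
lemma main_bound {α : ℝ} (hα : α ∈ Ioo (0:ℝ) 1) {φ g : ℝ → ℂ} (hgm : Measurable g)
    (hφ : ∀ x ∈ Icc (0:ℝ) 1, φ x = φ 0 + ∫ t in (0:ℝ)..x, g t) (hc : Continuous φ)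
    (hL : ∫⁻ t, ‖g t‖ₑ ^ 2 ∂mu01 ≠ ∞) :
    ∫⁻ l in Ioi (0:ℝ), ∫⁻ x, ENNReal.ofReal (l ^ α) *
      ‖∫ y, (ek l (x - y) : ℂ) * g y ∂mu01‖ₑ ^ 2 ∂mu01 ≤
      ENNReal.ofReal (cA α) * gag α φ := by
  have hg := intervalIntegrable_iff_mu01.2 (integrable_of_sq hgm hL)
  have h0 := hα.1
  have g1 := Real.Gamma_pos_of_pos (show 0 < 1 + α by linarith)
  have g2 := Real.Gamma_pos_of_pos (show 0 < 2 + α by linarith)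
  have hH := har_ne_top hα hgm hg hφ hL
  refine (resolvent_bound hα hg hφ hc).trans ?_
  have e : ENNReal.ofReal (cA α) = 2 * (ENNReal.ofReal (Real.Gamma (1 + α)) *
      ENNReal.ofReal ((1 + 2 / α) * (2 * (1 + α) / α)) + ENNReal.ofReal (Real.Gamma (2 + α))) := by
    unfold cA
    rw [ENNReal.ofReal_mul (by norm_num), ENNReal.ofReal_add (by positivity) g2.le,
      ENNReal.ofReal_mul g1.le]
    norm_num
  rw [e, mul_assoc, add_mul, mul_assoc]
  gcongr
  · exact (hardy hα hc hH).trans (by gcongr; exact gagL_le_gag _ _)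
  · exact gagL_le_gag _ _

/-- The reflection `t ↦ 1 - t` preserves Lebesgue measure on the unit interval. -/
lemma mp_refl : MeasurePreserving (fun t : ℝ => 1 - t) mu01 mu01 := by
  have h := (Measure.measurePreserving_sub_left volume (1:ℝ)).restrict_preimage
    (s := Ioo (0:ℝ) 1) measurableSet_Ioo
  have e : (fun t : ℝ => 1 - t) ⁻¹' Ioo 0 1 = Ioo 0 1 := by
    ext t; simp
  rwa [e] at h

lemma lintegral_refl {F : ℝ → ℝ≥0∞} : ∫⁻ x, F (1 - x) ∂mu01 = ∫⁻ x, F x ∂mu01 :=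
  mp_refl.lintegral_comp_emb (MeasurableEquiv.subLeft (1:ℝ)).measurableEmbedding F

lemma integral_refl {F : ℝ → ℂ} : ∫ x, F (1 - x) ∂mu01 = ∫ x, F x ∂mu01 :=
  mp_refl.integral_comp (MeasurableEquiv.subLeft (1:ℝ)).measurableEmbedding F

lemma gag_refl (α : ℝ) (φ : ℝ → ℂ) : gag α (fun x => φ (1 - x)) = gag α φ := by
  unfold gag
  rw [← lintegral_refl]
  refine lintegral_congr fun x => ?_
  rw [← lintegral_refl]
  refine lintegral_congr fun y => ?_
  simp
  rw [abs_sub_comm]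

/-- The mirror image of `main_bound` under `x ↦ 1 - x`, for the adjoint resolvent. -/
lemma main_bound_refl {α : ℝ} (hα : α ∈ Ioo (0:ℝ) 1) {φ g : ℝ → ℂ} (hgm : Measurable g)
    (hφ : ∀ x ∈ Icc (0:ℝ) 1, φ x = φ 0 + ∫ t in (0:ℝ)..x, g t) (hc : Continuous φ)
    (hL : ∫⁻ t, ‖g t‖ₑ ^ 2 ∂mu01 ≠ ∞) :
    ∫⁻ l in Ioi (0:ℝ), ∫⁻ z, ENNReal.ofReal (l ^ α) *
      ‖∫ t, (ek l (t - z) : ℂ) * g t ∂mu01‖ₑ ^ 2 ∂mu01 ≤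
      ENNReal.ofReal (cA α) * gag α φ := by
  have hg := intervalIntegrable_iff_mu01.2 (integrable_of_sq hgm hL)
  have h := main_bound hα (φ := fun x => φ (1 - x)) (g := fun x => - g (1 - x))
    (by fun_prop) ?_ (by fun_prop) ?_
  · rw [gag_refl] at h
    refine le_trans (le_of_eq ?_) h
    refine lintegral_congr fun l => ?_
    rw [← lintegral_refl]
    refine lintegral_congr fun z => ?_
    rw [← integral_refl]
    congr 2
    simp only [mul_neg, integral_neg, enorm_neg]
    congr 2
    ext t
    congr 3
    ring
  · intro x hx
    have hs : ∀ a ∈ Icc (0:ℝ) 1, ∀ b ∈ Icc (0:ℝ) 1, IntervalIntegrable g volume a b := fun a ha b hb =>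
      hg.mono_set (by rw [uIcc_of_le zero_le_one]; exact uIcc_subset_Icc ha hb)
    have hx' : 1 - x ∈ Icc (0:ℝ) 1 := ⟨by linarith [hx.2], by linarith [hx.1]⟩
    simp only [intervalIntegral.integral_neg, intervalIntegral.integral_comp_sub_left (fun t => g t)]
    rw [hφ _ hx', sub_zero, hφ 1 (by simp), ← intervalIntegral.integral_add_adjacent_intervals
      (hs 0 (by simp) _ hx') (hs _ hx' 1 (by simp))]
    ring
  · simp only [enorm_neg]
    rwa [lintegral_refl (F := fun t => ‖g t‖ₑ ^ 2)]

/-! ### Abel inversion -/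

/-- Schur test: convolution with an integrable one-sided power kernel is bounded on `L²(0,1)`. -/
lemma schur_pk {a : ℝ} (ha : -1 < a) {w : ℝ → ℝ≥0∞} (hw : Measurable w) :
    ∫⁻ x, (∫⁻ s, ENNReal.ofReal (pk a (x - s)) * w s ∂mu01) ^ 2 ∂mu01 ≤
      ENNReal.ofReal (1 / (a + 1)) ^ 2 * ∫⁻ s, w s ^ 2 ∂mu01 := by
  calc _ ≤ ∫⁻ x, ENNReal.ofReal (1 / (a + 1)) *
        ∫⁻ s, ENNReal.ofReal (pk a (x - s)) * w s ^ 2 ∂mu01 ∂mu01 := by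
        refine setLIntegral_mono' measurableSet_Ioo fun x hx => ?_
        refine (sq_lintegral_mul_le mu01 (by fun_prop) (by fun_prop)).trans ?_
        gcongr
        exact lintegral_pk_right ha hx
    _ = ENNReal.ofReal (1 / (a + 1)) * ∫⁻ s, ∫⁻ x, ENNReal.ofReal (pk a (x - s)) * w s ^ 2 ∂mu01 ∂mu01 := by
        rw [lintegral_const_mul' _ _ ENNReal.ofReal_ne_top, lintegral_lintegral_swap (by fun_prop)]
    _ ≤ ENNReal.ofReal (1 / (a + 1)) * ∫⁻ s, ENNReal.ofReal (1 / (a + 1)) * w s ^ 2 ∂mu01 := by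
        refine mul_le_mul_right (setLIntegral_mono' measurableSet_Ioo fun s hs => ?_) _
        rw [lintegral_mul_const _ (by fun_prop)]
        gcongr
        exact lintegral_pk_left ha hs
    _ = _ := by
        rw [lintegral_const_mul' _ _ ENNReal.ofReal_ne_top]; ring

lemma fracInt_eq {α : ℝ} (hα : α ∈ Ioo (0:ℝ) 1) (w : ℝ → ℂ) {x : ℝ} (hx : x ∈ Ioo (0:ℝ) 1) :
    fracInt α w x = ((Real.Gamma α)⁻¹ : ℝ) * ∫ s, (pk (α - 1) (x - s) : ℂ) * w s ∂mu01 := by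
  unfold fracInt
  rw [if_neg hα.1.ne', Complex.real_smul]
  congr 1
  rw [intervalIntegral.integral_of_le hx.1.le, integral_Ioc_eq_integral_Ioo, mu01]
  rw [← integral_indicator measurableSet_Ioo, ← integral_indicator measurableSet_Ioo]
  congr 1
  ext s
  simp only [indicator, mem_Ioo, pk, sub_pos]
  by_cases h0 : 0 < s <;> by_cases h1 : s < x
  · have : s < 1 := h1.trans hx.2
    simp [h0, h1, this]
  · simp [h1]
  · simp [h0]
  · simp [h0]

/-- The fractional integral maps `L²(0,1)` into itself. -/
lemma fracInt_sq {α : ℝ} (hα : α ∈ Ioo (0:ℝ) 1) {w : ℝ → ℂ} (hw : Measurable w)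
    (hL : ∫⁻ t, ‖w t‖ₑ ^ 2 ∂mu01 ≠ ∞) : ∫⁻ t, ‖fracInt α w t‖ₑ ^ 2 ∂mu01 ≠ ∞ := by
  have h1 := schur_pk (a := α - 1) (by linarith [hα.1]) (w := fun s => ‖w s‖ₑ) (by fun_prop)
  have h2 : ∫⁻ t, ‖fracInt α w t‖ₑ ^ 2 ∂mu01 ≤ ∫⁻ x, ‖(((Real.Gamma α)⁻¹ : ℝ) : ℂ)‖ₑ ^ 2 *
      (∫⁻ s, ENNReal.ofReal (pk (α - 1) (x - s)) * ‖w s‖ₑ ∂mu01) ^ 2 ∂mu01 := by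
    refine setLIntegral_mono' measurableSet_Ioo fun x hx => ?_
    rw [fracInt_eq hα w hx, enorm_mul, mul_pow]
    gcongr
    refine (enorm_integral_le_lintegral_enorm _).trans (le_of_eq ?_)
    refine lintegral_congr fun s => ?_
    rw [enorm_mul, ← ofReal_norm, Complex.norm_real, Real.norm_of_nonneg (pk_nonneg _ _)]
  rw [lintegral_const_mul' _ _ (by simp)] at h2
  refine (h2.trans_lt (ENNReal.mul_lt_top (by simp) (h1.trans_lt (ENNReal.mul_lt_top (by simp) hL.lt_top)))).ne

/-- Abel inversion: the fractional integral of order `1 - α` undoes `I^α` up to one integration, so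
that `∫_0^t (t - y)^{-α} (I^α w)(y) dy = Γ(α)⁻¹ B(α, 1 - α) ∫_0^t w`. -/
lemma abel_inversion {α : ℝ} (hα : α ∈ Ioo (0:ℝ) 1) {w : ℝ → ℂ} (hw : Measurable w)
    (hL : ∫⁻ t, ‖w t‖ₑ ^ 2 ∂mu01 ≠ ∞) {t : ℝ} (ht : t ∈ Ioo (0:ℝ) 1) :
    ∫ y, (pk (-α) (t - y) : ℂ) * fracInt α w y ∂mu01 =
      (((Real.Gamma α)⁻¹ * ProbabilityTheory.beta α (1 - α) : ℝ) : ℂ) *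
        ∫ s, (pk 0 (t - s) : ℂ) * w s ∂mu01 := by
  have hwi := integrable_of_sq hw hL
  have hb := ProbabilityTheory.beta_pos hα.1 (sub_pos.2 hα.2)
  have key : ∀ s ∈ Ioo (0:ℝ) 1, ∫⁻ y, ENNReal.ofReal (pk (-α) (t - y) * pk (α - 1) (y - s)) ∂mu01 =
      ENNReal.ofReal (ProbabilityTheory.beta α (1 - α) * pk 0 (t - s)) := by
    intro s hs
    by_cases hst : s < t
    · have h := lintegral_beta hα hst
      simp only [pk, sub_pos, hst, if_true, Real.rpow_zero, mul_one]
      rw [← h, mu01, ← lintegral_indicator measurableSet_Ioo]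
      refine lintegral_congr fun y => ?_
      simp only [indicator, mem_Ioo, pk, sub_pos]
      by_cases h0 : s < y <;> by_cases h1 : y < t
      · simp [h0, h1, h1.trans ht.2, hs.1.trans h0]
      all_goals simp [h0, h1]
    · have : ∀ y, pk (-α) (t - y) * pk (α - 1) (y - s) = 0 := by
        intro y
        simp only [pk, sub_pos]
        by_cases h0 : s < y
        · have : ¬ y < t := fun h => hst (h0.trans h)
          simp [this]
        · simp [h0]
      simp only [this, ENNReal.ofReal_zero, lintegral_zero]
      simp [pk, hst]
  have key2 : ∀ s ∈ Ioo (0:ℝ) 1, ∫ y, pk (-α) (t - y) * pk (α - 1) (y - s) ∂mu01 =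
      ProbabilityTheory.beta α (1 - α) * pk 0 (t - s) := by
    intro s hs
    rw [integral_eq_lintegral_of_nonneg_ae (Eventually.of_forall fun y => mul_nonneg (pk_nonneg _ _) (pk_nonneg _ _))
      (by fun_prop), key s hs, ENNReal.toReal_ofReal (mul_nonneg hb.le (pk_nonneg _ _))]
  have hF : Integrable (Function.uncurry fun y s => (pk (-α) (t - y) : ℂ) * ((pk (α - 1) (y - s) : ℂ) * w s))
      (mu01.prod mu01) := by
    refine ⟨by fun_prop, ?_⟩
    rw [hasFiniteIntegral_iff_enorm, lintegral_prod_symm' _ (by fun_prop)]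
    have : ∫⁻ s, ∫⁻ y, ‖(pk (-α) (t - y) : ℂ) * ((pk (α - 1) (y - s) : ℂ) * w s)‖ₑ ∂mu01 ∂mu01
        ≤ ∫⁻ s, ENNReal.ofReal (ProbabilityTheory.beta α (1 - α)) * ‖w s‖ₑ ∂mu01 := by
      refine setLIntegral_mono' measurableSet_Ioo fun s hs => ?_
      calc _ = ∫⁻ y, ENNReal.ofReal (pk (-α) (t - y) * pk (α - 1) (y - s)) * ‖w s‖ₑ ∂mu01 := by
            refine lintegral_congr fun y => ?_
            rw [← mul_assoc, enorm_mul, ← Complex.ofReal_mul, ← ofReal_norm, Complex.norm_real,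
              Real.norm_of_nonneg (mul_nonneg (pk_nonneg _ _) (pk_nonneg _ _))]
        _ ≤ _ := by
            rw [lintegral_mul_const _ (by fun_prop), key s hs]
            gcongr
            have : pk 0 (t - s) ≤ 1 := by unfold pk; split_ifs <;> simp
            nlinarith
    refine this.trans_lt ?_
    rw [lintegral_const_mul' _ _ ENNReal.ofReal_ne_top]
    exact ENNReal.mul_lt_top (by simp) (hasFiniteIntegral_iff_enorm.1 hwi.2)
  calc _ = ∫ y, (((Real.Gamma α)⁻¹ : ℝ) : ℂ) * ∫ s, (pk (-α) (t - y) : ℂ) * ((pk (α - 1) (y - s) : ℂ) * w s) ∂mu01 ∂mu01 := by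
        refine setIntegral_congr_fun measurableSet_Ioo fun y hy => ?_
        rw [fracInt_eq hα w hy, integral_const_mul]
        ring
    _ = (((Real.Gamma α)⁻¹ : ℝ) : ℂ) * ∫ s, ∫ y, (pk (-α) (t - y) : ℂ) * ((pk (α - 1) (y - s) : ℂ) * w s) ∂mu01 ∂mu01 := by
        rw [integral_const_mul, integral_integral_swap hF]
    _ = (((Real.Gamma α)⁻¹ : ℝ) : ℂ) * ∫ s, (ProbabilityTheory.beta α (1 - α) : ℂ) * ((pk 0 (t - s) : ℂ) * w s) ∂mu01 := by
        congr 1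
        refine setIntegral_congr_fun measurableSet_Ioo fun s hs => ?_
        simp only [← mul_assoc, ← Complex.ofReal_mul]
        rw [integral_mul_const, integral_complex_ofReal, key2 s hs]
    _ = _ := by
        rw [integral_const_mul]; push_cast; ring

/-! ### Factorization of the weakly singular pairing -/

/-- The factorization `Γ(1 + α) (t - y)₊^{-α} = ∫_0^∞ l^α (∫ e^{-l(t-z)} e^{-l(z-y)} dz) dl`, where `z` runs
over `(y, t)`. It splits the weakly singular kernel into two resolvents. -/
lemma kernel_factor {α : ℝ} (hα : α ∈ Ioo (0:ℝ) 1) {t y : ℝ} (ht : t ∈ Ioo (0:ℝ) 1)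
    (hy : y ∈ Ioo (0:ℝ) 1) :
    ∫⁻ l in Ioi (0:ℝ), ∫⁻ z, ENNReal.ofReal (l ^ α * (ek l (t - z) * ek l (z - y))) ∂mu01 =
      ENNReal.ofReal (Real.Gamma (1 + α) * pk (-α) (t - y)) := by
  have hG := Real.Gamma_pos_of_pos (show 0 < 1 + α by linarith [hα.1])
  by_cases hyt : y < t
  · have h1 : ∀ l ∈ Ioi (0:ℝ), ∫⁻ z, ENNReal.ofReal (l ^ α * (ek l (t - z) * ek l (z - y))) ∂mu01 =
        ENNReal.ofReal (l ^ ((1 + α) - 1) * ek l (t - y)) * ENNReal.ofReal (t - y) := by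
      intro l hl
      have : ENNReal.ofReal (t - y) = volume (Ioo y t) := by simp
      rw [this, ← setLIntegral_const, mu01, ← lintegral_indicator measurableSet_Ioo,
        ← lintegral_indicator measurableSet_Ioo]
      refine lintegral_congr fun z => ?_
      simp only [indicator, mem_Ioo, ek, sub_pos, hyt, if_true, add_sub_cancel_left]
      by_cases h0 : y < z <;> by_cases h1 : z < t
      · simp only [h0, h1, hy.1.trans h0, h1.trans ht.2, and_self, if_true, ← Real.exp_add]
        congr 3; ring
      all_goals simp [h0, h1]
    rw [setLIntegral_congr_fun measurableSet_Ioi h1, lintegral_mul_const' _ _ ENNReal.ofReal_ne_top,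
      lintegral_pow_ek (by linarith [hα.1]), ← ENNReal.ofReal_mul hG.le,
      ← ENNReal.ofReal_mul (mul_nonneg hG.le (pk_nonneg _ _)), mul_assoc]
    have h0 : 0 < t - y := sub_pos.2 hyt
    simp only [pk, h0, if_true]
    rw [← Real.rpow_add_one h0.ne']
    congr 3; ring
  · have : ∀ l z, l ^ α * (ek l (t - z) * ek l (z - y)) = 0 := by
      intro l z
      simp only [ek, sub_pos]
      by_cases h0 : y < z
      · have : ¬ z < t := fun h => hyt (h0.trans h)
        simp [this]
      · simp [h0]
    simp only [this, ENNReal.ofReal_zero, lintegral_zero]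
    simp [pk, hyt]

lemma mul_le_sq_add (a b : ℝ≥0∞) : a * b ≤ a ^ 2 + b ^ 2 := by
  rcases le_total a b with h | h
  · exact (mul_le_mul_left h b).trans (by rw [← sq]; exact le_add_self)
  · exact (mul_le_mul_right h a).trans (by rw [← sq]; exact le_self_add)

/-- Absolute convergence of the weakly singular pairing, needed to apply Fubini's theorem. -/
lemma pair_finite {α : ℝ} (hα : α ∈ Ioo (0:ℝ) 1) {f h : ℝ → ℂ} (hf : Measurable f) (hh : Measurable h)
    (hfL : ∫⁻ t, ‖f t‖ₑ ^ 2 ∂mu01 ≠ ∞) (hhL : ∫⁻ t, ‖h t‖ₑ ^ 2 ∂mu01 ≠ ∞) :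
    ∫⁻ t, ∫⁻ y, ENNReal.ofReal (pk (-α) (t - y)) * (‖h t‖ₑ * ‖f y‖ₑ) ∂mu01 ∂mu01 ≠ ∞ := by
  have h1 := schur_pk (a := -α) (by linarith [hα.2]) (w := fun s => ‖f s‖ₑ) (by fun_prop)
  have h2 : ∫⁻ t, ∫⁻ y, ENNReal.ofReal (pk (-α) (t - y)) * (‖h t‖ₑ * ‖f y‖ₑ) ∂mu01 ∂mu01 ≤
      ∫⁻ t, (‖h t‖ₑ ^ 2 + (∫⁻ y, ENNReal.ofReal (pk (-α) (t - y)) * ‖f y‖ₑ ∂mu01) ^ 2) ∂mu01 := by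
    refine lintegral_mono fun t => le_trans (le_of_eq ?_) (mul_le_sq_add _ _)
    rw [← lintegral_const_mul' _ _ (by simp)]
    refine lintegral_congr fun y => by ring
  rw [lintegral_add_left (by fun_prop)] at h2
  exact (h2.trans_lt (ENNReal.add_lt_top.2 ⟨hhL.lt_top, h1.trans_lt
    (ENNReal.mul_lt_top (by simp) hfL.lt_top)⟩)).ne

/-- The pairing of `h` with the convolution of `f` and `t₊^{-α}` is bounded by the two resolvent square
functions, by `kernel_factor`, Fubini's theorem and `a b ≤ a² + b²`. -/
lemma pairing_bound {α : ℝ} (hα : α ∈ Ioo (0:ℝ) 1) {f h : ℝ → ℂ} (hf : Measurable f) (hh : Measurable h)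
    (hfL : ∫⁻ t, ‖f t‖ₑ ^ 2 ∂mu01 ≠ ∞) (hhL : ∫⁻ t, ‖h t‖ₑ ^ 2 ∂mu01 ≠ ∞) :
    ENNReal.ofReal (Real.Gamma (1 + α)) *
      ‖∫ t, h t * ∫ y, (pk (-α) (t - y) : ℂ) * f y ∂mu01 ∂mu01‖ₑ ≤
      (∫⁻ l in Ioi (0:ℝ), ∫⁻ z, ENNReal.ofReal (l ^ α) *
        ‖∫ t, (ek l (t - z) : ℂ) * h t ∂mu01‖ₑ ^ 2 ∂mu01) +
      ∫⁻ l in Ioi (0:ℝ), ∫⁻ z, ENNReal.ofReal (l ^ α) *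
        ‖∫ y, (ek l (z - y) : ℂ) * f y ∂mu01‖ₑ ^ 2 ∂mu01 := by
  have hG := Real.Gamma_pos_of_pos (show 0 < 1 + α by linarith [hα.1])
  set μ1 : Measure (ℝ × ℝ) := mu01.prod mu01 with hμ1
  set μ2 : Measure (ℝ × ℝ) := (volume.restrict (Ioi (0:ℝ))).prod mu01 with hμ2
  set k : ℝ × ℝ → ℝ × ℝ → ℝ := fun p q => q.1 ^ α * (ek q.1 (p.1 - q.2) * ek q.1 (q.2 - p.2)) with hk
  have hkm : Measurable (Function.uncurry k) := by
    simp only [hk, Function.uncurry_def]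
    fun_prop
  -- Variables: `p = (t, y)` runs over the unit square, `q = (l, z)` over `(0, ∞) × (0, 1)`.
  have ae1 : ∀ᵐ p ∂μ1, p.1 ∈ Ioo (0:ℝ) 1 ∧ p.2 ∈ Ioo (0:ℝ) 1 := by
    rw [hμ1, mu01, Measure.prod_restrict]
    filter_upwards [ae_restrict_mem (measurableSet_Ioo.prod measurableSet_Ioo)] with p hp using hp
  have ae2 : ∀ᵐ q ∂μ2, 0 < q.1 := by
    rw [hμ2, mu01, Measure.prod_restrict]
    filter_upwards [ae_restrict_mem (measurableSet_Ioi.prod measurableSet_Ioo)] with p hp using hp.1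
  have hk0 : ∀ p, ∀ᵐ q ∂μ2, 0 ≤ k p q := by
    intro p
    filter_upwards [ae2] with q hq
    exact mul_nonneg (by positivity) (mul_nonneg (ek_nonneg _ _) (ek_nonneg _ _))
  have hkl : ∀ p : ℝ × ℝ, p.1 ∈ Ioo (0:ℝ) 1 ∧ p.2 ∈ Ioo (0:ℝ) 1 →
      ∫⁻ q, ENNReal.ofReal (k p q) ∂μ2 = ENNReal.ofReal (Real.Gamma (1 + α) * pk (-α) (p.1 - p.2)) := by
    intro p hp
    rw [← kernel_factor hα hp.1 hp.2, hμ2, lintegral_prod _ (by fun_prop)]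
  have hki : ∀ p : ℝ × ℝ, p.1 ∈ Ioo (0:ℝ) 1 ∧ p.2 ∈ Ioo (0:ℝ) 1 →
      ∫ q, k p q ∂μ2 = Real.Gamma (1 + α) * pk (-α) (p.1 - p.2) := by
    intro p hp
    rw [integral_eq_lintegral_of_nonneg_ae (hk0 p) (by fun_prop), hkl p hp,
      ENNReal.toReal_ofReal (mul_nonneg hG.le (pk_nonneg _ _))]
  have hI : Integrable (Function.uncurry fun p q => (k p q : ℂ) * (h p.1 * f p.2)) (μ1.prod μ2) := by
    have hm : Measurable (Function.uncurry fun p q => (k p q : ℂ) * (h p.1 * f p.2)) := by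
      simp only [Function.uncurry_def] at hkm ⊢
      fun_prop
    refine ⟨hm.aestronglyMeasurable, ?_⟩
    rw [hasFiniteIntegral_iff_enorm, lintegral_prod _ hm.enorm.aemeasurable]
    have e : ∫⁻ p, ∫⁻ q, ‖(k p q : ℂ) * (h p.1 * f p.2)‖ₑ ∂μ2 ∂μ1 =
        ∫⁻ p, ENNReal.ofReal (Real.Gamma (1 + α)) *
          (ENNReal.ofReal (pk (-α) (p.1 - p.2)) * (‖h p.1‖ₑ * ‖f p.2‖ₑ)) ∂μ1 := by
      refine lintegral_congr_ae ?_
      filter_upwards [ae1] with p hp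
      have : ∫⁻ q, ‖(k p q : ℂ) * (h p.1 * f p.2)‖ₑ ∂μ2 =
          ∫⁻ q, ENNReal.ofReal (k p q) * (‖h p.1‖ₑ * ‖f p.2‖ₑ) ∂μ2 := by
        refine lintegral_congr_ae ?_
        filter_upwards [hk0 p] with q hq
        rw [enorm_mul, enorm_mul, ← ofReal_norm, Complex.norm_real, Real.norm_of_nonneg hq]
      rw [this, lintegral_mul_const _ (by fun_prop), hkl p hp, ENNReal.ofReal_mul hG.le, mul_assoc]
    simp only [Function.uncurry_def] at *
    rw [e, lintegral_const_mul' _ _ ENNReal.ofReal_ne_top, hμ1, lintegral_prod _ (by fun_prop)]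
    exact ENNReal.mul_lt_top (by simp) (pair_finite hα hf hh hfL hhL).lt_top
  have hE : ∫ p, (∫ q, (k p q : ℂ) * (h p.1 * f p.2) ∂μ2) ∂μ1 =
      (Real.Gamma (1 + α) : ℂ) * ∫ t, h t * ∫ y, (pk (-α) (t - y) : ℂ) * f y ∂mu01 ∂mu01 := by
    have hI' := hI.integral_prod_left
    simp only [Function.uncurry_apply_pair] at hI'
    rw [hμ1, integral_prod _ hI', ← integral_const_mul]
    refine setIntegral_congr_fun measurableSet_Ioo fun t ht => ?_
    rw [← integral_const_mul, ← integral_const_mul]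
    refine setIntegral_congr_fun measurableSet_Ioo fun y hy => ?_
    change ∫ q, (k (t, y) q : ℂ) * (h t * f y) ∂μ2 = _
    rw [integral_mul_const, integral_complex_ofReal, hki (t, y) ⟨ht, hy⟩]
    push_cast; ring
  have hS : ∫ p, (∫ q, (k p q : ℂ) * (h p.1 * f p.2) ∂μ2) ∂μ1 =
      ∫ q, ((q.1 ^ α : ℝ) : ℂ) * ((∫ t, (ek q.1 (t - q.2) : ℂ) * h t ∂mu01) *
        ∫ y, (ek q.1 (q.2 - y) : ℂ) * f y ∂mu01) ∂μ2 := by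
    rw [integral_integral_swap hI]
    refine integral_congr_ae (Eventually.of_forall fun q => ?_)
    simp only
    rw [← integral_prod_mul, ← integral_const_mul]
    refine integral_congr_ae (Eventually.of_forall fun p => ?_)
    simp only [hk]
    push_cast; ring
  have hVm : StronglyMeasurable (fun q : ℝ × ℝ => ∫ t, (ek q.1 (t - q.2) : ℂ) * h t ∂mu01) :=
    StronglyMeasurable.integral_prod_right (f := fun (q : ℝ × ℝ) (t : ℝ) => (ek q.1 (t - q.2) : ℂ) * h t)
      (by simp only [Function.uncurry_def]; exact Measurable.stronglyMeasurable (by fun_prop))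
  have hUm : StronglyMeasurable (fun q : ℝ × ℝ => ∫ y, (ek q.1 (q.2 - y) : ℂ) * f y ∂mu01) :=
    StronglyMeasurable.integral_prod_right (f := fun (q : ℝ × ℝ) (y : ℝ) => (ek q.1 (q.2 - y) : ℂ) * f y)
      (by simp only [Function.uncurry_def]; exact Measurable.stronglyMeasurable (by fun_prop))
  have hVm' := hVm.measurable
  have hUm' := hUm.measurable
  calc _ = ‖∫ q, ((q.1 ^ α : ℝ) : ℂ) * ((∫ t, (ek q.1 (t - q.2) : ℂ) * h t ∂mu01) *
        ∫ y, (ek q.1 (q.2 - y) : ℂ) * f y ∂mu01) ∂μ2‖ₑ := by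
        rw [← hS, hE, enorm_mul, ← ofReal_norm (Real.Gamma _ : ℂ), Complex.norm_real, Real.norm_of_nonneg hG.le]
    _ ≤ ∫⁻ q, (ENNReal.ofReal (q.1 ^ α) * ‖∫ t, (ek q.1 (t - q.2) : ℂ) * h t ∂mu01‖ₑ ^ 2 +
          ENNReal.ofReal (q.1 ^ α) * ‖∫ y, (ek q.1 (q.2 - y) : ℂ) * f y ∂mu01‖ₑ ^ 2) ∂μ2 := by
        refine (enorm_integral_le_lintegral_enorm _).trans (lintegral_mono_ae ?_)
        filter_upwards [ae2] with q hq
        rw [enorm_mul, enorm_mul, ← mul_add, ← ofReal_norm ((q.1 ^ α : ℝ) : ℂ), Complex.norm_real,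
          Real.norm_of_nonneg (by positivity)]
        gcongr
        exact mul_le_sq_add _ _
    _ = _ := by
        rw [lintegral_add_left (by fun_prop), hμ2, lintegral_prod _ (by fun_prop),
          lintegral_prod _ (by fun_prop)]

/-! ### The form estimate for measurable data -/

/-- The factor by which multiplication by a Lipschitz function enlarges the seminorm. -/
noncomputable def cB (α K M : ℝ) : ℝ := 1 + 2 * M ^ 2 + 4 * K ^ 2 / (1 - α)

/-- A Lipschitz function is the primitive of its almost everywhere derivative. -/
lemma lipschitz_primitive {p : ℝ → ℝ} {K : NNReal} (hp : LipschitzWith K p) :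
    (∀ a b, IntervalIntegrable (fun t => ((deriv p t : ℝ) : ℂ)) volume a b) ∧
    ∀ a b, (p b : ℂ) = (p a : ℂ) + ∫ t in a..b, ((deriv p t : ℝ) : ℂ) := by
  have h : ∀ a b, AbsolutelyContinuousOnInterval p a b := fun a b =>
    hp.lipschitzOnWith.absolutelyContinuousOnInterval
  refine ⟨fun a b =>
    ⟨(h a b).intervalIntegrable_deriv.1.ofReal, (h a b).intervalIntegrable_deriv.2.ofReal⟩, fun a b => ?_⟩
  rw [intervalIntegral.integral_ofReal, (h a b).integral_deriv_eq_sub]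
  push_cast; ring

lemma enorm_ofReal_le {x M : ℝ} (h : |x| ≤ M) : ‖(x : ℂ)‖ₑ ≤ ENNReal.ofReal M := by
  rw [← ofReal_norm, Complex.norm_real]
  exact ENNReal.ofReal_le_ofReal h

lemma sq_add_le_two (a b : ℝ≥0∞) : (a + b) ^ 2 ≤ 2 * a ^ 2 + 2 * b ^ 2 := by
  have := sq_add_le_eps one_pos a b
  norm_num at this
  exact this

/-- Multiplication by a bounded Lipschitz function (and conjugation) is bounded on `H^{(1+α)/2}(0,1)`.
Since `α < 1`, the Lipschitz factor leaves the integrable weight `|x - y|^{-α}`. -/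
lemma gag_mul_le {α K M : ℝ} (hα : α ∈ Ioo (0:ℝ) 1) (hK : 0 ≤ K) (hM : 0 ≤ M) {p : ℝ → ℝ}
    (hp : LipschitzWith K.toNNReal p) (hpM : ∀ x ∈ Icc (0:ℝ) 1, |p x| ≤ M) {u v : ℝ → ℂ}
    (hu : Measurable u) (hv : ∀ x, v x = p x * (starRingEnd ℂ) (u x)) :
    gag α v ≤ ENNReal.ofReal (2 * M ^ 2) * gag α u +
      ENNReal.ofReal (4 * K ^ 2 / (1 - α)) * ∫⁻ x, ‖u x‖ₑ ^ 2 ∂mu01 := by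
  have h1α : 0 < 1 - α := by linarith [hα.2]
  have hpt : ∀ x ∈ Ioo (0:ℝ) 1, ∀ y,
      ‖v x - v y‖ₑ ^ 2 * ENNReal.ofReal (|x - y| ^ (-(2 + α))) ≤
      ENNReal.ofReal (2 * M ^ 2) * (‖u x - u y‖ₑ ^ 2 * ENNReal.ofReal (|x - y| ^ (-(2 + α)))) +
      ENNReal.ofReal (2 * K ^ 2) *
        ((ENNReal.ofReal (pk (-α) (x - y)) + ENNReal.ofReal (pk (-α) (y - x))) * ‖u y‖ₑ ^ 2) := by
    intro x hx y
    have e1 : v x - v y = (p x : ℂ) * (starRingEnd ℂ) (u x - u y) +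
        ((p x - p y : ℝ) : ℂ) * (starRingEnd ℂ) (u y) := by
      rw [hv, hv, map_sub]; push_cast; ring
    have hl : |p x - p y| ≤ K * |x - y| := by
      have := hp.dist_le_mul x y
      rwa [Real.dist_eq, Real.dist_eq, Real.coe_toNNReal _ hK] at this
    have ec : ∀ z : ℂ, ‖(starRingEnd ℂ) z‖ₑ = ‖z‖ₑ := fun z => by
      rw [← ofReal_norm, ← ofReal_norm, Complex.norm_conj]
    have e2 : ‖v x - v y‖ₑ ^ 2 ≤ ENNReal.ofReal (2 * M ^ 2) * ‖u x - u y‖ₑ ^ 2 +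
        ENNReal.ofReal (2 * K ^ 2) * (ENNReal.ofReal (|x - y| ^ 2) * ‖u y‖ₑ ^ 2) := by
      calc _ ≤ (ENNReal.ofReal M * ‖u x - u y‖ₑ + ENNReal.ofReal (K * |x - y|) * ‖u y‖ₑ) ^ 2 := by
            rw [e1]
            gcongr
            refine (enorm_add_le _ _).trans ?_
            rw [enorm_mul, enorm_mul, ec, ec]
            gcongr
            · exact enorm_ofReal_le (hpM x ⟨hx.1.le, hx.2.le⟩)
            · exact enorm_ofReal_le hl
        _ ≤ _ := sq_add_le_two _ _
        _ = _ := by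
            rw [ENNReal.ofReal_mul hK, ENNReal.ofReal_mul (by norm_num : (0:ℝ) ≤ 2),
              ENNReal.ofReal_mul (by norm_num : (0:ℝ) ≤ 2), ENNReal.ofReal_pow hM,
              ENNReal.ofReal_pow hK, ENNReal.ofReal_pow (abs_nonneg _)]
            norm_num
            ring
    have e3 : ENNReal.ofReal (|x - y| ^ 2) * ENNReal.ofReal (|x - y| ^ (-(2 + α))) ≤
        ENNReal.ofReal (pk (-α) (x - y)) + ENNReal.ofReal (pk (-α) (y - x)) := by
      rw [← ENNReal.ofReal_mul (by positivity), ← ENNReal.ofReal_add (pk_nonneg _ _) (pk_nonneg _ _)]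
      apply ENNReal.ofReal_le_ofReal
      have e4 : ∀ t : ℝ, 0 < t → t ^ 2 * t ^ (-(2 + α)) = t ^ (-α) := by
        intro t ht
        rw [← Real.rpow_natCast t 2, ← Real.rpow_add ht]
        congr 1; push_cast; ring
      rcases lt_trichotomy x y with h | h | h
      · have : 0 < y - x := sub_pos.2 h
        rw [abs_sub_comm, abs_of_pos this, e4 _ this]
        simp [pk, h, h.not_gt]
      · subst h; simp [pk]
      · have : 0 < x - y := sub_pos.2 h
        rw [abs_of_pos this, e4 _ this]
        simp [pk, h, h.not_gt]
    calc _ ≤ (ENNReal.ofReal (2 * M ^ 2) * ‖u x - u y‖ₑ ^ 2 +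
        ENNReal.ofReal (2 * K ^ 2) * (ENNReal.ofReal (|x - y| ^ 2) * ‖u y‖ₑ ^ 2)) *
          ENNReal.ofReal (|x - y| ^ (-(2 + α))) := by gcongr
      _ = ENNReal.ofReal (2 * M ^ 2) * (‖u x - u y‖ₑ ^ 2 * ENNReal.ofReal (|x - y| ^ (-(2 + α)))) +
        ENNReal.ofReal (2 * K ^ 2) *
        ((ENNReal.ofReal (|x - y| ^ 2) * ENNReal.ofReal (|x - y| ^ (-(2 + α)))) * ‖u y‖ₑ ^ 2) := by ring
      _ ≤ _ := by gcongr
  calc gag α v ≤ ∫⁻ x, ∫⁻ y, (ENNReal.ofReal (2 * M ^ 2) * (‖u x - u y‖ₑ ^ 2 *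
          ENNReal.ofReal (|x - y| ^ (-(2 + α)))) + ENNReal.ofReal (2 * K ^ 2) *
        ((ENNReal.ofReal (pk (-α) (x - y)) + ENNReal.ofReal (pk (-α) (y - x))) * ‖u y‖ₑ ^ 2)) ∂mu01 ∂mu01 :=
        setLIntegral_mono' measurableSet_Ioo fun x hx => lintegral_mono fun y => hpt x hx y
    _ = ENNReal.ofReal (2 * M ^ 2) * gag α u + ENNReal.ofReal (2 * K ^ 2) * ∫⁻ x, ∫⁻ y,
        (ENNReal.ofReal (pk (-α) (x - y)) + ENNReal.ofReal (pk (-α) (y - x))) * ‖u y‖ₑ ^ 2 ∂mu01 ∂mu01 := by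
        unfold gag
        rw [← lintegral_const_mul' _ _ ENNReal.ofReal_ne_top, ← lintegral_const_mul' _ _ ENNReal.ofReal_ne_top,
          ← lintegral_add_left (by fun_prop)]
        refine lintegral_congr fun x => ?_
        rw [← lintegral_const_mul' _ _ ENNReal.ofReal_ne_top, ← lintegral_const_mul' _ _ ENNReal.ofReal_ne_top,
          ← lintegral_add_left (by fun_prop)]
    _ ≤ ENNReal.ofReal (2 * M ^ 2) * gag α u + ENNReal.ofReal (2 * K ^ 2) *
        ∫⁻ y, ENNReal.ofReal (2 / (1 - α)) * ‖u y‖ₑ ^ 2 ∂mu01 := by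
        rw [lintegral_lintegral_swap (by fun_prop)]
        refine add_le_add_right (mul_le_mul_right
          (setLIntegral_mono' measurableSet_Ioo fun y hy => ?_) _) _
        rw [lintegral_mul_const _ (by fun_prop), lintegral_add_left (by fun_prop)]
        gcongr
        refine (add_le_add (lintegral_pk_left (by linarith) hy)
          (lintegral_pk_right (a := -α) (by linarith) hy)).trans (le_of_eq ?_)
        rw [neg_add_eq_sub, ← ENNReal.ofReal_add (by positivity) (by positivity)]
        congr 1; ring
    _ = _ := by
        rw [lintegral_const_mul' _ _ ENNReal.ofReal_ne_top, ← mul_assoc, ← ENNReal.ofReal_mul (by positivity)]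
        congr 3; ring

lemma sq_ne_top_of_continuous {u : ℝ → ℂ} (hu : Continuous u) : ∫⁻ x, ‖u x‖ₑ ^ 2 ∂mu01 ≠ ∞ := by
  obtain ⟨C, hC⟩ := (isCompact_Icc (a := (0:ℝ)) (b := 1)).exists_bound_of_continuousOn hu.continuousOn
  have : ∫⁻ x, ‖u x‖ₑ ^ 2 ∂mu01 ≤ ∫⁻ x, ENNReal.ofReal C ^ 2 ∂mu01 := by
    refine setLIntegral_mono' measurableSet_Ioo fun x hx => ?_
    gcongr
    rw [← ofReal_norm]
    exact ENNReal.ofReal_le_ofReal (hC x ⟨hx.1.le, hx.2.le⟩)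
  refine (this.trans_lt ?_).ne
  rw [lintegral_const]
  exact ENNReal.mul_lt_top (by simp) (measure_lt_top _ _)

/-- The form estimate for measurable data. The hypothesis `hA` is Abel inversion, which replaces the
primitive of `w` by the weakly singular integral of `f = u'`. With `v = p * conj u`, which vanishes at
`1`, and `h = v'`, integration by parts gives
`κ ∫ p w conj u = κ ∫ w v = - ∫ h(t) (∫_0^t (t - y)^{-α} f(y) dy) dt`. -/
lemma core {α K M κ : ℝ} (hα : α ∈ Ioo (0:ℝ) 1) (hK : 0 ≤ K) (hM : 0 ≤ M) (hκ : 0 < κ) {p : ℝ → ℝ}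
    (hp : LipschitzWith K.toNNReal p) (hpM : ∀ x ∈ Icc (0:ℝ) 1, |p x| ≤ M) {u f w : ℝ → ℂ}
    (hu : Continuous u) (hf : Measurable f) (hw : Measurable w)
    (hfL : ∫⁻ t, ‖f t‖ₑ ^ 2 ∂mu01 ≠ ∞) (hwL : ∫⁻ t, ‖w t‖ₑ ^ 2 ∂mu01 ≠ ∞)
    (huf : ∀ x ∈ Icc (0:ℝ) 1, u x = u 0 + ∫ t in (0:ℝ)..x, f t) (hu1 : u 1 = 0)
    (hA : ∀ t ∈ Ioo (0:ℝ) 1, ∫ y, (pk (-α) (t - y) : ℂ) * f y ∂mu01 =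
      (κ : ℂ) * ∫ s, (pk 0 (t - s) : ℂ) * w s ∂mu01) :
    ENNReal.ofReal (Real.Gamma (1 + α) * κ) * ‖∫ x, (p x : ℂ) * w x * (starRingEnd ℂ) (u x) ∂mu01‖ₑ ≤
      ENNReal.ofReal (cA α * cB α K M) * (∫⁻ x, ‖u x‖ₑ ^ 2 ∂mu01 + gag α u) := by
  have h1α : 0 < 1 - α := by linarith [hα.2]
  have hG := Real.Gamma_pos_of_pos (show 0 < 1 + α by linarith [hα.1])
  have hcA := cA_pos hα
  have hum := hu.measurable
  have hpc : Continuous p := hp.continuous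
  have hpm := hpc.measurable
  have hfi := intervalIntegrable_iff_mu01.2 (integrable_of_sq hf hfL)
  have hwi := intervalIntegrable_iff_mu01.2 (integrable_of_sq hw hwL)
  obtain ⟨hp1, hp2⟩ := lipschitz_primitive hp
  have conjm : ∀ {g : ℝ → ℂ}, Measurable g → Measurable fun x => (starRingEnd ℂ) (g x) := fun hg =>
    Complex.continuous_conj.measurable.comp hg
  have ec : ∀ z : ℂ, ‖(starRingEnd ℂ) z‖ₑ = ‖z‖ₑ := fun z => by
    rw [← ofReal_norm, ← ofReal_norm, Complex.norm_conj]
  have hsub : ∀ {g : ℝ → ℂ}, IntervalIntegrable g volume 0 1 → ∀ x ∈ Icc (0:ℝ) 1,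
      IntervalIntegrable g volume 0 x := fun hg x hx =>
    hg.mono_set (uIcc_subset_uIcc left_mem_uIcc (by rwa [uIcc_of_le zero_le_one]))
  set v : ℝ → ℂ := fun x => (p x : ℂ) * (starRingEnd ℂ) (u x) with hv
  set h : ℝ → ℂ := fun x => ((deriv p x : ℝ) : ℂ) * (starRingEnd ℂ) (u x) + (p x : ℂ) * (starRingEnd ℂ) (f x) with hh
  have hcu : Continuous fun x => (starRingEnd ℂ) (u x) := Complex.continuous_conj.comp hu
  have hvc : Continuous v := by
    simp only [hv]; fun_prop
  have hcf := conjm hf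
  have hhm : Measurable h := by
    have := measurable_deriv p
    have := hcu.measurable
    simp only [hh]; fun_prop
  have hcfi : IntervalIntegrable (fun x => (starRingEnd ℂ) (f x)) volume 0 1 :=
    ⟨Complex.conjCLE.toContinuousLinearMap.integrable_comp hfi.1,
      Complex.conjCLE.toContinuousLinearMap.integrable_comp hfi.2⟩
  have hcuf : ∀ x ∈ Icc (0:ℝ) 1, (starRingEnd ℂ) (u x) =
      (starRingEnd ℂ) (u 0) + ∫ t in (0:ℝ)..x, (starRingEnd ℂ) (f t) := by
    intro x hx
    rw [huf x hx, map_add, intervalIntegral.integral_of_le hx.1, intervalIntegral.integral_of_le hx.1,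
      integral_conj]
  have hvh : ∀ x ∈ Icc (0:ℝ) 1, v x = v 0 + ∫ t in (0:ℝ)..x, h t := by
    intro x hx
    have := ibp (F := fun x => (p x : ℂ)) (G := fun x => (starRingEnd ℂ) (u x)) hx.1 (hp1 0 x)
      (hsub hcfi x hx) (fun y _ => hp2 0 y) (fun y hy => hcuf y ⟨hy.1, hy.2.trans hx.2⟩)
    simp only [hh, hv]
    rw [this]; ring
  have hv1 : v 1 = 0 := by simp [hv, hu1]
  have huL := sq_ne_top_of_continuous hu
  have hhL : ∫⁻ t, ‖h t‖ₑ ^ 2 ∂mu01 ≠ ∞ := by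
    have : ∫⁻ t, ‖h t‖ₑ ^ 2 ∂mu01 ≤ ∫⁻ t, (2 * (ENNReal.ofReal K ^ 2 * ‖u t‖ₑ ^ 2) +
        2 * (ENNReal.ofReal M ^ 2 * ‖f t‖ₑ ^ 2)) ∂mu01 := by
      refine setLIntegral_mono' measurableSet_Ioo fun x hx => ?_
      rw [← mul_pow, ← mul_pow]
      refine le_trans ?_ (sq_add_le_two _ _)
      gcongr
      refine (enorm_add_le _ _).trans ?_
      rw [enorm_mul, enorm_mul, ec, ec]
      gcongr
      · refine enorm_ofReal_le ?_
        have := norm_deriv_le_of_lipschitz (x₀ := x) hp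
        rwa [Real.coe_toNNReal _ hK] at this
      · exact enorm_ofReal_le (hpM x ⟨hx.1.le, hx.2.le⟩)
    refine (this.trans_lt ?_).ne
    rw [lintegral_add_left (by fun_prop), lintegral_const_mul' _ _ (by simp),
      lintegral_const_mul' _ _ (by simp), lintegral_const_mul' _ _ (by simp),
      lintegral_const_mul' _ _ (by simp)]
    exact ENNReal.add_lt_top.2 ⟨ENNReal.mul_lt_top (by simp) (ENNReal.mul_lt_top (by simp) huL.lt_top),
      ENNReal.mul_lt_top (by simp) (ENNReal.mul_lt_top (by simp) hfL.lt_top)⟩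
  have hhi := intervalIntegrable_iff_mu01.2 (integrable_of_sq hhm hhL)
  -- The boundary terms vanish: `v 1 = 0`, and the primitive of `w` vanishes at `0`.
  have hW : ∀ t ∈ Ioo (0:ℝ) 1, ∫ s, (pk 0 (t - s) : ℂ) * w s ∂mu01 = ∫ s in (0:ℝ)..t, w s := by
    intro t ht
    rw [intervalIntegral.integral_of_le ht.1.le, integral_Ioc_eq_integral_Ioo, mu01,
      ← integral_indicator measurableSet_Ioo, ← integral_indicator measurableSet_Ioo]
    congr 1
    ext s
    simp only [indicator, mem_Ioo, pk, sub_pos, Real.rpow_zero]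
    by_cases h0 : 0 < s <;> by_cases h1 : s < t
    · simp [h0, h1, h1.trans ht.2]
    all_goals simp [h0, h1]
  have hparts : ∫ x, (p x : ℂ) * w x * (starRingEnd ℂ) (u x) ∂mu01 =
      - ∫ t, h t * ∫ s, (pk 0 (t - s) : ℂ) * w s ∂mu01 ∂mu01 := by
    have hWc := (ac_integral hwi).continuousOn
    have i1 : IntervalIntegrable (fun x => w x * v x) volume 0 1 := hwi.mul_continuousOn hvc.continuousOn
    have i2 : IntervalIntegrable (fun x => (∫ s in (0:ℝ)..x, w s) * h x) volume 0 1 :=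
      hhi.continuousOn_mul hWc
    have := ibp (F := fun x => ∫ s in (0:ℝ)..x, w s) zero_le_one hwi hhi (by simp) hvh
    rw [intervalIntegral.integral_add i1 i2, hv1, intervalIntegral.integral_same, mul_zero, zero_mul,
      sub_zero, intervalIntegral.integral_of_le zero_le_one, intervalIntegral.integral_of_le zero_le_one,
      integral_Ioc_eq_integral_Ioo, integral_Ioc_eq_integral_Ioo] at this
    rw [← sub_eq_zero, sub_neg_eq_add, ← this]
    congr 1
    · refine integral_congr_ae (Eventually.of_forall fun x => ?_)
      simp only [hv]; ring
    · refine setIntegral_congr_fun measurableSet_Ioo fun t ht => ?_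
      simp only [hW t ht]; ring
  have hpair : (κ : ℂ) * ∫ x, (p x : ℂ) * w x * (starRingEnd ℂ) (u x) ∂mu01 =
      - ∫ t, h t * ∫ y, (pk (-α) (t - y) : ℂ) * f y ∂mu01 ∂mu01 := by
    rw [hparts, mul_neg, ← integral_const_mul]
    congr 1
    refine setIntegral_congr_fun measurableSet_Ioo fun t ht => ?_
    simp only [hA t ht]; ring
  have hb := pairing_bound hα hf hhm hfL hhL
  have b1 := main_bound_refl hα hhm hvh hvc hhL
  have b2 := main_bound hα hf huf hu hfL
  have b3 := gag_mul_le hα hK hM hp hpM hum (v := v) (fun x => rfl)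
  calc _ = ENNReal.ofReal (Real.Gamma (1 + α)) *
      ‖∫ t, h t * ∫ y, (pk (-α) (t - y) : ℂ) * f y ∂mu01 ∂mu01‖ₑ := by
        have hpair' := congrArg enorm hpair
        rw [enorm_neg, enorm_mul] at hpair'
        rw [← hpair', ENNReal.ofReal_mul hG.le, mul_assoc,
          ← ofReal_norm (κ : ℂ), Complex.norm_real, Real.norm_of_nonneg hκ.le]
    _ ≤ ENNReal.ofReal (cA α) * gag α v + ENNReal.ofReal (cA α) * gag α u := hb.trans (add_le_add b1 b2)
    _ ≤ ENNReal.ofReal (cA α) * (ENNReal.ofReal (2 * M ^ 2) * gag α u +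
      ENNReal.ofReal (4 * K ^ 2 / (1 - α)) * ∫⁻ x, ‖u x‖ₑ ^ 2 ∂mu01) +
        ENNReal.ofReal (cA α) * gag α u := by gcongr
    _ ≤ ENNReal.ofReal (cA α) * (ENNReal.ofReal (cB α K M) * (∫⁻ x, ‖u x‖ₑ ^ 2 ∂mu01 + gag α u)) := by
        rw [← mul_add]
        refine mul_le_mul_right ?_ _
        unfold cB
        rw [ENNReal.ofReal_add (by positivity) (by positivity), ENNReal.ofReal_add (by positivity) (by positivity),
          ENNReal.ofReal_one]
        generalize ENNReal.ofReal (2 * M ^ 2) = a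
        generalize ENNReal.ofReal (4 * K ^ 2 / (1 - α)) = b
        generalize gag α u = g
        generalize ∫⁻ x, ‖u x‖ₑ ^ 2 ∂mu01 = n
        -- The right-hand side is the left-hand side plus nonnegative terms.
        have : (1 + a + b) * (n + g) = (a * g + b * n + g) + (n + a * n + b * g) := by ring
        rw [this]
        exact le_self_add
    _ = _ := by rw [← mul_assoc, ← ENNReal.ofReal_mul hcA.le]

/-! ### Transfer to the stated norms -/

lemma intervalIntegral_eq_mu01 {E : Type*} [NormedAddCommGroup E] [NormedSpace ℝ E] (F : ℝ → E) :
    ∫ x in (0:ℝ)..1, F x = ∫ x, F x ∂mu01 := by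
  rw [intervalIntegral.integral_of_le zero_le_one, integral_Ioc_eq_integral_Ioo]

lemma L2normSq_eq {u φ : ℝ → ℂ} (hφ : Measurable φ) (h : ∀ x ∈ Icc (0:ℝ) 1, u x = φ x) :
    L2normSq u = (∫⁻ x, ‖φ x‖ₑ ^ 2 ∂mu01).toReal := by
  unfold L2normSq
  rw [intervalIntegral_eq_mu01]
  have : ∫ x, ‖u x‖ ^ 2 ∂mu01 = ∫ x, ‖φ x‖ ^ 2 ∂mu01 :=
    setIntegral_congr_fun measurableSet_Ioo fun x hx => by simp only [h x ⟨hx.1.le, hx.2.le⟩]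
  rw [this, integral_eq_lintegral_of_nonneg_ae (Eventually.of_forall fun x => by positivity)
    (by fun_prop)]
  congr 1
  refine lintegral_congr fun x => ?_
  rw [ENNReal.ofReal_pow (norm_nonneg _), ofReal_norm]

/-- For a function equal on `[0, 1]` to a measurable `φ` with finite `gag α φ`, the iterated Bochner
integral defining the seminorm is the real value of `gag α φ`. Finiteness makes the integral honest. -/
lemma sobSeminormSq_eq {α : ℝ} {u φ : ℝ → ℂ} (hφ : Measurable φ)
    (h : ∀ x ∈ Icc (0:ℝ) 1, u x = φ x) (hfin : gag α φ ≠ ∞) :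
    sobSeminormSq ((1 + α) / 2) u = (gag α φ).toReal := by
  unfold sobSeminormSq
  simp only [intervalIntegral_eq_mu01]
  have h1 : ∀ x ∈ Ioo (0:ℝ) 1, ∫ y, ‖u x - u y‖ ^ 2 / |x - y| ^ (1 + 2 * ((1 + α) / 2)) ∂mu01 =
      (∫⁻ y, ‖φ x - φ y‖ₑ ^ 2 * ENNReal.ofReal (|x - y| ^ (-(2 + α))) ∂mu01).toReal := by
    intro x hx
    have e : ∫ y, ‖u x - u y‖ ^ 2 / |x - y| ^ (1 + 2 * ((1 + α) / 2)) ∂mu01 =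
        ∫ y, ‖φ x - φ y‖ ^ 2 * |x - y| ^ (-(2 + α)) ∂mu01 := by
      refine setIntegral_congr_fun measurableSet_Ioo fun y hy => ?_
      simp only [h x ⟨hx.1.le, hx.2.le⟩, h y ⟨hy.1.le, hy.2.le⟩]
      rw [Real.rpow_neg (abs_nonneg _), div_eq_mul_inv]
      congr 3; ring
    rw [e, integral_eq_lintegral_of_nonneg_ae (Eventually.of_forall fun y => by positivity)
      (by fun_prop)]
    congr 1
    refine lintegral_congr fun y => ?_
    rw [ENNReal.ofReal_mul (by positivity), ENNReal.ofReal_pow (norm_nonneg _), ofReal_norm]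
  rw [mu01, setIntegral_congr_fun measurableSet_Ioo h1]
  have hm : Measurable fun x => ∫⁻ y, ‖φ x - φ y‖ₑ ^ 2 * ENNReal.ofReal (|x - y| ^ (-(2 + α))) ∂mu01 :=
    Measurable.lintegral_prod_right (by fun_prop)
  exact integral_toReal hm.aemeasurable (ae_lt_top hm hfin)

/-- A square-integrable function has a measurable representative on the unit interval. -/
lemma sqIntOn_rep {w : ℝ → ℂ} (hw : SqIntOn w) :
    ∃ w0 : ℝ → ℂ, Measurable w0 ∧ w =ᵐ[mu01] w0 ∧ ∫⁻ t, ‖w0 t‖ₑ ^ 2 ∂mu01 ≠ ∞ := by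
  obtain ⟨h1, h2⟩ := hw
  have h1' : AEStronglyMeasurable w mu01 := h1.mono_measure (Measure.restrict_mono Ioo_subset_Ioc_self le_rfl)
  have h2' : Integrable (fun x => ‖w x‖ ^ 2) mu01 := h2.mono_set Ioo_subset_Ioc_self
  refine ⟨h1'.mk w, h1'.stronglyMeasurable_mk.measurable, h1'.ae_eq_mk, ?_⟩
  have h3 := (hasFiniteIntegral_iff_enorm.1 h2'.2).ne
  convert h3 using 1
  refine lintegral_congr_ae ?_
  filter_upwards [h1'.ae_eq_mk] with x hx
  rw [← hx, enorm_pow, enorm_norm]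

/-- boundedness of the form (A1 u, u) for A1 u = p (d/dx)D^a u, with a constant
depending only on a, delta, the Lipschitz constant K and the bound M on |p|. -/
theorem statement_9 (α δ K M : ℝ) (hα : α ∈ Set.Ioo (0:ℝ) 1) (hδ : 0 < δ)
    (hK : 0 ≤ K) (hM : 0 ≤ M) :
    ∃ cbar₁ > (0:ℝ),
      ∀ p : ℝ → ℝ, LipschitzOnWith (Real.toNNReal K) p (Set.Icc (0:ℝ) 1) →
        (∀ x ∈ Set.Icc (0:ℝ) 1, δ ≤ p x) → (∀ x ∈ Set.Icc (0:ℝ) 1, |p x| ≤ M) →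
        ∀ u w : ℝ → ℂ, InGraphA α u w →
          ‖∫ x in (0:ℝ)..1, ((p x : ℝ) : ℂ) * w x * (starRingEnd ℂ) (u x)‖ ≤
            cbar₁ * sobNormSq ((1 + α) / 2) u := by
  have hα0 := hα.1
  have h1α : 0 < 1 - α := by linarith [hα.2]
  have hG := Real.Gamma_pos_of_pos (show 0 < 1 + α by linarith)
  have hG0 := Real.Gamma_pos_of_pos hα0
  have hb := ProbabilityTheory.beta_pos hα0 h1α
  have hcA := cA_pos hα
  set κ : ℝ := (Real.Gamma α)⁻¹ * ProbabilityTheory.beta α (1 - α) with hκ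
  have hκ0 : 0 < κ := by positivity
  have hB : 0 < cB α K M := by unfold cB; positivity
  refine ⟨cA α * cB α K M / (Real.Gamma (1 + α) * κ), by positivity, ?_⟩
  intro p hp _ hpM u w ⟨hu1, hw, _, hu⟩
  obtain ⟨q, hq, hpq⟩ := hp.extend_real
  obtain ⟨w0, hw0, hww, hwL⟩ := sqIntOn_rep hw
  -- A measurable representative of the fractional integral, cut off outside `(0,1)`
  set J : ℝ → ℂ := fun x => ((Real.Gamma α)⁻¹ : ℝ) * ∫ s, (pk (α - 1) (x - s) : ℂ) * w0 s ∂mu01 with hJ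
  have hJm : Measurable J := by
    have : StronglyMeasurable fun x : ℝ => ∫ s, (pk (α - 1) (x - s) : ℂ) * w0 s ∂mu01 :=
      StronglyMeasurable.integral_prod_right (f := fun x s : ℝ => (pk (α - 1) (x - s) : ℂ) * w0 s)
        (by simp only [Function.uncurry_def]; exact Measurable.stronglyMeasurable (by fun_prop))
    have := this.measurable
    simp only [hJ]; fun_prop
  set f : ℝ → ℂ := (Ioo (0:ℝ) 1).indicator J with hf
  have hfm : Measurable f := hJm.indicator measurableSet_Ioo
  have hf0 : ∀ x ∈ Ioo (0:ℝ) 1, f x = fracInt α w0 x := by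
    intro x hx
    rw [hf, indicator_of_mem hx, fracInt_eq hα w0 hx]
  have hf1 : ∀ x ∈ Ioo (0:ℝ) 1, f x = fracInt α w x := by
    intro x hx
    rw [hf0 x hx, fracInt_eq hα w0 hx, fracInt_eq hα w hx]
    congr 1
    refine integral_congr_ae ?_
    filter_upwards [hww] with s hs
    rw [hs]
  have hfL : ∫⁻ t, ‖f t‖ₑ ^ 2 ∂mu01 ≠ ∞ := by
    rw [mu01, setLIntegral_congr_fun measurableSet_Ioo (fun x hx => by rw [hf0 x hx])]
    exact fracInt_sq hα hw0 hwL
  have hfi : Integrable f volume := by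
    rw [hf, integrable_indicator_iff measurableSet_Ioo]
    refine Integrable.congr (integrable_of_sq hfm hfL) ?_
    filter_upwards [ae_restrict_mem measurableSet_Ioo] with x hx
    rw [hf, indicator_of_mem hx]
  -- A continuous function on the line which agrees with `u` on `[0, 1]`.
  set φ : ℝ → ℂ := fun x => u 0 + ∫ t in (0:ℝ)..x, f t with hφ
  have hφc : Continuous φ := continuous_const.add (intervalIntegral.continuous_primitive
    (fun a b => hfi.intervalIntegrable) 0)
  have hφu : ∀ x ∈ Icc (0:ℝ) 1, u x = φ x := by
    intro x hx
    rw [hu x hx, hφ]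
    simp only
    rw [intervalIntegral.integral_of_le hx.1, intervalIntegral.integral_of_le hx.1,
      integral_Ioc_eq_integral_Ioo, integral_Ioc_eq_integral_Ioo]
    congr 1
    exact setIntegral_congr_fun measurableSet_Ioo fun t ht => (hf1 t ⟨ht.1, ht.2.trans_le hx.2⟩).symm
  have hφf : ∀ x ∈ Icc (0:ℝ) 1, φ x = φ 0 + ∫ t in (0:ℝ)..x, f t := fun x _ => by simp [hφ]
  have hgag : gag α φ ≠ ∞ := gag_ne_top hα hfm hfi.intervalIntegrable hφf hφc hfL
  have hcore := core hα hK hM hκ0 hq (fun x hx => by rw [← hpq hx]; exact hpM x hx) hφc hfm hw0 hfL hwL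
    hφf (by rw [← hφu 1 (by simp), hu1]) (fun t ht => by
      rw [← abel_inversion hα hw0 hwL ht]
      exact setIntegral_congr_fun measurableSet_Ioo fun y hy => by simp only [hf0 y hy])
  have hL := sq_ne_top_of_continuous hφc
  have hform_eq : ∫ x in (0:ℝ)..1, ((p x : ℝ) : ℂ) * w x * (starRingEnd ℂ) (u x) =
      ∫ x, (q x : ℂ) * w0 x * (starRingEnd ℂ) (φ x) ∂mu01 := by
    rw [intervalIntegral_eq_mu01]
    refine integral_congr_ae ?_
    filter_upwards [hww, ae_restrict_mem measurableSet_Ioo] with x h1 hx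
    rw [h1, hpq ⟨hx.1.le, hx.2.le⟩, hφu x ⟨hx.1.le, hx.2.le⟩]
  rw [sobNormSq, L2normSq_eq hφc.measurable hφu, sobSeminormSq_eq hφc.measurable hφu hgag, hform_eq,
    div_mul_eq_mul_div, le_div_iff₀ (by positivity)]
  have h2 := ENNReal.toReal_mono (ENNReal.mul_ne_top ENNReal.ofReal_ne_top
    (ENNReal.add_ne_top.2 ⟨hL, hgag⟩)) hcore
  rw [ENNReal.toReal_mul, ENNReal.toReal_mul, ENNReal.toReal_ofReal (by positivity),
    ENNReal.toReal_ofReal (by positivity), ENNReal.toReal_add hL hgag, toReal_enorm] at h2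
  linarith
end

section
/- Let α ∈ (0,1), δ > 0, K ≥ 0. Let p : [0,1] → ℝ satisfy p(x) ≥ δ for all x, and suppose q ∈ L^∞(0,1) with |q| ≤ K a.e. and p(x) = p(0) + ∫₀ˣ q(s) ds for all x ∈ [0,1] (so p is Lipschitz with a.e. derivative q). Then there exist ω ≥ 0, ν ∈ (0, π/2) and c > 0 such that for every λ ∈ ℂ with λ ≠ 0 and |arg λ| < π − ν, and every pair (u,w) in the graph of the operator A = (d/dx)D^α, one has c |λ| ‖u‖_{L²(0,1)} ≤ ‖(λ + ω)u − p·w − q·(∫₀^· w(s) ds)‖_{L²(0,1)}. (This is the shifted sectorial resolvent estimate showing that the operator u ↦ (d/dx)(p(x) D^α u) = p·Au + q·D^α u generates an analytic semigroup on L²(0,1).) -/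
/-!
Write `W x = ∫₀ˣ w` and `Z = ∫₀¹ (I^α w) W̄`. Everything rests on the fact that the form `Z` is
sectorial and dominates the norm of `W`: `c ‖W‖² ≤ Re Z` and `|Im Z| ≤ T Re Z` (`frac_sector`).

*The fractional form.* For `Re ρ > 0`, Euler's integral along a ray (`laplace_eq`) represents
`Γ(1-α) ρ^{α-1} (x-p)^{α-1}` as the superposition `∫₀^∞ s^{-α} e^{-sρ(x-p)} ds`. Hence
`ρ^{α-1} I^α w` is, up to positive constants, the average over `s` with weight `s^{-α}` of
`v_s x = ∫₀ˣ e^{-sρ(x-p)} w(p) dp`. The function `v = v_s` solves `v + sρ ∫₀ˣ v = W`, and pairing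
this equation with `v`, when `|ρ| = 1`, gives
`Re (ρ ∫ v W̄) = Re ρ ‖v‖² + (s/2) |∫₀¹ v|² ≥ Re ρ ‖W‖² / (2 (1 + s²))` (`expMem_coercive`).
Integrating in `s` (`subordination`) yields `Re (ρ^α Z) ≥ c ‖W‖²` (`frac_rot`). The choices
`ρ = e^{±iπ/4}` say that `Z` lies in a sector of half-angle less than `π/2`, and that `Re Z`
controls `‖W‖²`.

*The resolvent estimate.* Let `f = (λ + ω) u - p w - q W`. Multiplying by `ū / p` and integrating,
with Green's identity `∫ w ū = - Z̄` (`graph_green`), gives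
`∫ f ū / p = λ m + ζ`, where `m = ∫ |u|² / p` and `ζ = ω m + Z̄ - ∫ q W ū / p`.
By Young's inequality the last integral is at most `Re Z / 2 + ω m / 2` for a suitable `ω`, so `ζ`
lies in a sector `|Im ζ| ≤ S Re ζ`. If `λ` stays away from the opposite sector, then
`|λ m + ζ| ≥ κ |λ| m` (`sector_lower`), and the Cauchy–Schwarz inequality applied to `∫ f ū / p`
finishes the proof.
-/

open MeasureTheory Set Filter

/-! ### Euler's integral along a complex ray -/

lemma laplace_integrable {a : ℝ} (ha : 0 < a) {r : ℂ} (hr : 0 < r.re) :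
    IntegrableOn (fun s : ℝ => ((s ^ (a - 1) : ℝ) : ℂ) * Complex.exp (-(r * s))) (Ioi 0) := by
  have h := integrableOn_rpow_mul_exp_neg_mul_rpow (p := 1) (s := a - 1) (b := r.re)
    (by linarith) one_pos hr
  refine Integrable.mono' h ?_ ?_
  · refine Measurable.aestronglyMeasurable ?_
    fun_prop
  · refine (ae_restrict_iff' measurableSet_Ioi).2 (ae_of_all _ fun s hs => ?_)
    rw [norm_mul, Complex.norm_exp, Complex.norm_real, Real.norm_of_nonneg (Real.rpow_nonneg hs.le _)]
    simp [Real.rpow_one]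

lemma laplace_norm {a : ℝ} {r : ℂ} {s : ℝ} (hs : 0 < s) :
    ‖((s ^ (a - 1) : ℝ) : ℂ) * Complex.exp (-(r * s))‖ = s ^ (a - 1) * Real.exp (-(r.re * s)) := by
  rw [norm_mul, Complex.norm_exp, Complex.norm_real, Real.norm_of_nonneg (Real.rpow_nonneg hs.le _)]
  simp

/-- The Laplace transform of `s ^ (a - 1)` is holomorphic in the right half-plane. The value of the
derivative is left unspecified: homogeneity determines it in `laplace_eq`. -/
lemma laplace_hasDerivAt {a : ℝ} (ha : 0 < a) {r : ℂ} (hr : 0 < r.re) :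
    ∃ D : ℂ, HasDerivAt (fun r : ℂ => ∫ s in Ioi (0:ℝ),
      ((s ^ (a - 1) : ℝ) : ℂ) * Complex.exp (-(r * s))) D r := by
  have hb := laplace_integrable (a := a + 1) (by linarith) (r := ((r.re / 2 : ℝ) : ℂ))
    (by simpa using hr)
  have := hasDerivAt_integral_of_dominated_loc_of_deriv_le (μ := volume.restrict (Ioi (0:ℝ)))
    (F := fun (r : ℂ) (s : ℝ) => ((s ^ (a - 1) : ℝ) : ℂ) * Complex.exp (-(r * s)))
    (F' := fun (r : ℂ) (s : ℝ) => ((s ^ (a - 1) : ℝ) : ℂ) * (Complex.exp (-(r * s)) * (-(1 * s))))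
    (x₀ := r) (s := {z | r.re / 2 < z.re})
    (bound := fun s : ℝ => ‖((s ^ ((a + 1) - 1) : ℝ) : ℂ) *
      Complex.exp (-(((r.re / 2 : ℝ) : ℂ) * s))‖)
    ((isOpen_lt continuous_const Complex.continuous_re).mem_nhds (by simp; linarith))
    (Eventually.of_forall fun z => Measurable.aestronglyMeasurable (by fun_prop))
    (laplace_integrable ha hr)
    (Measurable.aestronglyMeasurable (by fun_prop)) ?_ hb.norm ?_
  · exact ⟨_, this.2⟩
  · refine (ae_restrict_iff' measurableSet_Ioi).2 (ae_of_all _ fun s (hs : 0 < s) z hz => ?_)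
    rw [laplace_norm hs, ← mul_assoc, norm_mul, laplace_norm hs, add_sub_cancel_right]
    have h1 : s ^ a = s ^ (a - 1) * s := by
      rw [← Real.rpow_add_one hs.ne']; simp
    have h2 : ‖(-(1 * (s:ℂ)))‖ = s := by simp [abs_of_pos hs]
    rw [h1, h2, Complex.ofReal_re]
    have h3 : Real.exp (-(z.re * s)) ≤ Real.exp (-(r.re / 2 * s)) :=
      Real.exp_le_exp.2 (by have : r.re / 2 < z.re := hz; nlinarith)
    have h4 := Real.rpow_nonneg hs.le (a - 1)
    have h5 : 0 ≤ s ^ (a-1) * s := by positivity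
    nlinarith [mul_le_mul_of_nonneg_left h3 h5]
  · refine ae_of_all _ fun s z _ => ?_
    have h1 : HasDerivAt (fun z : ℂ => -(z * s)) (-(1 * s)) z :=
      ((hasDerivAt_id z).mul_const _).neg
    exact (h1.cexp).const_mul _

/-- Homogeneity of degree `-a` of the Laplace transform of `s ^ (a - 1)` under positive dilations. -/
lemma laplace_scale {a : ℝ} (r : ℂ) {t : ℝ} (ht : 0 < t) :
    ∫ s in Ioi (0:ℝ), ((s ^ (a - 1) : ℝ) : ℂ) * Complex.exp (-((r * t) * s)) =
    ((t ^ (-a) : ℝ) : ℂ) * ∫ s in Ioi (0:ℝ), ((s ^ (a - 1) : ℝ) : ℂ) * Complex.exp (-(r * s)) := by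
  have h := integral_comp_mul_left_Ioi
    (fun s : ℝ => ((s ^ (a - 1) : ℝ) : ℂ) * Complex.exp (-(r * s))) 0 ht
  rw [mul_zero] at h
  have h2 : ∀ s ∈ Ioi (0:ℝ), ((s ^ (a - 1) : ℝ) : ℂ) * Complex.exp (-((r * t) * s)) =
      ((t ^ (1 - a) : ℝ) : ℂ) *
        ((((t * s) ^ (a - 1) : ℝ) : ℂ) * Complex.exp (-(r * ((t * s : ℝ) : ℂ)))) := by
    intro s (hs : 0 < s)
    rw [Real.mul_rpow ht.le hs.le, ← mul_assoc, ← Complex.ofReal_mul, ← mul_assoc,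
      ← Real.rpow_add ht]
    simp [mul_assoc]
  rw [setIntegral_congr_fun measurableSet_Ioi h2, integral_const_mul, h, ← Complex.coe_smul,
    smul_eq_mul, ← mul_assoc, ← Complex.ofReal_mul, ← Real.rpow_neg_one t, ← Real.rpow_add ht]
  congr 3; ring_nf

/-- Euler's integral `∫₀^∞ s^{a-1} e^{-rs} ds = Γ(a) r^{-a}` for complex `r` with positive real part.
Homogeneity gives `z Φ'(z) = -a Φ(z)` for the left-hand side `Φ`, so `z^a Φ(z)` is constant on the
half-plane, and its value is read off at `z = 1`. -/
lemma laplace_eq {a : ℝ} (ha : 0 < a) {r : ℂ} (hr : 0 < r.re) :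
    ∫ s in Ioi (0:ℝ), ((s ^ (a - 1) : ℝ) : ℂ) * Complex.exp (-(r * s)) =
      (Real.Gamma a : ℂ) * Complex.exp (-(a * Complex.log r)) := by
  set Φ : ℂ → ℂ := fun r => ∫ s in Ioi (0:ℝ),
    ((s ^ (a - 1) : ℝ) : ℂ) * Complex.exp (-(r * s)) with hΦ
  have hslit : ∀ z : ℂ, 0 < z.re → z ∈ Complex.slitPlane := fun z hz => Or.inl hz
  have hD : ∀ z : ℂ, 0 < z.re → HasDerivAt Φ (-(a * Φ z / z)) z := by
    intro z hz
    obtain ⟨D, hD⟩ := laplace_hasDerivAt ha hz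
    have hz0 : z ≠ 0 := by rintro rfl; simp at hz
    -- differentiate `t ↦ Φ (z t)` at `t = 1` in two ways
    have h1 : HasDerivAt (fun t : ℝ => Φ (z * t)) (D * (z * 1)) 1 := by
      have hl : HasDerivAt (fun t : ℝ => z * (t:ℂ)) (z * 1) 1 :=
        (HasDerivAt.ofReal_comp (hasDerivAt_id (1:ℝ))).const_mul z
      refine HasDerivAt.comp (1:ℝ) (h₂ := Φ) ?_ hl
      simpa using hD
    have h2 : HasDerivAt (fun t : ℝ => ((t ^ (-a) : ℝ) : ℂ) * Φ z) (((-a : ℝ) : ℂ) * Φ z) 1 := by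
      have := (Real.hasDerivAt_rpow_const (x := 1) (p := -a) (Or.inl one_ne_zero)).ofReal_comp
      simpa using this.mul_const (Φ z)
    have h3 : HasDerivAt (fun t : ℝ => Φ (z * t)) (((-a : ℝ) : ℂ) * Φ z) 1 := by
      refine h2.congr_of_eventuallyEq ?_
      filter_upwards [lt_mem_nhds (show (0:ℝ) < 1 by norm_num)] with t ht
      exact laplace_scale z ht
    have h4 := h1.unique h3
    have h5 : D = -(a * Φ z / z) := by
      field_simp
      push_cast at h4
      linear_combination h4
    rw [← h5]; exact hD
  have hconst : ∀ z ∈ {z : ℂ | 0 < z.re}, ∀ z' ∈ {z : ℂ | 0 < z.re},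
      Φ z * Complex.exp (a * Complex.log z) = Φ z' * Complex.exp (a * Complex.log z') := by
    intro z hz z' hz'
    have hd : ∀ x ∈ {z : ℂ | 0 < z.re}, HasDerivAt (fun z => Φ z * Complex.exp (a * Complex.log z)) 0 x := by
      intro x hx
      have hx0 : x ≠ 0 := by rintro rfl; simp at hx
      have := (hD x hx).mul (((Complex.hasDerivAt_log (hslit x hx)).const_mul (a:ℂ)).cexp)
      refine this.congr_deriv ?_
      field_simp; ring
    have hconv : Convex ℝ {z : ℂ | 0 < z.re} := convex_halfSpace_re_gt 0
    have hopen : IsOpen {z : ℂ | 0 < z.re} := isOpen_lt continuous_const Complex.continuous_re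
    exact (hopen.is_const_of_deriv_eq_zero hconv.isPreconnected
      (fun x hx => (hd x hx).differentiableAt.differentiableWithinAt)
      (fun x hx => (hd x hx).deriv) hz hz')
  have h1 : Φ 1 = Real.Gamma a := by
    have := Real.integral_rpow_mul_exp_neg_mul_Ioi ha one_pos
    simp only [one_mul, div_one, Real.one_rpow] at this
    rw [← this, hΦ]
    simp only [one_mul]
    rw [← integral_complex_ofReal]
    simp
  have h2 := hconst r hr 1 (by simp)
  rw [h1] at h2
  simp only [Complex.log_one, mul_zero, Complex.exp_zero, mul_one] at h2
  change Φ r = _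
  rw [← h2, mul_assoc, ← Complex.exp_add]
  simp

/-- Fubini on the triangle `0 < x < t ≤ b`. -/
lemma integral_swap_tri {b : ℝ} (hb : 0 ≤ b) {f g : ℝ → ℂ} (hf : IntegrableOn f (Ioc 0 b))
    (hg : IntegrableOn g (Ioc 0 b)) :
    ∫ x in (0:ℝ)..b, f x * ∫ t in x..b, g t = ∫ t in (0:ℝ)..b, (∫ x in (0:ℝ)..t, f x) * g t := by
  set μ := volume.restrict (Ioc 0 b)
  have hi : Integrable (Function.uncurry fun x t : ℝ =>
      (if x < t then f x * g t else 0)) (μ.prod μ) := by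
    have h := (Integrable.mul_prod hf hg).indicator
      (measurableSet_lt measurable_fst measurable_snd)
    refine h.congr (ae_of_all _ fun z => ?_)
    simp [indicator, Function.uncurry]
  have hsw := integral_integral_swap hi
  rw [intervalIntegral.integral_of_le hb, intervalIntegral.integral_of_le hb]
  refine Eq.trans ?_ (hsw.trans ?_)
  · refine setIntegral_congr_fun measurableSet_Ioc fun x hx => ?_
    rw [intervalIntegral.integral_of_le hx.2, ← integral_const_mul,
      show (∫ t, (if x < t then f x * g t else 0) ∂μ)
        = ∫ t, (Ioi x).indicator (fun t => f x * g t) t ∂μ by rfl,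
      integral_indicator measurableSet_Ioi, Measure.restrict_restrict measurableSet_Ioi]
    congr 2
    ext t; simp; grind
  · refine setIntegral_congr_fun measurableSet_Ioc fun t ht => ?_
    rw [intervalIntegral.integral_of_le ht.1.le, ← integral_mul_const,
      show (∫ x, (if x < t then f x * g t else 0) ∂μ)
        = ∫ x, (Iio t).indicator (fun x => f x * g t) x ∂μ by rfl,
      integral_indicator measurableSet_Iio, Measure.restrict_restrict measurableSet_Iio,
      integral_Ioc_eq_integral_Ioo]
    congr 2
    ext x; simp; grind

/-! ### The exponential memory kernel -/

/-- The convolution `∫₀ˣ e^{-r(x-p)} w(p) dp` of `w` with a decaying exponential; it solves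
`v' + r v = w`, `v(0) = 0`. -/
noncomputable def expMem (r : ℂ) (w : ℝ → ℂ) (x : ℝ) : ℂ :=
  ∫ p in (0:ℝ)..x, Complex.exp (-(r * ((x - p : ℝ) : ℂ))) * w p

lemma exp_mul_intervalIntegrable {w : ℝ → ℂ} (hw : Integrable w) (r : ℂ) (a b : ℝ) :
    IntervalIntegrable (fun p : ℝ => Complex.exp (r * p) * w p) volume a b :=
  hw.intervalIntegrable.continuousOn_mul (by fun_prop)

lemma expMem_eq (r : ℂ) (w : ℝ → ℂ) (x : ℝ) :
    expMem r w x = Complex.exp (-(r * x)) * ∫ p in (0:ℝ)..x, Complex.exp (r * p) * w p := by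
  rw [expMem, ← intervalIntegral.integral_const_mul]
  congr 1; ext p
  rw [← mul_assoc, ← Complex.exp_add]
  congr 2; push_cast; ring

lemma expMem_continuous {w : ℝ → ℂ} (hw : Integrable w) (r : ℂ) : Continuous (expMem r w) := by
  rw [show expMem r w = _ from funext (expMem_eq r w)]
  exact (by fun_prop : Continuous fun x : ℝ => Complex.exp (-(r * x))).mul
    (intervalIntegral.continuous_primitive (exp_mul_intervalIntegrable hw r) 0)

/-- The integrated form `v + r ∫₀ˣ v = ∫₀ˣ w` of the equation `v' + r v = w`, which makes sense for
merely integrable `w`. -/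
lemma expMem_ode {w : ℝ → ℂ} (hw : Integrable w) {r : ℂ} (hr : r ≠ 0) {x : ℝ} (hx : 0 ≤ x) :
    ∫ p in (0:ℝ)..x, w p = expMem r w x + r * ∫ t in (0:ℝ)..x, expMem r w t := by
  have h := integral_swap_tri hx (exp_mul_intervalIntegrable hw r 0 x).1
    (g := fun t : ℝ => Complex.exp (-r * t))
    ((by fun_prop : Continuous fun t : ℝ => Complex.exp (-r * t)).integrableOn_Ioc)
  have h1 : ∀ t : ℝ, (∫ p in (0:ℝ)..t, Complex.exp (r * p) * w p) * Complex.exp (-r * t)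
      = expMem r w t := by
    intro t; rw [expMem_eq, mul_comm, neg_mul]
  simp_rw [h1] at h
  rw [← h, expMem_eq, ← intervalIntegral.integral_const_mul, ← intervalIntegral.integral_const_mul,
    ← intervalIntegral.integral_add]
  · congr 1; ext p
    rw [integral_exp_mul_complex (neg_ne_zero.2 hr)]
    have : Complex.exp (r * p) * Complex.exp (-r * p) = 1 := by
      rw [← Complex.exp_add]; simp
    rw [neg_mul] at this ⊢
    field_simp
    linear_combination (-w p) * this
  · exact (exp_mul_intervalIntegrable hw r 0 x).const_mul _
  · refine IntervalIntegrable.const_mul ?_ _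
    refine (exp_mul_intervalIntegrable hw r 0 x).mul_continuousOn ?_
    have : ∀ p : ℝ, ∫ t in p..x, Complex.exp (-r * t) =
      (Complex.exp (-r * x) - Complex.exp (-r * p)) / (-r) :=
      fun p => integral_exp_mul_complex (neg_ne_zero.2 hr)
    simp_rw [this]
    fun_prop

/-- The energy estimate at a fixed decay rate. With `W = ∫₀ˣ w` and `y = ∫₀ˣ v`, the equation
`W = v + sρ y` and `|ρ| = 1` give `Re (ρ v W̄) = Re ρ |v|² + (s/2) (|y|²)'`; moreover `‖W‖²` is at
most `2 (1 + s²) ‖v‖²`. -/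
lemma expMem_coercive {w : ℝ → ℂ} (hw : Integrable w) {ρ : ℂ} (hρ : 0 < ρ.re) (hρ1 : ‖ρ‖ = 1)
    {s : ℝ} (hs : 0 < s) :
    ρ.re / (2 * (1 + s ^ 2)) * ∫ x in (0:ℝ)..1, ‖∫ p in (0:ℝ)..x, w p‖ ^ 2 ≤
      (ρ * ∫ x in (0:ℝ)..1, expMem (s * ρ) w x * (starRingEnd ℂ) (∫ p in (0:ℝ)..x, w p)).re := by
  set v := expMem (s * ρ) w with hv
  have hρ0 : ρ ≠ 0 := by rintro rfl; simp at hρ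
  have hr : (s:ℂ) * ρ ≠ 0 := mul_ne_zero (by exact_mod_cast hs.ne') hρ0
  have hvc : Continuous v := expMem_continuous hw _
  set y : ℝ → ℂ := fun x => ∫ t in (0:ℝ)..x, v t with hy
  have hyd : ∀ x, HasDerivAt y (v x) x := fun x =>
    intervalIntegral.integral_hasDerivAt_right (hvc.intervalIntegrable _ _)
      (hvc.stronglyMeasurableAtFilter _ _) hvc.continuousAt
  have hyc : Continuous y := continuous_iff_continuousAt.2 fun x => (hyd x).continuousAt
  have hW : ∀ x ∈ uIcc (0:ℝ) 1, ∫ p in (0:ℝ)..x, w p = v x + s * ρ * y x := by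
    intro x hx
    rw [uIcc_of_le zero_le_one] at hx
    exact expMem_ode hw hr hx.1
  have hre : ∀ x, (ρ * (v x * (starRingEnd ℂ) (v x + s * ρ * y x))).re
      = ρ.re * ‖v x‖ ^ 2 + s / 2 * (2 * inner ℝ (y x) (v x)) := by
    intro x
    have h1 : ρ.re ^ 2 + ρ.im ^ 2 = 1 := by
      have := Complex.sq_norm ρ
      rw [hρ1, Complex.normSq_apply] at this; linarith
    rw [Complex.sq_norm, Complex.normSq_apply, Complex.inner]
    simp only [Complex.mul_re, Complex.mul_im, Complex.conj_re, Complex.conj_im, Complex.add_re,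
      Complex.add_im, Complex.ofReal_re, Complex.ofReal_im]
    linear_combination s * ((v x).re * (y x).re + (v x).im * (y x).im) * h1
  have hint : ∫ x in (0:ℝ)..1, 2 * inner ℝ (y x) (v x) = ‖y 1‖ ^ 2 := by
    rw [intervalIntegral.integral_eq_sub_of_hasDerivAt (f := fun x => ‖y x‖ ^ 2)]
    · simp [hy]
    · exact fun x _ => (hyd x).norm_sq
    · exact (by fun_prop : Continuous fun x => 2 * inner ℝ (y x) (v x)).intervalIntegrable _ _
  have hR : (ρ * ∫ x in (0:ℝ)..1, v x * (starRingEnd ℂ) (∫ p in (0:ℝ)..x, w p)).re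
      = ρ.re * (∫ x in (0:ℝ)..1, ‖v x‖ ^ 2) + s / 2 * ‖y 1‖ ^ 2 := by
    rw [intervalIntegral.integral_congr (g := fun x => v x * (starRingEnd ℂ) (v x + s * ρ * y x))
      (fun x hx => by simp only [hW x hx]), ← intervalIntegral.integral_const_mul]
    have hc : Continuous fun x => ρ * (v x * (starRingEnd ℂ) (v x + s * ρ * y x)) :=
      continuous_const.mul (hvc.mul (Complex.continuous_conj.comp (by fun_prop)))
    have := Complex.reCLM.intervalIntegral_comp_comm (hc.intervalIntegrable (μ := volume) 0 1)
    simp only [Complex.reCLM_apply] at this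
    rw [← this]
    simp_rw [hre]
    rw [intervalIntegral.integral_add, intervalIntegral.integral_const_mul,
      intervalIntegral.integral_const_mul, hint]
    · exact (by fun_prop : Continuous fun x => ρ.re * ‖v x‖ ^ 2).intervalIntegrable _ _
    · exact (by fun_prop : Continuous fun x =>
        s / 2 * (2 * inner ℝ (y x) (v x))).intervalIntegrable _ _
  rw [hR]
  have hyv : ∀ x ∈ Icc (0:ℝ) 1, ‖y x‖ ^ 2 ≤ ∫ t in (0:ℝ)..1, ‖v t‖ ^ 2 := by
    intro x hx
    set N := ∫ t in (0:ℝ)..1, ‖v t‖ ^ 2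
    set M := ∫ t in (0:ℝ)..1, ‖v t‖ with hM
    have h1 : ‖y x‖ ≤ M := by
      refine (intervalIntegral.norm_integral_le_integral_norm hx.1).trans ?_
      exact intervalIntegral.integral_mono_interval le_rfl hx.1 hx.2
        (ae_of_all _ fun t => norm_nonneg _) (hvc.norm.intervalIntegrable _ _)
    -- `M ^ 2 ≤ N` because the variance of `‖v‖` is nonnegative
    have h2 : 0 ≤ ∫ t in (0:ℝ)..1, (‖v t‖ - M) ^ 2 :=
      intervalIntegral.integral_nonneg zero_le_one fun t _ => sq_nonneg _
    have h3 : ∫ t in (0:ℝ)..1, (‖v t‖ - M) ^ 2 = N - 2 * M * M + M ^ 2 := by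
      have : ∀ t, (‖v t‖ - M) ^ 2 = ‖v t‖ ^ 2 - 2 * M * ‖v t‖ + M ^ 2 := fun t => by ring
      simp_rw [this]
      rw [intervalIntegral.integral_add, intervalIntegral.integral_sub,
        intervalIntegral.integral_const_mul]
      · simp [N, ← hM]
      all_goals exact Continuous.intervalIntegrable (by fun_prop) _ _
    have h4 := norm_nonneg (y x)
    nlinarith
  set N := ∫ t in (0:ℝ)..1, ‖v t‖ ^ 2 with hN
  have hWN : ∫ x in (0:ℝ)..1, ‖∫ p in (0:ℝ)..x, w p‖ ^ 2 ≤ 2 * (1 + s ^ 2) * N := by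
    have hb : ∫ x in (0:ℝ)..1, ‖∫ p in (0:ℝ)..x, w p‖ ^ 2 ≤
        ∫ x in (0:ℝ)..1, (2 * ‖v x‖ ^ 2 + 2 * s ^ 2 * N) := by
      refine intervalIntegral.integral_mono_on zero_le_one ?_ ?_ fun x hx => ?_
      · exact Continuous.intervalIntegrable
          ((intervalIntegral.continuous_primitive (fun a b => hw.intervalIntegrable) 0).norm.pow 2) _ _
      · exact Continuous.intervalIntegrable (by fun_prop) _ _
      · rw [hW x (by rwa [uIcc_of_le zero_le_one])]
        have h1 := norm_add_le (v x) (s * ρ * y x)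
        have h2 : ‖(s:ℂ) * ρ * y x‖ = s * ‖y x‖ := by
          rw [norm_mul, norm_mul, hρ1, Complex.norm_real, Real.norm_of_nonneg hs.le, mul_one]
        rw [h2] at h1
        have h3 := hyv x hx
        have h4 : ‖v x + s * ρ * y x‖ ^ 2 ≤ (‖v x‖ + s * ‖y x‖) ^ 2 := by gcongr
        nlinarith [sq_nonneg (‖v x‖ - s * ‖y x‖), mul_le_mul_of_nonneg_left h3 (sq_nonneg s)]
    refine hb.trans (le_of_eq ?_)
    rw [intervalIntegral.integral_add, intervalIntegral.integral_const_mul]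
    · simp [← hN]; ring
    all_goals exact Continuous.intervalIntegrable (by fun_prop) _ _
  have h5 : ρ.re / (2 * (1 + s ^ 2)) * ∫ x in (0:ℝ)..1, ‖∫ p in (0:ℝ)..x, w p‖ ^ 2 ≤ ρ.re * N := by
    rw [div_mul_eq_mul_div, div_le_iff₀ (by positivity)]
    nlinarith [mul_le_mul_of_nonneg_left hWN hρ.le]
  have : 0 ≤ s / 2 * ‖y 1‖ ^ 2 := by positivity
  linarith

/-! ### Subordination of the fractional kernel to exponentials -/

lemma integral_tri_slice {x : ℝ} (hx : x ∈ Ioc (0:ℝ) 1) (f : ℝ → ℂ) :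
    ∫ p in Ioc (0:ℝ) 1, (if p < x then f p else 0) = ∫ p in (0:ℝ)..x, f p := by
  rw [intervalIntegral.integral_of_le hx.1.le,
    show (∫ p in Ioc (0:ℝ) 1, (if p < x then f p else 0))
      = ∫ p in Ioc (0:ℝ) 1, (Iio x).indicator f p by rfl,
    integral_indicator measurableSet_Iio, Measure.restrict_restrict measurableSet_Iio,
    integral_Ioc_eq_integral_Ioo]
  congr 2
  ext t; simp; grind

/-- The integrand, at `z = (x, p)` and rate `s`, of the triple integral
`∫∫∫_{p < x} w(p) B(x) s^{a-1} e^{-sρ(x-p)}`; integrating over `s` first or last gives the two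
sides of `subordination`. -/
noncomputable def kerF (a : ℝ) (ρ : ℂ) (w B : ℝ → ℂ) (z : ℝ × ℝ) (s : ℝ) : ℂ :=
  if z.2 < z.1 then w z.2 * B z.1 *
    (((s ^ (a - 1) : ℝ) : ℂ) * Complex.exp (-((ρ * ((z.1 - z.2 : ℝ) : ℂ)) * s))) else 0

/-- Absolute integrability of the triple integral: integrating the norm over `s` leaves a multiple of
`|w(p)| |B(x)| (x-p)^{-a}`, which is integrable because `w ∈ L¹`, `B` is bounded and `a < 1`. -/
lemma kerF_integrable {a : ℝ} (ha : a ∈ Ioo (0:ℝ) 1) {ρ : ℂ} (hρ : 0 < ρ.re) {w B : ℝ → ℂ}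
    (hw : Integrable w) (hB : Continuous B) :
    Integrable (Function.uncurry (kerF a ρ w B))
      (((volume.restrict (Ioc (0:ℝ) 1)).prod (volume.restrict (Ioc (0:ℝ) 1))).prod
        (volume.restrict (Ioi (0:ℝ)))) := by
  set μ := volume.restrict (Ioc (0:ℝ) 1) with hμ
  obtain ⟨M, hM⟩ := (isCompact_Icc (a := (0:ℝ)) (b := 1)).exists_bound_of_continuousOn
    hB.continuousOn
  have hmeas : AEStronglyMeasurable (Function.uncurry (kerF a ρ w B))
      ((μ.prod μ).prod (volume.restrict (Ioi (0:ℝ)))) := by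
    have h1 : AEStronglyMeasurable (fun z : (ℝ × ℝ) × ℝ => w z.1.2 * B z.1.1)
        ((μ.prod μ).prod (volume.restrict (Ioi (0:ℝ)))) := by
      have hw' : AEStronglyMeasurable w μ := hw.aestronglyMeasurable.restrict
      exact ((hw'.comp_snd (μ := μ)).comp_fst).mul
        (hB.comp (by fun_prop)).aestronglyMeasurable
    have h2 : Measurable (fun z : (ℝ × ℝ) × ℝ => (((z.2 ^ (a - 1) : ℝ) : ℂ) *
        Complex.exp (-((ρ * ((z.1.1 - z.1.2 : ℝ) : ℂ)) * z.2)))) := by fun_prop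
    have h3 := (h1.mul h2.aestronglyMeasurable).indicator
      (measurableSet_lt (measurable_fst.snd) (measurable_fst.fst) :
        MeasurableSet {z : (ℝ × ℝ) × ℝ | z.1.2 < z.1.1})
    exact h3
  have hslice : ∀ z : ℝ × ℝ, z.2 < z.1 → 0 < (ρ * ((z.1 - z.2 : ℝ) : ℂ)).re := by
    intro z hz
    rw [Complex.re_mul_ofReal]
    exact mul_pos hρ (sub_pos.2 hz)
  rw [integrable_prod_iff hmeas]
  refine ⟨ae_of_all _ fun z => ?_, ?_⟩
  · by_cases hz : z.2 < z.1
    · simp only [Function.uncurry, kerF, if_pos hz]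
      exact (laplace_integrable ha.1 (hslice z hz)).const_mul _
    · simp only [Function.uncurry, kerF, if_neg hz]
      exact integrable_zero _ _ _
  · set κ : ℝ → ℝ := (Ioc (0:ℝ) 1).indicator fun t => t ^ (-a)
    have hκ : Integrable κ := by
      rw [integrable_indicator_iff measurableSet_Ioc]
      exact (intervalIntegral.intervalIntegrable_rpow' (by linarith [ha.2])).1
    have hconv : Integrable (fun z : ℝ × ℝ => ‖w z.2‖ * κ (z.1 - z.2)) (μ.prod μ) := by
      have := Integrable.convolution_integrand (ContinuousLinearMap.mul ℝ ℝ)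
        (μ := volume) (ν := volume) hw.norm hκ
      rw [hμ, Measure.prod_restrict]
      exact this.restrict
    have hmem : ∀ᵐ z ∂(μ.prod μ), z ∈ Ioc (0:ℝ) 1 ×ˢ Ioc (0:ℝ) 1 := by
      rw [hμ, Measure.prod_restrict]
      exact ae_restrict_mem (measurableSet_Ioc.prod measurableSet_Ioc)
    refine Integrable.mono' (hconv.const_mul (M * ((1 / ρ.re) ^ a * Real.Gamma a)))
      hmeas.norm.integral_prod_right' ?_
    filter_upwards [hmem] with z hz
    rw [Real.norm_of_nonneg (integral_nonneg fun _ => norm_nonneg _)]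
    have hz1 := hz.1
    have hz2 := hz.2
    have hMz := hM z.1 ⟨hz1.1.le, hz1.2⟩
    have hM0 : 0 ≤ M := (norm_nonneg _).trans hMz
    have hΓ := Real.Gamma_pos_of_pos ha.1
    by_cases hlt : z.2 < z.1
    · have hd : 0 < z.1 - z.2 := sub_pos.2 hlt
      have h1 : ∫ s in Ioi (0:ℝ), ‖Function.uncurry (kerF a ρ w B) (z, s)‖
          = ‖w z.2 * B z.1‖ * ((1 / (ρ.re * (z.1 - z.2))) ^ a * Real.Gamma a) := by
        rw [← Real.integral_rpow_mul_exp_neg_mul_Ioi ha.1 (mul_pos hρ hd), ← integral_const_mul]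
        refine setIntegral_congr_fun measurableSet_Ioi fun s hs => ?_
        simp only [Function.uncurry, kerF, if_pos hlt]
        rw [norm_mul, laplace_norm hs, Complex.re_mul_ofReal]
      have h2 : κ (z.1 - z.2) = (z.1 - z.2) ^ (-a) :=
        indicator_of_mem (show z.1 - z.2 ∈ Ioc (0:ℝ) 1 from ⟨hd, by linarith [hz1.2, hz2.1]⟩) _
      have h3 : (1 / (ρ.re * (z.1 - z.2))) ^ a = (1 / ρ.re) ^ a * (z.1 - z.2) ^ (-a) := by
        rw [Real.rpow_neg hd.le, ← Real.inv_rpow hd.le, ← Real.mul_rpow (by positivity)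
          (by positivity)]
        congr 1; field_simp
      rw [h1, h2, h3, norm_mul]
      have h4 : 0 ≤ (z.1 - z.2) ^ (-a) := Real.rpow_nonneg hd.le _
      have h5 : 0 ≤ (1 / ρ.re) ^ a := by positivity
      calc _ = ‖B z.1‖ * (‖w z.2‖ * ((1 / ρ.re) ^ a * (z.1 - z.2) ^ (-a) * Real.Gamma a)) := by ring
        _ ≤ M * (‖w z.2‖ * ((1 / ρ.re) ^ a * (z.1 - z.2) ^ (-a) * Real.Gamma a)) := by gcongr
        _ = _ := by ring
    · have h1 : ∫ s in Ioi (0:ℝ), ‖Function.uncurry (kerF a ρ w B) (z, s)‖ = 0 := by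
        simp [Function.uncurry, kerF, if_neg hlt]
      rw [h1]
      have : 0 ≤ κ (z.1 - z.2) := indicator_nonneg (fun t ht => Real.rpow_nonneg ht.1.le _) _
      have h5 : 0 ≤ (1 / ρ.re) ^ a := by positivity
      positivity

/-- The pairing of `∫₀ˣ (x-p)^{-a} w(p) dp` with `B` is, up to the factor `Γ(a) ρ^{-a}`, the average
of the pairings of `expMem (s * ρ) w` with `B` under the weight `s^{a-1}`. -/
lemma subordination {a : ℝ} (ha : a ∈ Ioo (0:ℝ) 1) {ρ : ℂ} (hρ : 0 < ρ.re) {w B : ℝ → ℂ}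
    (hw : Integrable w) (hB : Continuous B) :
    IntegrableOn (fun s : ℝ => ((s ^ (a - 1) : ℝ) : ℂ) *
      ∫ x in (0:ℝ)..1, expMem (s * ρ) w x * B x) (Ioi 0) ∧
    ∫ s in Ioi (0:ℝ), ((s ^ (a - 1) : ℝ) : ℂ) * ∫ x in (0:ℝ)..1, expMem (s * ρ) w x * B x =
      (Real.Gamma a : ℂ) * Complex.exp (-(a * Complex.log ρ)) *
        ∫ x in (0:ℝ)..1, (∫ p in (0:ℝ)..x, (((x - p) ^ (-a) : ℝ) : ℂ) * w p) * B x := by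
  have hF := kerF_integrable ha hρ hw hB
  set μ := volume.restrict (Ioc (0:ℝ) 1) with hμ
  have hs : ∀ᵐ s ∂(volume.restrict (Ioi (0:ℝ))), ∫ z, kerF a ρ w B z s ∂(μ.prod μ) =
      ((s ^ (a - 1) : ℝ) : ℂ) * ∫ x in (0:ℝ)..1, expMem (s * ρ) w x * B x := by
    filter_upwards [hF.prod_left_ae] with s hsi
    change Integrable (fun z => kerF a ρ w B z s) _ at hsi
    rw [integral_prod _ hsi, intervalIntegral.integral_of_le zero_le_one, ← integral_const_mul]
    refine setIntegral_congr_fun measurableSet_Ioc fun x hx => ?_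
    simp only [kerF]
    rw [integral_tri_slice hx, expMem, ← intervalIntegral.integral_mul_const,
      ← intervalIntegral.integral_const_mul]
    congr 1; ext p
    have : ρ * ((x - p : ℝ) : ℂ) * s = s * ρ * ((x - p : ℝ) : ℂ) := by ring
    rw [this]; ring
  have hz : ∀ z : ℝ × ℝ, ∫ s in Ioi (0:ℝ), kerF a ρ w B z s =
      if z.2 < z.1 then w z.2 * B z.1 * ((((z.1 - z.2) ^ (-a) : ℝ) : ℂ) *
        ((Real.Gamma a : ℂ) * Complex.exp (-(a * Complex.log ρ)))) else 0 := by
    intro z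
    by_cases h : z.2 < z.1
    · simp only [kerF, if_pos h]
      rw [integral_const_mul, laplace_scale ρ (sub_pos.2 h), laplace_eq ha.1 hρ]
    · simp [kerF, if_neg h]
  refine ⟨hF.integral_prod_right.congr hs, ?_⟩
  rw [← integral_congr_ae hs, ← integral_integral_swap hF]
  have hi := hF.integral_prod_left
  simp only [Function.uncurry, hz] at hi ⊢
  rw [integral_prod _ hi, intervalIntegral.integral_of_le zero_le_one, ← integral_const_mul]
  refine setIntegral_congr_fun measurableSet_Ioc fun x hx => ?_
  simp only
  rw [integral_tri_slice hx, ← intervalIntegral.integral_mul_const,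
      ← intervalIntegral.integral_const_mul]
  congr 1; ext p
  ring

/-! ### Sectoriality and coercivity of the fractional form -/

/-- Coercivity of the fractional form rotated by `ρ^α = ρ · ρ^{-(1-α)}`, obtained by integrating
`expMem_coercive` over all rates `s` with weight `s^{-α}`. -/
lemma frac_rot {α : ℝ} (hα : α ∈ Ioo (0:ℝ) 1) {ρ : ℂ} (hρ : 0 < ρ.re) (hρ1 : ‖ρ‖ = 1) :
    ∃ c > (0:ℝ), ∀ w : ℝ → ℂ, Integrable w →
      c * ∫ x in (0:ℝ)..1, ‖∫ p in (0:ℝ)..x, w p‖ ^ 2 ≤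
        (ρ * Complex.exp (-((1 - α : ℝ) * Complex.log ρ)) * ∫ x in (0:ℝ)..1,
          fracInt α w x * (starRingEnd ℂ) (∫ p in (0:ℝ)..x, w p)).re := by
  have ha : 1 - α ∈ Ioo (0:ℝ) 1 := ⟨by linarith [hα.2], by linarith [hα.1]⟩
  have hΓ := Real.Gamma_pos_of_pos ha.1
  have hΓ' := Real.Gamma_pos_of_pos hα.1
  -- a positive lower bound only needs the rates `1 < s < 2`, away from the singularity of the weight
  have h10 : 0 < ∫ s in (1:ℝ)..2, s ^ ((1 - α) - 1) * (ρ.re / (2 * (1 + s ^ 2))) := by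
    refine intervalIntegral.intervalIntegral_pos_of_pos_on ?_ ?_ (by norm_num)
    · refine ContinuousOn.intervalIntegrable ?_
      rw [uIcc_of_le (by norm_num)]
      refine ContinuousOn.mul (fun s hs => ?_) ?_
      · exact (Real.continuousAt_rpow_const _ _ (Or.inl (by linarith [hs.1]))).continuousWithinAt
      · exact Continuous.continuousOn (continuous_const.div (by fun_prop) fun s => by positivity)
    · intro s hs
      have : 0 < s := by linarith [hs.1]
      positivity
  set c₀ := ∫ s in (1:ℝ)..2, s ^ ((1 - α) - 1) * (ρ.re / (2 * (1 + s ^ 2))) with hc₀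
  refine ⟨c₀ / (Real.Gamma (1 - α) * Real.Gamma α), by positivity, fun w hw => ?_⟩
  set N := ∫ x in (0:ℝ)..1, ‖∫ p in (0:ℝ)..x, w p‖ ^ 2 with hN
  have hN0 : 0 ≤ N := intervalIntegral.integral_nonneg zero_le_one fun _ _ => by positivity
  have hWc : Continuous fun x => (starRingEnd ℂ) (∫ p in (0:ℝ)..x, w p) :=
    Complex.continuous_conj.comp
      (intervalIntegral.continuous_primitive (fun a b => hw.intervalIntegrable) 0)
  obtain ⟨hi, he⟩ := subordination ha hρ hw hWc
  set Z := ∫ x in (0:ℝ)..1, fracInt α w x * (starRingEnd ℂ) (∫ p in (0:ℝ)..x, w p) with hZ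
  have hZ' : ∫ x in (0:ℝ)..1, (∫ p in (0:ℝ)..x, (((x - p) ^ (-(1 - α)) : ℝ) : ℂ) * w p) *
      (starRingEnd ℂ) (∫ p in (0:ℝ)..x, w p) = (Real.Gamma α : ℂ) * Z := by
    rw [hZ, ← intervalIntegral.integral_const_mul]
    congr 1; ext x
    rw [fracInt, if_neg hα.1.ne', Complex.real_smul, show -(1 - α) = α - 1 by ring,
      Complex.ofReal_inv]
    have : (Real.Gamma α : ℂ) ≠ 0 := by exact_mod_cast hΓ'.ne'
    field_simp
  rw [hZ'] at he
  set Q : ℝ → ℂ := fun s => ∫ x in (0:ℝ)..1, expMem (s * ρ) w x *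
    (starRingEnd ℂ) (∫ p in (0:ℝ)..x, w p)
  have hQ : ∀ s > 0, ρ.re / (2 * (1 + s ^ 2)) * N ≤ (ρ * Q s).re := fun s hs =>
    expMem_coercive hw hρ hρ1 hs
  have hre : ∫ s in Ioi (0:ℝ), s ^ ((1 - α) - 1) * (ρ * Q s).re =
      Real.Gamma (1 - α) * Real.Gamma α *
        (ρ * Complex.exp (-((1 - α : ℝ) * Complex.log ρ)) * Z).re := by
    have h1 := Complex.reCLM.integral_comp_comm (hi.const_mul ρ)
    rw [integral_const_mul, he] at h1
    simp only [Complex.reCLM_apply] at h1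
    have h2 : ρ * (((Real.Gamma (1 - α) : ℝ) : ℂ) *
        Complex.exp (-((1 - α : ℝ) * Complex.log ρ)) * (((Real.Gamma α : ℝ) : ℂ) * Z)) =
        ((Real.Gamma (1 - α) * Real.Gamma α : ℝ) : ℂ) *
          (ρ * Complex.exp (-((1 - α : ℝ) * Complex.log ρ)) * Z) := by push_cast; ring
    rw [h2, Complex.re_ofReal_mul] at h1
    rw [← h1]
    congr 1; ext s
    rw [mul_left_comm, Complex.re_ofReal_mul]
  have hint : IntegrableOn (fun s : ℝ => s ^ ((1 - α) - 1) * (ρ * Q s).re) (Ioi 0) := by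
    have := Complex.reCLM.integrable_comp (hi.const_mul ρ)
    refine this.congr (ae_of_all _ fun s => ?_)
    simp only [Complex.reCLM_apply]
    rw [mul_left_comm, Complex.re_ofReal_mul]
  have hsub : Ioc (1:ℝ) 2 ⊆ Ioi 0 := fun s hs => lt_trans one_pos hs.1
  have hlow : c₀ * N ≤ ∫ s in Ioi (0:ℝ), s ^ ((1 - α) - 1) * (ρ * Q s).re := by
    have h1 : ∫ s in Ioc (1:ℝ) 2, s ^ ((1 - α) - 1) * (ρ * Q s).re ≤
        ∫ s in Ioi (0:ℝ), s ^ ((1 - α) - 1) * (ρ * Q s).re := by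
      refine setIntegral_mono_set hint ?_ (ae_of_all _ hsub)
      refine (ae_restrict_iff' measurableSet_Ioi).2 (ae_of_all _ fun s hs => ?_)
      have : 0 < s := hs
      have h3 : 0 ≤ ρ.re / (2 * (1 + s ^ 2)) * N := by positivity
      exact mul_nonneg (Real.rpow_nonneg this.le _) (h3.trans (hQ s hs))
    refine le_trans ?_ h1
    rw [hc₀, intervalIntegral.integral_of_le (by norm_num), ← integral_mul_const]
    refine setIntegral_mono_on ?_ (hint.mono_set hsub) measurableSet_Ioc fun s hs => ?_
    · refine Integrable.mul_const ?_ _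
      by_contra hcon
      rw [hc₀, intervalIntegral.integral_of_le (by norm_num), integral_undef hcon] at h10
      exact lt_irrefl _ h10
    · have : 0 < s := hsub hs
      rw [mul_assoc]
      exact mul_le_mul_of_nonneg_left (hQ s this) (Real.rpow_nonneg this.le _)
  rw [hre] at hlow
  rw [div_mul_eq_mul_div, div_le_iff₀ (by positivity)]
  linarith

/-- The fractional form `Z = ∫₀¹ (I^α w) W̄` with `W = ∫₀ˣ w` controls `‖W‖²` and has values in a
sector of half-angle less than `π/2`. Both follow by adding and comparing the rotated estimates
for `ρ = e^{iπ/4}` and `ρ = e^{-iπ/4}`. -/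
lemma frac_sector {α : ℝ} (hα : α ∈ Ioo (0:ℝ) 1) :
    ∃ c > (0:ℝ), ∃ T ≥ (0:ℝ), ∀ w : ℝ → ℂ, Integrable w → ∀ Z : ℂ,
      Z = ∫ x in (0:ℝ)..1, fracInt α w x * (starRingEnd ℂ) (∫ p in (0:ℝ)..x, w p) →
      c * (∫ x in (0:ℝ)..1, ‖∫ p in (0:ℝ)..x, w p‖ ^ 2) ≤ Z.re ∧ |Z.im| ≤ T * Z.re := by
  have hπ := Real.pi_pos
  have key : ∀ ψ : ℝ, |ψ| ≤ Real.pi / 4 → ∃ c > (0:ℝ), ∀ w : ℝ → ℂ, Integrable w → ∀ Z : ℂ,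
      Z = ∫ x in (0:ℝ)..1, fracInt α w x * (starRingEnd ℂ) (∫ p in (0:ℝ)..x, w p) →
      c * (∫ x in (0:ℝ)..1, ‖∫ p in (0:ℝ)..x, w p‖ ^ 2) ≤
        Real.cos (α * ψ) * Z.re - Real.sin (α * ψ) * Z.im := by
    intro ψ hψ
    have hψ' := abs_le.1 hψ
    have hre : (Complex.exp (ψ * Complex.I)).re = Real.cos ψ := Complex.exp_ofReal_mul_I_re ψ
    obtain ⟨c, hc, h⟩ := frac_rot hα (ρ := Complex.exp (ψ * Complex.I))
      (by rw [hre]; exact Real.cos_pos_of_mem_Ioo ⟨by linarith, by linarith⟩)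
      (Complex.norm_exp_ofReal_mul_I ψ)
    refine ⟨c, hc, fun w hw Z hZ => (h w hw).trans (le_of_eq ?_)⟩
    rw [← hZ, Complex.log_exp (by simp; linarith) (by simp; linarith), ← Complex.exp_add]
    have : (ψ * Complex.I + -((1 - α : ℝ) * (ψ * Complex.I))) = ((α * ψ : ℝ) : ℂ) * Complex.I := by
      push_cast; ring
    rw [this, Complex.mul_re, Complex.exp_ofReal_mul_I_re, Complex.exp_ofReal_mul_I_im]
  obtain ⟨c₁, hc₁, h₁⟩ := key (Real.pi / 4) (by rw [abs_of_pos (by positivity)])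
  obtain ⟨c₂, hc₂, h₂⟩ := key (-(Real.pi / 4)) (by rw [abs_neg, abs_of_pos (by positivity)])
  have hβ : 0 < α * (Real.pi / 4) := mul_pos hα.1 (by positivity)
  have hβ' : α * (Real.pi / 4) < Real.pi / 2 := by nlinarith [hα.2]
  have hcos := Real.cos_pos_of_mem_Ioo (x := α * (Real.pi / 4)) ⟨by linarith, hβ'⟩
  have hsin := Real.sin_pos_of_pos_of_lt_pi hβ (by linarith)
  rw [mul_neg, Real.cos_neg, Real.sin_neg] at h₂
  set C := Real.cos (α * (Real.pi / 4))
  set S := Real.sin (α * (Real.pi / 4))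
  have hC1 : C ≤ 1 := Real.cos_le_one _
  refine ⟨min c₁ c₂, lt_min hc₁ hc₂, C / S, by positivity, fun w hw Z hZ => ?_⟩
  have e1 := h₁ w hw Z hZ
  have e2 := h₂ w hw Z hZ
  have hN0 : 0 ≤ ∫ x in (0:ℝ)..1, ‖∫ p in (0:ℝ)..x, w p‖ ^ 2 :=
    intervalIntegral.integral_nonneg zero_le_one fun _ _ => by positivity
  set N := ∫ x in (0:ℝ)..1, ‖∫ p in (0:ℝ)..x, w p‖ ^ 2
  have m1 : min c₁ c₂ * N ≤ c₁ * N := mul_le_mul_of_nonneg_right (min_le_left _ _) hN0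
  have m2 : min c₁ c₂ * N ≤ c₂ * N := mul_le_mul_of_nonneg_right (min_le_right _ _) hN0
  have m0 : 0 ≤ min c₁ c₂ * N := mul_nonneg (lt_min hc₁ hc₂).le hN0
  have hCZ : min c₁ c₂ * N ≤ C * Z.re := by linarith
  have hZ0 : 0 ≤ Z.re := by
    by_contra hneg
    push Not at hneg
    nlinarith [mul_pos hcos (neg_pos.2 hneg)]
  refine ⟨by nlinarith, ?_⟩
  rw [div_mul_eq_mul_div, le_div_iff₀ hsin]
  rcases abs_cases Z.im with ⟨h, _⟩ | ⟨h, _⟩ <;> rw [h] <;> linarith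

/-- Version of `frac_sector` for functions integrable on `(0,1)` only: extend by zero outside `[0,1]`. -/
lemma frac_sector_on {α : ℝ} (hα : α ∈ Ioo (0:ℝ) 1) :
    ∃ c > (0:ℝ), ∃ T ≥ (0:ℝ), ∀ w : ℝ → ℂ, IntegrableOn w (Ioc 0 1) → ∀ Z : ℂ,
      Z = ∫ x in (0:ℝ)..1, fracInt α w x * (starRingEnd ℂ) (∫ p in (0:ℝ)..x, w p) →
      c * (∫ x in (0:ℝ)..1, ‖∫ p in (0:ℝ)..x, w p‖ ^ 2) ≤ Z.re ∧ |Z.im| ≤ T * Z.re := by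
  obtain ⟨c, hc, T, hT, h⟩ := frac_sector hα
  refine ⟨c, hc, T, hT, fun w hw Z hZ => ?_⟩
  set w' := (Icc (0:ℝ) 1).indicator w with hw'
  have hi : Integrable w' := by
    rw [hw', integrable_indicator_iff measurableSet_Icc]
    exact (integrableOn_Icc_iff_integrableOn_Ioc (by simp)).2 hw
  have hww : ∀ x ∈ uIcc (0:ℝ) 1, ∀ p ∈ uIcc (0:ℝ) x, w' p = w p := by
    intro x hx p hp
    rw [uIcc_of_le zero_le_one] at hx
    rw [uIcc_of_le hx.1] at hp
    exact indicator_of_mem (show p ∈ Icc (0:ℝ) 1 from ⟨hp.1, hp.2.trans hx.2⟩) _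
  have hW : ∀ x ∈ uIcc (0:ℝ) 1, ∫ p in (0:ℝ)..x, w' p = ∫ p in (0:ℝ)..x, w p := fun x hx =>
    intervalIntegral.integral_congr (hww x hx)
  have hfr : ∀ x ∈ uIcc (0:ℝ) 1, fracInt α w' x = fracInt α w x := by
    intro x hx
    rw [fracInt, fracInt, if_neg hα.1.ne', if_neg hα.1.ne']
    congr 1
    exact intervalIntegral.integral_congr fun p hp => by simp only [hww x hx p hp]
  have h1 := h w' hi Z (hZ.trans (intervalIntegral.integral_congr fun x hx => by
    simp only [hW x hx, hfr x hx]))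
  rwa [intervalIntegral.integral_congr (g := fun x => ‖∫ p in (0:ℝ)..x, w p‖ ^ 2)
    (fun x hx => by simp only [hW x hx])] at h1

/-! ### Sector geometry -/

/-- The linear functional `(x, y) ↦ y + S x` has a positive lower bound on the unit vectors at angle
`θ ∈ [0, π - ν)`, where `tan ν = 2 S`. -/
lemma sector_trig {S θ : ℝ} (hS : 1 ≤ S) (h0 : 0 ≤ θ) (hθ : θ < Real.pi - Real.arctan (2 * S)) :
    S * Real.cos (Real.arctan (2 * S)) ≤ Real.sin θ + S * Real.cos θ := by
  set ν := Real.arctan (2 * S) with hν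
  have hν0 : 0 < ν := by rw [hν, Real.arctan_pos]; linarith
  have hν1 : ν < Real.pi / 2 := Real.arctan_lt_pi_div_two _
  have hcos : 0 < Real.cos ν := Real.cos_pos_of_mem_Ioo ⟨by linarith, hν1⟩
  have hsin : Real.sin ν = 2 * S * Real.cos ν := by
    have := Real.tan_arctan (2 * S)
    rw [← hν, Real.tan_eq_sin_div_cos] at this
    field_simp at this
    linarith
  rcases le_total θ (Real.pi / 2) with h | h
  · have h1 : 0 ≤ Real.sin θ := Real.sin_nonneg_of_nonneg_of_le_pi h0 (by linarith)
    have h2 : 0 ≤ Real.cos θ := Real.cos_nonneg_of_neg_pi_div_two_le_of_le (by linarith) h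
    have h3 := Real.sin_sq_add_cos_sq θ
    have h4 := Real.sin_le_one θ
    have h5 := Real.cos_le_one θ
    have h6 := Real.sin_le_one ν
    nlinarith
  · have h1 : Real.sin ν ≤ Real.sin (Real.pi - θ) :=
      Real.sin_le_sin_of_le_of_le_pi_div_two (by linarith) (by linarith) (by linarith)
    have h2 : Real.cos (Real.pi - θ) ≤ Real.cos ν :=
      Real.cos_le_cos_of_nonneg_of_le_pi hν0.le (by linarith) (by linarith)
    rw [Real.sin_pi_sub] at h1
    rw [Real.cos_pi_sub] at h2
    nlinarith

/-- If `ζ` lies in the sector `|Im ζ| ≤ S Re ζ` and `λ` avoids a larger opposite sector, then there is no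
cancellation in `λ m + ζ`. -/
lemma sector_lower {S : ℝ} (hS : 1 ≤ S) {lam ζ : ℂ}
    (hl : |lam.arg| < Real.pi - Real.arctan (2 * S)) (hζ : |ζ.im| ≤ S * ζ.re) {m : ℝ}
    (hm : 0 ≤ m) :
    S * Real.cos (Real.arctan (2 * S)) / (1 + S) * ‖lam‖ * m ≤ ‖lam * m + ζ‖ := by
  have h1 := sector_trig hS (abs_nonneg _) hl
  set κ := S * Real.cos (Real.arctan (2 * S))
  have hre : ‖lam‖ * Real.cos |lam.arg| = lam.re := by
    rw [Real.cos_abs, Complex.norm_mul_cos_arg]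
  have him : ‖lam‖ * Real.sin |lam.arg| = |lam.im| := by
    have h2 : 0 ≤ Real.sin |lam.arg| :=
      Real.sin_nonneg_of_nonneg_of_le_pi (abs_nonneg _) (Complex.abs_arg_le_pi _)
    rw [← Complex.norm_mul_sin_arg lam, abs_mul, abs_norm]
    congr 1
    rcases abs_cases lam.arg with ⟨h, _⟩ | ⟨h, _⟩ <;> rw [h] at h2 ⊢
    · rw [abs_of_nonneg h2]
    · rw [Real.sin_neg] at h2 ⊢
      rw [abs_of_nonpos (by linarith)]
  have h3 : κ * ‖lam‖ ≤ |lam.im| + S * lam.re := by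
    rw [← him, ← hre]
    nlinarith [mul_le_mul_of_nonneg_left h1 (norm_nonneg lam)]
  have h4 : κ * ‖lam‖ * m ≤ (|lam.im| + S * lam.re) * m := mul_le_mul_of_nonneg_right h3 hm
  have hrn := (Complex.re_le_norm (lam * m + ζ))
  have hin := abs_le.1 (Complex.abs_im_le_norm (lam * m + ζ))
  have er : (lam * m + ζ).re = lam.re * m + ζ.re := by simp
  have ei : (lam * m + ζ).im = lam.im * m + ζ.im := by simp
  rw [er] at hrn
  rw [ei] at hin
  have hz := abs_le.1 hζ
  have hSr : S * (lam.re * m + ζ.re) ≤ S * ‖lam * m + ζ‖ :=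
    mul_le_mul_of_nonneg_left hrn (by linarith)
  rw [div_mul_eq_mul_div, div_mul_eq_mul_div, div_le_iff₀ (by linarith)]
  rcases abs_cases lam.im with ⟨h, _⟩ | ⟨h, _⟩ <;> rw [h] at h4 <;> nlinarith

/-! ### Square integrable functions and Green's identity -/

lemma cauchy_schwarz_L2 {μ : Measure ℝ} {f g : ℝ → ℂ} (hf : MemLp f 2 μ) (hg : MemLp g 2 μ) :
    ∫ x, ‖f x‖ * ‖g x‖ ∂μ ≤ √(∫ x, ‖f x‖ ^ 2 ∂μ) * √(∫ x, ‖g x‖ ^ 2 ∂μ) := by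
  have h2 : (ENNReal.ofReal 2) = 2 := by simp
  have := integral_mul_norm_le_Lp_mul_Lq (p := 2) (q := 2) (μ := μ) Real.HolderConjugate.two_two
    (by rwa [h2]) (by rwa [h2]) (f := f) (g := g)
  simpa [Real.sqrt_eq_rpow] using this

lemma memLp_of_continuousOn {f : ℝ → ℂ} (hf : ContinuousOn f (Icc 0 1)) :
    MemLp f 2 (volume.restrict (Ioc (0:ℝ) 1)) := by
  obtain ⟨C, hC⟩ := isCompact_Icc.exists_bound_of_continuousOn hf
  refine MemLp.of_bound ((hf.mono Ioc_subset_Icc_self).aestronglyMeasurable measurableSet_Ioc) C ?_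
  exact (ae_restrict_iff' measurableSet_Ioc).2
    (ae_of_all _ fun x hx => hC x (Ioc_subset_Icc_self hx))

lemma memLp_real_mul {μ : Measure ℝ} {b : ℝ → ℝ} {f : ℝ → ℂ} {C : ℝ} (hf : MemLp f 2 μ)
    (hb : AEStronglyMeasurable b μ) (hC : ∀ᵐ x ∂μ, |b x| ≤ C) :
    MemLp (fun x => ((b x : ℝ) : ℂ) * f x) 2 μ := by
  refine hf.of_le_mul (c := C)
    ((Complex.continuous_ofReal.comp_aestronglyMeasurable hb).mul hf.1) ?_
  filter_upwards [hC] with x hx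
  rw [norm_mul, Complex.norm_real, Real.norm_eq_abs]
  exact mul_le_mul_of_nonneg_right hx (norm_nonneg _)

lemma memLp_conj {μ : Measure ℝ} {f : ℝ → ℂ} (hf : MemLp f 2 μ) :
    MemLp (fun x => (starRingEnd ℂ) (f x)) 2 μ :=
  hf.of_le (Complex.continuous_conj.comp_aestronglyMeasurable hf.1)
    (ae_of_all _ fun x => by simp)

/-- Green's identity `∫ w ū = - Z̄`: since `u(1) = 0`, one has `u(x) = -∫ₓ¹ I^α w`, and exchanging the
order of integration replaces `w` by its primitive. No boundary terms remain. -/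
lemma graph_green {α : ℝ} {u w : ℝ → ℂ} (h : InGraphA α u w) (hw : IntegrableOn w (Ioc 0 1)) :
    ∫ x in (0:ℝ)..1, w x * (starRingEnd ℂ) (u x) =
      -(starRingEnd ℂ) (∫ x in (0:ℝ)..1,
        fracInt α w x * (starRingEnd ℂ) (∫ p in (0:ℝ)..x, w p)) := by
  obtain ⟨h1, -, hg, hu⟩ := h
  have hux : ∀ x ∈ uIcc (0:ℝ) 1, u x = -∫ t in x..1, fracInt α w t := by
    intro x hx
    rw [uIcc_of_le zero_le_one] at hx
    have e1 := hu 1 (by simp)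
    have e2 := hu x hx
    have e3 := intervalIntegral.integral_add_adjacent_intervals (a := 0) (b := x) (c := 1)
      (μ := volume) (f := fracInt α w)
      (hg.mono_set (by rw [uIcc_of_le hx.1, uIcc_of_le zero_le_one]; exact Icc_subset_Icc_right hx.2))
      (hg.mono_set (by rw [uIcc_of_le hx.2, uIcc_of_le zero_le_one]; exact Icc_subset_Icc_left hx.1))
    rw [e2]
    rw [h1] at e1
    linear_combination -e1 + e3
  have hconj : ∀ (f : ℝ → ℂ) (a b : ℝ), (starRingEnd ℂ) (∫ t in a..b, f t) =
      ∫ t in a..b, (starRingEnd ℂ) (f t) := by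
    intro f a b
    rw [intervalIntegral, intervalIntegral, map_sub, ← integral_conj, ← integral_conj]
  have hgc : IntegrableOn (fun t => (starRingEnd ℂ) (fracInt α w t)) (Ioc 0 1) := by
    refine Integrable.mono hg.1 (Complex.continuous_conj.comp_aestronglyMeasurable hg.1.1)
      (ae_of_all _ fun x => by simp)
  have hsw := integral_swap_tri zero_le_one hw hgc
  rw [hconj, ← intervalIntegral.integral_neg]
  have e4 : ∀ x ∈ uIcc (0:ℝ) 1, w x * (starRingEnd ℂ) (u x) =
      -(w x * ∫ t in x..1, (starRingEnd ℂ) (fracInt α w t)) := by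
    intro x hx
    rw [hux x hx, map_neg, hconj, mul_neg]
  rw [intervalIntegral.integral_congr e4, intervalIntegral.integral_neg, hsw,
    ← intervalIntegral.integral_neg]
  congr 1; ext x
  simp [mul_comm]

/-! ### The resolvent estimate -/

/-- shifted sectorial resolvent estimate for the operator
u -> (d/dx)(p D^a u) = p A u + q D^a u, where p >= delta is Lipschitz with a.e.
derivative q, |q| <= K a.e. -/
theorem statement_10 (α δ K : ℝ) (hα : α ∈ Set.Ioo (0:ℝ) 1) (hδ : 0 < δ) (hK : 0 ≤ K)
    (p q : ℝ → ℝ)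
    (hq_meas : MeasureTheory.AEStronglyMeasurable q
      (MeasureTheory.volume.restrict (Set.Ioc (0:ℝ) 1)))
    (hq_bound : ∀ᵐ x ∂(MeasureTheory.volume.restrict (Set.Ioc (0:ℝ) 1)), |q x| ≤ K)
    (hp : ∀ x ∈ Set.Icc (0:ℝ) 1, p x = p 0 + ∫ s in (0:ℝ)..x, q s)
    (hpδ : ∀ x ∈ Set.Icc (0:ℝ) 1, δ ≤ p x) :
    ∃ ω ≥ (0:ℝ), ∃ ν ∈ Set.Ioo (0:ℝ) (Real.pi / 2), ∃ c > (0:ℝ),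
      ∀ lam : ℂ, lam ≠ 0 → |lam.arg| < Real.pi - ν →
        ∀ u w : ℝ → ℂ, InGraphA α u w →
          c * ‖lam‖ * Real.sqrt (L2normSq u) ≤
            Real.sqrt (L2normSq (fun x =>
              (lam + ((ω : ℝ) : ℂ)) * u x - ((p x : ℝ) : ℂ) * w x -
                ((q x : ℝ) : ℂ) * ∫ s in (0:ℝ)..x, w s)) := by
  obtain ⟨c, hc, T, hT, hsec⟩ := frac_sector_on hα
  set μ := volume.restrict (Ioc (0:ℝ) 1) with hμ
  have hqi : IntegrableOn q (Icc 0 1) := by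
    rw [integrableOn_Icc_iff_integrableOn_Ioc (by simp)]
    exact Integrable.of_bound hq_meas K hq_bound
  have hpc : ContinuousOn p (Icc 0 1) := by
    have h1 := intervalIntegral.continuousOn_primitive_interval (μ := volume) (a := 0) (b := 1)
      (by rwa [uIcc_of_le zero_le_one])
    rw [uIcc_of_le zero_le_one] at h1
    exact (continuousOn_const.add h1).congr hp
  obtain ⟨P, hP⟩ := isCompact_Icc.exists_bound_of_continuousOn hpc
  have hpP : ∀ x ∈ Icc (0:ℝ) 1, p x ≤ P := fun x hx => (le_abs_self _).trans (hP x hx)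
  have hP0 : 0 < P := hδ.trans_le ((hpδ 0 (by simp)).trans (hpP 0 (by simp)))
  have hpinv : ∀ x ∈ Icc (0:ℝ) 1, |(p x)⁻¹| ≤ δ⁻¹ := fun x hx => by
    have := hpδ x hx
    rw [abs_of_pos (inv_pos.2 (by linarith))]
    exact inv_anti₀ hδ this
  have hpm : AEStronglyMeasurable p μ :=
    (hpc.mono Ioc_subset_Icc_self).aestronglyMeasurable measurableSet_Ioc
  have hpim : AEStronglyMeasurable (fun x => (p x)⁻¹) μ := by
    refine ContinuousOn.aestronglyMeasurable ?_ measurableSet_Ioc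
    exact (hpc.mono Ioc_subset_Icc_self).inv₀ fun x hx =>
      (hδ.trans_le (hpδ x (Ioc_subset_Icc_self hx))).ne'
  have hae : ∀ᵐ x ∂μ, x ∈ Ioc (0:ℝ) 1 := ae_restrict_mem measurableSet_Ioc
  -- `C' m` is what the `q`-term costs after absorption, and the shift is twice that
  set C' := K ^ 2 * P / (2 * c * δ ^ 2) with hC'
  have hC'0 : 0 ≤ C' := by positivity
  set S := 2 * T + 1 with hS
  have hS1 : 1 ≤ S := by linarith
  set κ := S * Real.cos (Real.arctan (2 * S)) / (1 + S) with hκ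
  have hcos : 0 < Real.cos (Real.arctan (2 * S)) := Real.cos_arctan_pos _
  have hκ0 : 0 < κ := by positivity
  refine ⟨2 * C', by positivity, Real.arctan (2 * S),
    ⟨by rw [Real.arctan_pos]; linarith, Real.arctan_lt_pi_div_two _⟩, κ * δ / P,
    by positivity, ?_⟩
  intro lam _ hlam u w hgr
  have hL2 : ∀ f : ℝ → ℂ, L2normSq f = ∫ x, ‖f x‖ ^ 2 ∂μ := fun f =>
    intervalIntegral.integral_of_le zero_le_one
  have hwL : MemLp w 2 μ := (memLp_two_iff_integrable_sq_norm hgr.2.1.1).2 hgr.2.1.2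
  have hwi : IntegrableOn w (Ioc 0 1) := hwL.integrable (by norm_num)
  have hprim : ∀ f : ℝ → ℂ, IntegrableOn f (Ioc 0 1) →
      ContinuousOn (fun x => ∫ t in (0:ℝ)..x, f t) (Icc 0 1) := fun f hf => by
    have h1 := intervalIntegral.continuousOn_primitive_interval (μ := volume) (a := 0) (b := 1) (f := f)
      (by rwa [uIcc_of_le zero_le_one, integrableOn_Icc_iff_integrableOn_Ioc (by simp)])
    rwa [uIcc_of_le zero_le_one] at h1
  have huc : ContinuousOn u (Icc 0 1) :=
    (continuousOn_const.add (hprim _ hgr.2.2.1.1)).congr hgr.2.2.2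
  have huL : MemLp u 2 μ := memLp_of_continuousOn huc
  set W : ℝ → ℂ := fun x => ∫ s in (0:ℝ)..x, w s with hW
  have hWL : MemLp W 2 μ := memLp_of_continuousOn (hprim w hwi)
  set f : ℝ → ℂ := fun x => (lam + ((2 * C' : ℝ) : ℂ)) * u x - ((p x : ℝ) : ℂ) * w x -
    ((q x : ℝ) : ℂ) * W x with hf
  have hqW : MemLp (fun x => ((q x : ℝ) : ℂ) * W x) 2 μ := memLp_real_mul hWL hq_meas hq_bound
  have hfL : MemLp f 2 μ := by
    refine MemLp.sub (MemLp.sub (huL.const_mul _) (memLp_real_mul (C := P) hwL hpm ?_)) hqW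
    filter_upwards [hae] with x hx using hP x (Ioc_subset_Icc_self hx)
  -- the test function `ū / p`
  set h : ℝ → ℂ := fun x => (((p x)⁻¹ : ℝ) : ℂ) * (starRingEnd ℂ) (u x) with hh
  have hhL : MemLp h 2 μ := by
    refine memLp_real_mul (C := δ⁻¹) (memLp_conj huL) hpim ?_
    filter_upwards [hae] with x hx using hpinv x (Ioc_subset_Icc_self hx)
  have hhu : ∀ᵐ x ∂μ, ‖h x‖ ≤ δ⁻¹ * ‖u x‖ := by
    filter_upwards [hae] with x hx
    rw [hh, norm_mul, Complex.norm_real, Complex.norm_conj]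
    exact mul_le_mul_of_nonneg_right (hpinv x (Ioc_subset_Icc_self hx)) (norm_nonneg _)
  rw [hL2, hL2]
  set N := ∫ x, ‖u x‖ ^ 2 ∂μ with hN
  have hN0 : 0 ≤ N := integral_nonneg fun _ => by positivity
  set n := ∫ x, ‖W x‖ ^ 2 ∂μ with hn
  have hn0 : 0 ≤ n := integral_nonneg fun _ => by positivity
  set Z := ∫ x in (0:ℝ)..1, fracInt α w x * (starRingEnd ℂ) (W x) with hZ
  obtain ⟨hZ1, hZ2⟩ := hsec w hwi Z rfl
  rw [intervalIntegral.integral_of_le zero_le_one] at hZ1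
  change c * n ≤ Z.re at hZ1
  have hgreen : ∫ x, w x * (starRingEnd ℂ) (u x) ∂μ = -(starRingEnd ℂ) Z := by
    rw [← graph_green hgr hwi, intervalIntegral.integral_of_le zero_le_one]
  set m := ∫ x, (p x)⁻¹ * ‖u x‖ ^ 2 ∂μ with hm
  have hu2 : Integrable (fun x => ‖u x‖ ^ 2) μ := (memLp_two_iff_integrable_sq_norm huL.1).1 huL
  have hpu2 : Integrable (fun x => (p x)⁻¹ * ‖u x‖ ^ 2) μ := by
    refine hu2.bdd_mul (c := δ⁻¹) hpim ?_
    filter_upwards [hae] with x hx using hpinv x (Ioc_subset_Icc_self hx)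
  have hmN : N / P ≤ m := by
    rw [div_eq_inv_mul, hN, ← integral_const_mul]
    refine integral_mono_ae (hu2.const_mul _) hpu2 ?_
    filter_upwards [hae] with x hx
    have hx' := Ioc_subset_Icc_self hx
    exact mul_le_mul_of_nonneg_right
      (inv_anti₀ (hδ.trans_le (hpδ x hx')) (hpP x hx')) (by positivity)
  have hm0 : 0 ≤ m := le_trans (by positivity) hmN
  set E := ∫ x, ((q x : ℝ) : ℂ) * W x * h x ∂μ with hE
  have hEb : ‖E‖ ≤ K / δ * (√n * √N) := by
    calc ‖E‖ ≤ ∫ x, K / δ * (‖W x‖ * ‖u x‖) ∂μ := by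
          refine norm_integral_le_of_norm_le ((MemLp.integrable_mul hWL.norm huL.norm).const_mul _) ?_
          filter_upwards [hhu, hq_bound] with x h1 h2
          rw [norm_mul, norm_mul, Complex.norm_real, Real.norm_eq_abs]
          calc |q x| * ‖W x‖ * ‖h x‖ ≤ K * ‖W x‖ * (δ⁻¹ * ‖u x‖) := by gcongr
            _ = _ := by ring
      _ ≤ _ := by
          rw [integral_const_mul]
          exact mul_le_mul_of_nonneg_left (cauchy_schwarz_L2 hWL huL) (by positivity)
  have hGb : ‖∫ x, f x * h x ∂μ‖ ≤ δ⁻¹ * (√(∫ x, ‖f x‖ ^ 2 ∂μ) * √N) := by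
    calc _ ≤ ∫ x, δ⁻¹ * (‖f x‖ * ‖u x‖) ∂μ := by
          refine norm_integral_le_of_norm_le ((MemLp.integrable_mul hfL.norm huL.norm).const_mul _) ?_
          filter_upwards [hhu] with x h1
          rw [norm_mul]
          calc ‖f x‖ * ‖h x‖ ≤ ‖f x‖ * (δ⁻¹ * ‖u x‖) := by gcongr
            _ = _ := by ring
      _ ≤ _ := by
          rw [integral_const_mul]
          exact mul_le_mul_of_nonneg_left (cauchy_schwarz_L2 hfL huL) (by positivity)
  have hG : ∫ x, f x * h x ∂μ =
      lam * m + (((2 * C' * m : ℝ) : ℂ) + (starRingEnd ℂ) Z - E) := by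
    have h1 : ∀ᵐ x ∂μ, f x * h x = (lam + ((2 * C' : ℝ) : ℂ)) *
        (((p x)⁻¹ * ‖u x‖ ^ 2 : ℝ) : ℂ) - w x * (starRingEnd ℂ) (u x) -
          ((q x : ℝ) : ℂ) * W x * h x := by
      filter_upwards [hae] with x hx
      have hp0 : ((p x : ℝ) : ℂ) ≠ 0 := by
        exact_mod_cast (hδ.trans_le (hpδ x (Ioc_subset_Icc_self hx))).ne'
      have hn2 : u x * (starRingEnd ℂ) (u x) = ((‖u x‖ ^ 2 : ℝ) : ℂ) := by
        rw [Complex.mul_conj, Complex.sq_norm]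
      rw [Complex.ofReal_mul ((p x)⁻¹), ← hn2]
      simp only [hf, hh, Complex.ofReal_inv]
      field_simp
    rw [integral_congr_ae h1, integral_sub, integral_sub, integral_const_mul, integral_complex_ofReal,
      hgreen, ← hE, ← hm]
    · push_cast; ring
    · exact hpu2.ofReal.const_mul _
    · exact MemLp.integrable_mul hwL (memLp_conj huL)
    · exact (hpu2.ofReal.const_mul _).sub (MemLp.integrable_mul hwL (memLp_conj huL))
    · exact MemLp.integrable_mul hqW hhL
  -- absorption of the lower-order term by Young's inequality
  have hEabs : ‖E‖ ≤ Z.re / 2 + C' * m := by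
    have h1 : K / δ * (√n * √N) ≤ c / 2 * n + K ^ 2 / (2 * c * δ ^ 2) * N := by
      have e1 := Real.sq_sqrt hn0
      have e2 := Real.sq_sqrt hN0
      rw [← sub_nonneg]
      have : c / 2 * n + K ^ 2 / (2 * c * δ ^ 2) * N - K / δ * (√n * √N) =
          (c * √n - K / δ * √N) ^ 2 / (2 * c) := by
        field_simp
        rw [sub_sq, mul_pow, mul_pow, mul_pow, e1, e2]
        ring
      rw [this]; positivity
    have h2 : K ^ 2 / (2 * c * δ ^ 2) * N ≤ C' * m := by
      have : K ^ 2 / (2 * c * δ ^ 2) * N = C' * (N / P) := by rw [hC']; field_simp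
      rw [this]
      exact mul_le_mul_of_nonneg_left hmN hC'0
    linarith
  set ζ := ((2 * C' * m : ℝ) : ℂ) + (starRingEnd ℂ) Z - E with hζ
  have hζre : ζ.re = 2 * C' * m + Z.re - E.re := by
    simp only [hζ, Complex.sub_re, Complex.add_re, Complex.ofReal_re, Complex.conj_re]
  have hζim : ζ.im = -Z.im - E.im := by
    simp only [hζ, Complex.sub_im, Complex.add_im, Complex.ofReal_im, Complex.conj_im, zero_add]
  have hζsec : |ζ.im| ≤ S * ζ.re := by
    have e1 := abs_le.1 ((Complex.abs_re_le_norm E).trans hEabs)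
    have e2 := abs_le.1 ((Complex.abs_im_le_norm E).trans hEabs)
    have e3 := abs_le.1 hZ2
    have e4 : 0 ≤ T * (C' * m) := by positivity
    have e5 : T * E.re ≤ T * (Z.re / 2 + C' * m) := mul_le_mul_of_nonneg_left e1.2 hT
    rw [hζre, hζim, hS, abs_le]
    constructor <;> nlinarith
  have hlow := sector_lower hS1 hlam hζsec hm0
  rw [← hG, ← hκ] at hlow
  have hmain : κ * ‖lam‖ * (N / P) ≤ δ⁻¹ * (√(∫ x, ‖f x‖ ^ 2 ∂μ) * √N) :=
    (mul_le_mul_of_nonneg_left hmN (by positivity)).trans (hlow.trans hGb)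
  rcases hN0.eq_or_lt with h0 | hpos
  · rw [← h0]; simp
  · have hsq := Real.sq_sqrt hN0
    have hsp := Real.sqrt_pos.2 hpos
    refine le_of_mul_le_mul_right ?_ hsp
    calc κ * δ / P * ‖lam‖ * √N * √N = δ * (κ * ‖lam‖ * (N / P)) := by
          rw [← hsq]; simp only [Real.sqrt_sq hsp.le]; ring
      _ ≤ δ * (δ⁻¹ * (√(∫ x, ‖f x‖ ^ 2 ∂μ) * √N)) := mul_le_mul_of_nonneg_left hmain hδ.le
      _ = √(∫ x, ‖f x‖ ^ 2 ∂μ) * √N := by field_simp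
end
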